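/- Let n ≥ 1, m ≥ 1 and s ∈ (0,1), with s ≤ 1/2 if n = 1. Define δ* := inf{ E_{s,n/s}(u) : u : 𝕊ⁿ → 𝕊^m continuous and not homotopic to a constant map } ∈ [0,∞] (with inf ∅ = ∞). There exists ε = ε(n,m,s) > 0 such that: (a) δ* ≥ ε; and (b) for every continuous map g : 𝕊ⁿ → 𝕊^m which is not homotopic to a constant and satisfies inf{ E_{s,n/s}(v) : v : 𝕊ⁿ → 𝕊^m continuous, homotopic to g } ≤ δ* + ε, there exists a continuous map u : 𝕊ⁿ → 𝕊^m homotopic to g with E_{s,n/s}(u) ≤ E_{s,n/s}(v) for every continuous v : 𝕊ⁿ → 𝕊^m homotopic to g. -/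

import Mathlib

open MeasureTheory
open scoped ENNReal

noncomputable section

/-- The unit sphere `𝕊ᵏ ⊆ ℝ^{k+1}`. -/
abbrev Sph (k : ℕ) : Type _ := ↥(Metric.sphere (0 : EuclideanSpace ℝ (Fin (k + 1))) 1)

/-- `f` and `g` are homotopic maps. -/
def Homotopic {X Y : Type*} [TopologicalSpace X] [TopologicalSpace Y] (f g : X → Y) : Prop :=
  ∃ H : unitInterval × X → Y, Continuous H ∧ (∀ x, H (0, x) = f x) ∧ (∀ x, H (1, x) = g x)

/-- `u` is homotopic to a constant map. -/
def NullHomotopic {X Y : Type*} [TopologicalSpace X] [TopologicalSpace Y] (u : X → Y) : Prop :=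
  ∃ c : Y, Homotopic u (fun _ => c)

/-- The energy `E_{s,n/s}(u) = ∫∫ |u(x)-u(y)|^{n/s}/|x-y|^{2n} dμ dμ` of a map `𝕊ⁿ → 𝕊^m`. -/
def sphEnergy (n m : ℕ) (s : ℝ) (u : Sph n → Sph m) : ℝ≥0∞ :=
  ∫⁻ x, ∫⁻ y,
    ENNReal.ofReal
      (‖(u x : EuclideanSpace ℝ (Fin (m + 1))) - (u y : EuclideanSpace ℝ (Fin (m + 1)))‖
          ^ ((n : ℝ) / s) / dist x y ^ (2 * (n : ℝ)))
    ∂(μH[(n : ℝ)] : Measure (Sph n)) ∂(μH[(n : ℝ)] : Measure (Sph n))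

/-- The least energy `δ*` of homotopically nontrivial continuous maps `𝕊ⁿ → 𝕊^m`
(equal to `∞` if there are none). -/
def minNontrivialEnergy (n m : ℕ) (s : ℝ) : ℝ≥0∞ :=
  sInf {e : ℝ≥0∞ | ∃ u : Sph n → Sph m, Continuous u ∧ ¬ NullHomotopic u ∧ e = sphEnergy n m s u}

/-!
With `p = n / s > n`, the energy is invariant under the conformal maps of the sphere, and a map
whose energy in all balls of a fixed radius is small has averages at smaller radii of norm close to
one, hence is homotopic to the projection of its averages onto the sphere. In particular maps of
small energy are null homotopic, which bounds `δ*` from below.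

For the minimizer, take maps `U k` in the homotopy class whose energies tend to the infimum, at most
slightly above `δ*`. After composing with Möbius transformations no ball of radius `1 / 64` carries
energy more than `2 / 3 * δ*`. On such a ball, flattening `U k` to a constant in an annulus splits
it into an outer map and an inner bubble; the bubble can be flattened so that its energy is less
than `δ*`, so it is null homotopic and the outer map is homotopic to `U k`. Comparing energies, the
near minimality of `U k` bounds its energy in a ball by a fraction of the energy in the larger
concentric ball, up to an error tending to zero (hole filling). Hence the energies in balls decay
geometrically with the radius, so the averages at radius `r → 0` converge uniformly along a diagonal
sequence, by compactness at each fixed radius. The limit has norm one, is homotopic to some `U k`,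
and is the almost everywhere limit of a subsequence of the `U k`, so by Fatou's lemma it is a
minimizer.
-/

open Set Filter Topology ProbabilityTheory

section ConformalChangeOfVariables

/-- An open embedding `φ` with `|φ x - φ y|² = λ(x) λ(y) |x - y|²`. The factor `λ` is the pointwise
dilation, and the identity is the global form of conformality shared by Möbius transformations and
stereographic projections. -/
structure ConformalEmbedding (X Y : Type*) [MetricSpace X] [MetricSpace Y] where
  toFun : X → Y
  factor : X → ℝ
  isOpenEmbedding : IsOpenEmbedding toFun
  continuous_factor : Continuous factor
  factor_pos : ∀ x, 0 < factor x
  dist_sq : ∀ x y, dist (toFun x) (toFun y) ^ 2 = factor x * factor y * dist x y ^ 2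

instance (X Y : Type*) [MetricSpace X] [MetricSpace Y] :
    CoeFun (ConformalEmbedding X Y) fun _ => X → Y :=
  ⟨ConformalEmbedding.toFun⟩

lemma measure_le_of_forall_le_of_mem_Ico_zpow {X : Type*} [MeasurableSpace X] {μ ν : Measure X}
    {f : X → ℝ} (hf : Measurable f) (hpos : ∀ x, 0 < f x) {q : ℝ} (hq : 1 < q)
    (h : ∀ (k : ℤ) (A : Set X), MeasurableSet A → (∀ x ∈ A, f x ∈ Ico (q ^ k) (q ^ (k + 1))) →
      μ A ≤ ν A) : μ ≤ ν := by
  refine Measure.le_iff.2 fun A hA => ?_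
  set B : ℤ → Set X := fun k => A ∩ f ⁻¹' Ico (q ^ k) (q ^ (k + 1)) with hB
  have hBm (k : ℤ) : MeasurableSet (B k) := hA.inter (hf measurableSet_Ico)
  have hcover : A = ⋃ k, B k := by
    rw [hB, ← inter_iUnion, eq_comm, inter_eq_left]
    exact fun x _ => mem_iUnion.2 (exists_mem_Ico_zpow (hpos x) hq)
  have hdisj : Pairwise (Function.onFun Disjoint B) := by
    refine fun i j hij => Set.disjoint_left.2 ?_
    rintro x ⟨-, hi, hi'⟩ ⟨-, hj, hj'⟩
    have := (zpow_lt_zpow_iff_right₀ hq).1 (hi.trans_lt hj')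
    have := (zpow_lt_zpow_iff_right₀ hq).1 (hj.trans_lt hi')
    omega
  rw [hcover, measure_iUnion hdisj hBm, measure_iUnion hdisj hBm]
  exact ENNReal.tsum_le_tsum fun k => h k (B k) (hBm k) fun x hx => hx.2

namespace ConformalEmbedding

variable {X Y : Type*} [MetricSpace X] [MetricSpace Y] (φ : ConformalEmbedding X Y)

lemma dist_le {b : ℝ} {x y : X} (hx : φ.factor x ≤ b) (hy : φ.factor y ≤ b) :
    dist (φ x) (φ y) ≤ b * dist x y := by
  have hb : 0 < b := (φ.factor_pos x).trans_le hx
  refine le_of_sq_le_sq ?_ (by positivity)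
  rw [φ.dist_sq, mul_pow, sq b]
  gcongr
  exact (φ.factor_pos y).le

lemma le_dist {a : ℝ} (ha : 0 < a) {x y : X} (hx : a ≤ φ.factor x) (hy : a ≤ φ.factor y) :
    a * dist x y ≤ dist (φ x) (φ y) := by
  refine le_of_sq_le_sq ?_ dist_nonneg
  rw [φ.dist_sq, mul_pow, sq a]
  gcongr
  exact (φ.factor_pos x).le

variable [MeasurableSpace X] [BorelSpace X]

lemma measurable_factor_rpow (d : ℝ) : Measurable fun x => ENNReal.ofReal (φ.factor x ^ d) :=
  (φ.continuous_factor.measurable.pow_const d).ennreal_ofReal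

variable [MeasurableSpace Y] [BorelSpace Y]

lemma measurableEmbedding : MeasurableEmbedding φ := φ.isOpenEmbedding.measurableEmbedding

lemma hausdorffMeasure_image_le {d b : ℝ} (hd : 0 ≤ d) (hb : 0 ≤ b) {A : Set X}
    (hA : ∀ x ∈ A, φ.factor x ≤ b) : μH[d] (φ '' A) ≤ ENNReal.ofReal (b ^ d) * μH[d] A := by
  have hlip : LipschitzOnWith b.toNNReal φ A := LipschitzOnWith.of_dist_le_mul fun x hx y hy => by
    simpa only [Real.coe_toNNReal b hb] using φ.dist_le (hA x hx) (hA y hy)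
  rw [← ENNReal.ofReal_rpow_of_nonneg hb hd]
  exact hlip.hausdorffMeasure_image_le hd

lemma le_hausdorffMeasure_image {d a : ℝ} (hd : 0 ≤ d) (ha : 0 < a) {A : Set X}
    (hA : ∀ x ∈ A, a ≤ φ.factor x) : ENNReal.ofReal (a ^ d) * μH[d] A ≤ μH[d] (φ '' A) := by
  have hanti : AntilipschitzWith a⁻¹.toNNReal (A.domRestrict φ) :=
    AntilipschitzWith.of_le_mul_dist fun x y => by
      rw [Real.coe_toNNReal _ (by positivity), ← div_eq_inv_mul, le_div_iff₀' ha]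
      exact φ.le_dist ha (hA x x.2) (hA y y.2)
  have hA' : μH[d] A ≤ ENNReal.ofReal (a⁻¹ ^ d) * μH[d] (φ '' A) := by
    have h := hanti.le_hausdorffMeasure_image hd univ
    rwa [← isometry_subtype_coe.hausdorffMeasure_image (Or.inl hd), image_univ,
      Subtype.range_coe, image_univ, range_domRestrict, ← ENNReal.ofReal,
      ENNReal.ofReal_rpow_of_nonneg (by positivity) hd] at h
  calc ENNReal.ofReal (a ^ d) * μH[d] A
      ≤ ENNReal.ofReal (a ^ d) * (ENNReal.ofReal (a⁻¹ ^ d) * μH[d] (φ '' A)) := by gcongr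
    _ = μH[d] (φ '' A) := by
        rw [← mul_assoc, ← ENNReal.ofReal_mul (by positivity),
          ← Real.mul_rpow ha.le (by positivity), mul_inv_cancel₀ ha.ne', Real.one_rpow,
          ENNReal.ofReal_one, one_mul]

lemma hausdorffMeasure_image_le_mul_lintegral {d a q : ℝ} (hd : 0 ≤ d) (ha : 0 < a) (hq : 0 ≤ q)
    {A : Set X} (hA : MeasurableSet A) (h : ∀ x ∈ A, φ.factor x ∈ Ico a (q * a)) :
    μH[d] (φ '' A) ≤
      ENNReal.ofReal (q ^ d) * ∫⁻ x in A, ENNReal.ofReal (φ.factor x ^ d) ∂μH[d] :=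
  calc μH[d] (φ '' A) ≤ ENNReal.ofReal ((q * a) ^ d) * μH[d] A :=
        φ.hausdorffMeasure_image_le hd (by positivity) fun x hx => (h x hx).2.le
    _ = ENNReal.ofReal (q ^ d) * ∫⁻ _ in A, ENNReal.ofReal (a ^ d) ∂μH[d] := by
        rw [setLIntegral_const, ← mul_assoc, ← ENNReal.ofReal_mul (by positivity),
          Real.mul_rpow hq ha.le]
    _ ≤ _ := mul_le_mul_right (setLIntegral_mono' hA fun x hx =>
        ENNReal.ofReal_le_ofReal (Real.rpow_le_rpow ha.le (h x hx).1 hd)) _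

lemma lintegral_le_mul_hausdorffMeasure_image {d a q : ℝ} (hd : 0 ≤ d) (ha : 0 < a) (hq : 0 ≤ q)
    {A : Set X} (hA : MeasurableSet A) (h : ∀ x ∈ A, φ.factor x ∈ Ico a (q * a)) :
    ∫⁻ x in A, ENNReal.ofReal (φ.factor x ^ d) ∂μH[d] ≤
      ENNReal.ofReal (q ^ d) * μH[d] (φ '' A) :=
  calc ∫⁻ x in A, ENNReal.ofReal (φ.factor x ^ d) ∂μH[d]
      ≤ ∫⁻ _ in A, ENNReal.ofReal ((q * a) ^ d) ∂μH[d] := setLIntegral_mono' hA fun x hx =>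
        ENNReal.ofReal_le_ofReal (Real.rpow_le_rpow (φ.factor_pos x).le (h x hx).2.le hd)
    _ = ENNReal.ofReal (q ^ d) * (ENNReal.ofReal (a ^ d) * μH[d] A) := by
        rw [setLIntegral_const, ← mul_assoc, ← ENNReal.ofReal_mul (by positivity),
          Real.mul_rpow hq ha.le]
    _ ≤ _ := mul_le_mul_right (φ.le_hausdorffMeasure_image hd ha fun x hx => (h x hx).1) _

theorem comap_hausdorffMeasure {d : ℝ} (hd : 0 ≤ d) :
    (μH[d] : Measure Y).comap φ =
      (μH[d] : Measure X).withDensity fun x => ENNReal.ofReal (φ.factor x ^ d) := by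
  have hlim (m : ℝ≥0∞) : Tendsto (fun q : ℝ => ENNReal.ofReal (q ^ d) * m) (𝓝[>] 1) (𝓝 m) := by
    have hq : Tendsto (fun q : ℝ => ENNReal.ofReal (q ^ d)) (𝓝 1) (𝓝 1) := by
      simpa using ENNReal.tendsto_ofReal ((continuous_id.tendsto (1 : ℝ)).rpow_const (Or.inr hd))
    simpa using ENNReal.Tendsto.mul_const (hq.mono_left nhdsWithin_le_nhds)
      (Or.inl one_ne_zero) (b := m)
  have hzpow {q : ℝ} (hq : 1 < q) (k : ℤ) : q ^ (k + 1) = q * q ^ k := by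
    rw [zpow_add_one₀ (by positivity), mul_comm]
  refine Measure.ext fun A _ => le_antisymm ?_ ?_
  · refine ge_of_tendsto (hlim _) (eventually_mem_nhdsWithin.mono fun q (hq : 1 < q) => ?_)
    refine measure_le_of_forall_le_of_mem_Ico_zpow (ν := ENNReal.ofReal (q ^ d) • _)
      φ.continuous_factor.measurable φ.factor_pos hq (fun k B hB hBk => ?_) A
    rw [φ.measurableEmbedding.comap_apply, Measure.smul_apply, withDensity_apply _ hB, smul_eq_mul]
    exact φ.hausdorffMeasure_image_le_mul_lintegral (a := q ^ k) hd (by positivity)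
      (by positivity) hB (by simpa only [hzpow hq] using hBk)
  · refine ge_of_tendsto (hlim _) (eventually_mem_nhdsWithin.mono fun q (hq : 1 < q) => ?_)
    refine measure_le_of_forall_le_of_mem_Ico_zpow (ν := ENNReal.ofReal (q ^ d) • _)
      φ.continuous_factor.measurable φ.factor_pos hq (fun k B hB hBk => ?_) A
    rw [Measure.smul_apply, φ.measurableEmbedding.comap_apply, withDensity_apply _ hB, smul_eq_mul]
    exact φ.lintegral_le_mul_hausdorffMeasure_image (a := q ^ k) hd (by positivity)
      (by positivity) hB (by simpa only [hzpow hq] using hBk)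

theorem setLIntegral_image {d : ℝ} (hd : 0 ≤ d) {A : Set X} (hA : MeasurableSet A) {g : Y → ℝ≥0∞}
    (hg : Measurable g) : ∫⁻ y in φ '' A, g y ∂μH[d] =
      ∫⁻ x in A, ENNReal.ofReal (φ.factor x ^ d) * g (φ x) ∂μH[d] := by
  have hφ := φ.measurableEmbedding
  have hrestrict : (μH[d] : Measure Y).restrict (φ '' A) =
      ((μH[d].restrict A).withDensity fun x => ENNReal.ofReal (φ.factor x ^ d)).map φ := by
    rw [← restrict_withDensity hA, ← φ.comap_hausdorffMeasure hd,
      ← preimage_image_eq A hφ.injective, ← hφ.restrict_map, hφ.map_comap,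
      preimage_image_eq A hφ.injective,
      Measure.restrict_restrict_of_subset (image_subset_range φ A)]
  rw [hrestrict, hφ.lintegral_map]
  exact lintegral_withDensity_eq_lintegral_mul _ (φ.measurable_factor_rpow d)
    (hg.comp hφ.measurable)

end ConformalEmbedding

end ConformalChangeOfVariables

section Energy

variable {X Y M : Type*} [MetricSpace X] [MetricSpace Y] [PseudoMetricSpace M]

/-- The integrand `|v x - v y|^p / |x - y|^{2d}` of the fractional energy with respect to the
`d`-dimensional Hausdorff measure. -/
def energyDensity (d p : ℝ) (v : X → M) (x y : X) : ℝ≥0∞ :=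
  ENNReal.ofReal (dist (v x) (v y) ^ p / dist x y ^ (2 * d))

lemma energyDensity_comm (d p : ℝ) (v : X → M) (x y : X) :
    energyDensity d p v x y = energyDensity d p v y x := by
  simp only [energyDensity, dist_comm]

lemma energyDensity_le_of_dist_le {N : Type*} [PseudoMetricSpace N] (d : ℝ) {p L : ℝ} (hp : 0 ≤ p)
    (hL : 0 ≤ L) {v : X → M} {w : X → N} {x y : X} (h : dist (v x) (v y) ≤ L * dist (w x) (w y)) :
    energyDensity d p v x y ≤ ENNReal.ofReal (L ^ p) * energyDensity d p w x y := by
  rw [energyDensity, energyDensity, ← ENNReal.ofReal_mul (by positivity), ← mul_div_assoc,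
    ← Real.mul_rpow hL dist_nonneg]
  gcongr

lemma ConformalEmbedding.energyDensity_comp (φ : ConformalEmbedding X Y) (d p : ℝ) (v : Y → M)
    (x y : X) : energyDensity d p (v ∘ φ) x y = ENNReal.ofReal (φ.factor x ^ d) *
      (ENNReal.ofReal (φ.factor y ^ d) * energyDensity d p v (φ x) (φ y)) := by
  have hx := φ.factor_pos x
  have hy := φ.factor_pos y
  have hdist : dist (φ x) (φ y) ^ (2 * d) =
      φ.factor x ^ d * φ.factor y ^ d * dist x y ^ (2 * d) := by
    rw [Real.rpow_mul dist_nonneg, Real.rpow_mul dist_nonneg, Real.rpow_two, Real.rpow_two,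
      φ.dist_sq, Real.mul_rpow (by positivity) (by positivity), Real.mul_rpow hx.le hy.le]
  rw [energyDensity, energyDensity, hdist, ← ENNReal.ofReal_mul (by positivity),
    ← ENNReal.ofReal_mul (by positivity), Function.comp_apply, Function.comp_apply]
  congr 1
  field_simp

variable [MeasurableSpace X] [BorelSpace X] [MeasurableSpace Y] [BorelSpace Y]

/-- The energy of interaction of `v` between `A` and `B`. -/
def energyOn (d p : ℝ) (v : X → M) (A B : Set X) : ℝ≥0∞ :=
  ∫⁻ x in A, ∫⁻ y in B, energyDensity d p v x y ∂μH[d] ∂μH[d]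

lemma measurable_energyDensity [SecondCountableTopology X] (d p : ℝ) {v : X → M}
    (hv : Continuous v) : Measurable fun z : X × X => energyDensity d p v z.1 z.2 := by
  have h : Measurable fun z : X × X => dist (v z.1) (v z.2) :=
    ((hv.comp continuous_fst).dist (hv.comp continuous_snd)).measurable
  exact ((h.pow_const p).div (measurable_dist.pow_const _)).ennreal_ofReal

lemma measurable_energyDensity_comp [SecondCountableTopology X] (d p : ℝ) {v : X → M}
    (hv : Continuous v) {T : Type*} [MeasurableSpace T] {a b : T → X} (ha : Measurable a)
    (hb : Measurable b) : Measurable fun q => energyDensity d p v (a q) (b q) :=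
  (measurable_energyDensity d p hv).comp (ha.prodMk hb)

lemma measurable_lintegral_energyDensity [SecondCountableTopology X] (d p : ℝ) {v : X → M}
    (hv : Continuous v) (μ : Measure X) [SFinite μ] :
    Measurable fun x => ∫⁻ y, energyDensity d p v x y ∂μ :=
  (measurable_energyDensity d p hv).lintegral_prod_right'

lemma energyOn_mono (d p : ℝ) (v : X → M) {A A' B B' : Set X} (hA : A ⊆ A') (hB : B ⊆ B') :
    energyOn d p v A B ≤ energyOn d p v A' B' :=
  (lintegral_mono_set hA).trans (lintegral_mono fun _ => lintegral_mono_set hB)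

lemma energyOn_comm [SecondCountableTopology X] (d p : ℝ) {v : X → M} (hv : Continuous v)
    [SFinite (μH[d] : Measure X)] (A B : Set X) : energyOn d p v A B = energyOn d p v B A := by
  rw [energyOn, lintegral_lintegral_swap (measurable_energyDensity d p hv).aemeasurable]
  simp only [energyDensity_comm d p v, energyOn]

theorem ConformalEmbedding.energyOn_image [SecondCountableTopology Y] (φ : ConformalEmbedding X Y)
    {d : ℝ} (hd : 0 ≤ d) (p : ℝ) [SFinite (μH[d] : Measure Y)] {v : Y → M} (hv : Continuous v)
    {A B : Set X} (hA : MeasurableSet A) (hB : MeasurableSet B) :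
    energyOn d p v (φ '' A) (φ '' B) = energyOn d p (v ∘ φ) A B := by
  rw [energyOn, φ.setLIntegral_image hd hA (measurable_lintegral_energyDensity d p hv _)]
  refine lintegral_congr fun x => ?_
  have hmeas : Measurable (energyDensity d p v (φ x)) :=
    measurable_energyDensity_comp d p hv measurable_const measurable_id
  rw [φ.setLIntegral_image hd hB hmeas, ← lintegral_const_mul' _ _ ENNReal.ofReal_ne_top]
  exact lintegral_congr fun y => (φ.energyDensity_comp d p v x y).symm

end Energy

section StereographicProjection

/-- Euclidean `n`-space, the domain of the conformal charts of `Sph n`. -/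
abbrev Euc (n : ℕ) : Type := EuclideanSpace ℝ (Fin n)

instance (n : ℕ) : Measure.IsAddHaarMeasure (μH[n] : Measure (Euc n)) := by
  simpa only [finrank_euclideanSpace, Fintype.card_fin] using
    isAddHaarMeasure_hausdorffMeasure (E := Euc n)

instance (n : ℕ) : Fact (Module.finrank ℝ (Euc (n + 1)) = n + 1) := ⟨by simp⟩

/-- A conformal parametrisation of the sphere minus one point, the `pole`, by Euclidean space. -/
structure ConformalChart (n : ℕ) extends ConformalEmbedding (Euc n) (Sph n) where
  pole : Sph n
  range_eq : range toFun = {pole}ᶜ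

instance (n : ℕ) : CoeFun (ConformalChart n) fun _ => Euc n → Sph n :=
  ⟨fun c => c.toFun⟩

/-- The chart `x ↦ c (r x)`. -/
def ConformalChart.scale {n : ℕ} (c : ConformalChart n) (r : ℝ) (hr : 0 < r) :
    ConformalChart n where
  toFun := c ∘ Homeomorph.smulOfNeZero r hr.ne'
  factor x := r * c.factor (r • x)
  isOpenEmbedding := c.isOpenEmbedding.comp (Homeomorph.isOpenEmbedding _)
  continuous_factor := continuous_const.mul (c.continuous_factor.comp (continuous_const_smul r))
  factor_pos x := mul_pos hr (c.factor_pos _)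
  dist_sq x y := by
    simp only [Function.comp_apply, Homeomorph.smulOfNeZero_apply, c.dist_sq, dist_smul₀,
      Real.norm_of_nonneg hr.le]
    ring
  pole := c.pole
  range_eq := by rw [(Homeomorph.surjective _).range_comp, c.range_eq]

lemma norm_stereoInvFunAux_sub_sq {E : Type*} [NormedAddCommGroup E] [InnerProductSpace ℝ E]
    {v p q : E} (hv : ‖v‖ = 1) (hp : p ∈ (ℝ ∙ v)ᗮ) (hq : q ∈ (ℝ ∙ v)ᗮ) :
    ‖stereoInvFunAux v p - stereoInvFunAux v q‖ ^ 2 =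
      4 / (‖p‖ ^ 2 + 4) * (4 / (‖q‖ ^ 2 + 4)) * ‖p - q‖ ^ 2 := by
  have hnorm {w : E} (hw : w ∈ (ℝ ∙ v)ᗮ) : ‖stereoInvFunAux v w‖ = 1 :=
    mem_sphere_zero_iff_norm.1 (stereoInvFunAux_mem hv hw)
  have hinner : inner ℝ (stereoInvFunAux v p) (stereoInvFunAux v q) =
      (16 * inner ℝ p q + (‖p‖ ^ 2 - 4) * (‖q‖ ^ 2 - 4)) / ((‖p‖ ^ 2 + 4) * (‖q‖ ^ 2 + 4)) := by
    simp only [stereoInvFunAux, inner_add_left, inner_add_right, real_inner_smul_left,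
      real_inner_smul_right, real_inner_self_eq_norm_sq, hv,
      Submodule.mem_orthogonal_singleton_iff_inner_left.1 hp,
      Submodule.mem_orthogonal_singleton_iff_inner_right.1 hq]
    field_simp
    ring
  rw [norm_sub_sq_real, hinner, hnorm hp, hnorm hq, norm_sub_sq_real p q]
  field_simp
  ring

variable {n : ℕ} (a : Sph n)

lemma exists_coe_stereographic'_symm_eq : ∃ U : Euc n ≃ₗᵢ[ℝ] (ℝ ∙ (a : Euc (n + 1)))ᗮ,
    ∀ x, ((stereographic' n a).symm x : Euc (n + 1)) =
      stereoInvFunAux (a : Euc (n + 1)) (U x : Euc (n + 1)) :=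
  ⟨(OrthonormalBasis.fromOrthogonalSpanSingleton n (𝕜 := ℝ)
    (ne_zero_of_mem_unit_sphere a)).repr.symm, fun x => by
      rw [stereographic'_symm_apply, stereoInvFunAux, smul_add]⟩

/-- The stereographic chart of the sphere sending `0` to `a`, with pole `-a`. -/
def stereoChart : ConformalChart n where
  toFun := (stereographic' n (-a)).symm
  factor x := 4 / (‖x‖ ^ 2 + 4)
  isOpenEmbedding :=
    (stereographic' n (-a)).symm.isOpenEmbedding (by simp)
  continuous_factor := continuous_const.div (by fun_prop) fun x => by positivity
  factor_pos x := by positivity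
  dist_sq x y := by
    obtain ⟨U, hU⟩ := exists_coe_stereographic'_symm_eq (-a)
    have hnorm (z : Euc n) : ‖(U z : Euc (n + 1))‖ = ‖z‖ := U.norm_map z
    rw [Subtype.dist_eq, dist_eq_norm, hU, hU, dist_eq_norm, ← hnorm x, ← hnorm y, ← hnorm (x - y),
      map_sub, Submodule.coe_sub]
    exact norm_stereoInvFunAux_sub_sq (norm_eq_of_mem_sphere _) (U x).2 (U y).2
  pole := -a
  range_eq := by
    rw [← stereographic'_source (n := n) (-a),
      ← (stereographic' n (-a)).symm_image_target_eq_source, stereographic'_target, image_univ]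

lemma stereoChart_factor (x : Euc n) : (stereoChart a).factor x = 4 / (‖x‖ ^ 2 + 4) := rfl

lemma stereoChart_zero : stereoChart a 0 = a :=
  Subtype.ext <| by
    obtain ⟨U, hU⟩ := exists_coe_stereographic'_symm_eq (-a)
    refine (hU 0).trans ?_
    rw [map_zero, stereoInvFunAux]
    simp [smul_smul]

lemma dist_stereoChart_sq (x : Euc n) :
    dist (stereoChart a x) a ^ 2 = 4 * ‖x‖ ^ 2 / (‖x‖ ^ 2 + 4) := by
  have h := (stereoChart a).dist_sq x 0
  rw [stereoChart_zero, dist_zero_right] at h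
  rw [h, stereoChart_factor, stereoChart_factor, norm_zero]
  ring

lemma stereoChart_lipschitz : LipschitzWith 1 (stereoChart a) :=
  LipschitzWith.of_dist_le_mul fun x y => by
    have h (z : Euc n) : (stereoChart a).factor z ≤ 1 := by
      rw [stereoChart_factor, div_le_one (by positivity)]
      linarith [sq_nonneg ‖z‖]
    simpa only [NNReal.coe_one] using (stereoChart a).dist_le (h x) (h y)

lemma dist_neg_self (x : Sph n) : dist (-x) x = 2 := by
  have h : dist (-x) x = ‖(2 : ℝ) • (x : Euc (n + 1))‖ := by
    rw [Subtype.dist_eq, dist_eq_norm, two_smul, ← norm_neg]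
    congr 1
    simp
  simpa [norm_smul] using h

lemma ball_subset_image_stereoChart {s : ℝ} (hs1 : s ≤ 1) :
    Metric.ball a s ⊆ stereoChart a '' Metric.ball 0 (2 * s) := by
  intro y hy
  have hys : dist y a < s := hy
  obtain ⟨x, rfl⟩ : y ∈ range (stereoChart a) := by
    rw [(stereoChart a).range_eq, mem_compl_singleton_iff]
    rintro rfl
    change dist (-a) a < s at hys
    linarith [dist_neg_self a]
  refine mem_image_of_mem _ (mem_ball_zero_iff.2 (lt_of_not_ge fun hx => hys.not_ge ?_))
  have hs : 0 ≤ s := dist_nonneg.trans hys.le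
  refine le_of_sq_le_sq ?_ dist_nonneg
  rw [dist_stereoChart_sq, le_div_iff₀ (by positivity)]
  nlinarith [mul_self_le_mul_self (by positivity) hx, mul_le_one₀ hs1 hs hs1, sq_nonneg ‖x‖]

lemma image_stereoChart_subset_ball (s : ℝ) :
    stereoChart a '' Metric.ball 0 s ⊆ Metric.ball a s := by
  rintro _ ⟨x, hx, rfl⟩
  have h := (stereoChart_lipschitz a).dist_le_mul x 0
  rw [stereoChart_zero, NNReal.coe_one, one_mul] at h
  exact h.trans_lt hx

lemma hausdorffMeasure_sphere_ball_le {s : ℝ} (hs : 0 < s) (hs1 : s ≤ 1) :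
    μH[n] (Metric.ball a s) ≤
      ENNReal.ofReal ((2 * s) ^ n) * (μH[n] : Measure (Euc n)) (Metric.ball 0 1) :=
  calc μH[n] (Metric.ball a s)
      ≤ μH[n] (stereoChart a '' Metric.ball 0 (2 * s)) :=
        measure_mono (ball_subset_image_stereoChart a hs1)
    _ ≤ μH[n] (Metric.ball (0 : Euc n) (2 * s)) := by
        simpa using (stereoChart_lipschitz a).lipschitzOnWith.hausdorffMeasure_image_le
          n.cast_nonneg (s := Metric.ball 0 (2 * s))
    _ = _ := by
        rw [Measure.addHaar_ball_of_pos _ _ (by positivity), finrank_euclideanSpace,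
          Fintype.card_fin]

lemma le_hausdorffMeasure_sphere_ball {s : ℝ} (hs : 0 < s) (hs1 : s ≤ 1) :
    ENNReal.ofReal ((s / 2) ^ n) * (μH[n] : Measure (Euc n)) (Metric.ball 0 1) ≤
      μH[n] (Metric.ball a s) := by
  have hfactor (x : Euc n) (hx : x ∈ Metric.ball 0 s) : 2⁻¹ ≤ (stereoChart a).factor x := by
    have hx1 := (mem_ball_zero_iff.1 hx).le.trans hs1
    rw [stereoChart_factor, inv_eq_one_div, div_le_div_iff₀ (by norm_num) (by positivity)]
    nlinarith [norm_nonneg x]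
  calc _ = ENNReal.ofReal (2⁻¹ ^ (n : ℝ)) * μH[n] (Metric.ball (0 : Euc n) s) := by
        rw [Measure.addHaar_ball_of_pos _ _ hs, finrank_euclideanSpace, Fintype.card_fin,
          ← mul_assoc, ← ENNReal.ofReal_mul (by positivity), Real.rpow_natCast, ← mul_pow,
          inv_mul_eq_div]
    _ ≤ μH[n] (stereoChart a '' Metric.ball 0 s) :=
        (stereoChart a).le_hausdorffMeasure_image n.cast_nonneg (by norm_num) hfactor
    _ ≤ _ := measure_mono (image_stereoChart_subset_ball a s)

instance : IsFiniteMeasure (μH[n] : Measure (Sph n)) := by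
  have : IsLocallyFiniteMeasure (μH[n] : Measure (Sph n)) :=
    ⟨fun a => ⟨Metric.ball a 1, Metric.ball_mem_nhds a one_pos,
      (hausdorffMeasure_sphere_ball_le a one_pos le_rfl).trans_lt
        (ENNReal.mul_lt_top ENNReal.ofReal_lt_top measure_ball_lt_top)⟩⟩
  infer_instance

end StereographicProjection

section Homotopy

variable {X Y : Type*} [TopologicalSpace X] [TopologicalSpace Y] {f g k : X → Y}

lemma homotopic_iff (f g : C(X, Y)) : Homotopic (f : X → Y) g ↔ ContinuousMap.Homotopic f g :=
  ⟨fun ⟨H, hH, h0, h1⟩ => ⟨⟨⟨H, hH⟩, h0, h1⟩⟩,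
    fun ⟨H⟩ => ⟨H, H.continuous, H.map_zero_left, H.map_one_left⟩⟩

lemma Homotopic.continuous_left (h : Homotopic f g) : Continuous f := by
  obtain ⟨H, hH, h0, -⟩ := h
  exact (hH.comp (continuous_const.prodMk continuous_id)).congr h0

lemma Homotopic.continuous_right (h : Homotopic f g) : Continuous g := by
  obtain ⟨H, hH, -, h1⟩ := h
  exact (hH.comp (continuous_const.prodMk continuous_id)).congr h1

lemma Homotopic.refl (hf : Continuous f) : Homotopic f f :=
  ⟨fun z => f z.2, by fun_prop, fun _ => rfl, fun _ => rfl⟩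

lemma Homotopic.symm (h : Homotopic f g) : Homotopic g f :=
  (homotopic_iff ⟨g, h.continuous_right⟩ ⟨f, h.continuous_left⟩).2
    ((homotopic_iff ⟨f, h.continuous_left⟩ ⟨g, h.continuous_right⟩).1 h).symm

lemma Homotopic.trans (h : Homotopic f g) (h' : Homotopic g k) : Homotopic f k :=
  (homotopic_iff ⟨f, h.continuous_left⟩ ⟨k, h'.continuous_right⟩).2
    (((homotopic_iff ⟨f, h.continuous_left⟩ ⟨g, h.continuous_right⟩).1 h).trans
      ((homotopic_iff ⟨g, h.continuous_right⟩ ⟨k, h'.continuous_right⟩).1 h'))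

end Homotopy

section SphereProjection

variable {X : Type*} [TopologicalSpace X] {m : ℕ}

instance (m : ℕ) : Inhabited (Sph m) := ⟨⟨EuclideanSpace.single 0 1, by simp⟩⟩

/-- The radial projection `y ↦ y / |y|` onto the sphere, with the junk value `default` at `0`. -/
def sphereProj (m : ℕ) (y : Euc (m + 1)) : Sph m :=
  if h : y = 0 then default else ⟨‖y‖⁻¹ • y, by simp [norm_smul, h]⟩

lemma coe_sphereProj {y : Euc (m + 1)} (hy : y ≠ 0) :
    (sphereProj m y : Euc (m + 1)) = ‖y‖⁻¹ • y := by
  simp [sphereProj, hy]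

lemma sphereProj_coe (y : Sph m) : sphereProj m (y : Euc (m + 1)) = y :=
  Subtype.ext <| by
    rw [coe_sphereProj (ne_zero_of_mem_unit_sphere y), norm_eq_of_mem_sphere, inv_one, one_smul]

lemma continuousOn_sphereProj : ContinuousOn (sphereProj m) {0}ᶜ := by
  rw [IsInducing.subtypeVal.continuousOn_iff]
  refine ContinuousOn.congr (f := fun y => ‖y‖⁻¹ • y) ?_ fun y hy => coe_sphereProj hy
  exact (continuous_norm.continuousOn.inv₀ fun y hy => norm_ne_zero_iff.2 hy).smul continuousOn_id

lemma continuous_sphereProj_comp {F : X → Euc (m + 1)} (hF : Continuous F) (h0 : ∀ x, F x ≠ 0) :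
    Continuous fun x => sphereProj m (F x) :=
  continuousOn_sphereProj.comp_continuous hF h0

lemma norm_sphereProj_sub_sphereProj_le {y z : Euc (m + 1)} (hy : 1 / 2 ≤ ‖y‖)
    (hz : 1 / 2 ≤ ‖z‖) :
    ‖(sphereProj m y : Euc (m + 1)) - sphereProj m z‖ ≤ 4 * ‖y - z‖ := by
  have hy0 : 0 < ‖y‖ := by linarith
  have hz0 : 0 < ‖z‖ := by linarith
  have hsplit : ‖y‖⁻¹ • y - ‖z‖⁻¹ • z =
      ‖y‖⁻¹ • (y - z) + (‖y‖⁻¹ * (‖z‖ - ‖y‖) * ‖z‖⁻¹) • z := by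
    rw [smul_sub, sub_add, ← sub_smul]
    congr 2
    field_simp
    ring
  rw [coe_sphereProj (norm_pos_iff.1 hy0), coe_sphereProj (norm_pos_iff.1 hz0), hsplit]
  calc ‖‖y‖⁻¹ • (y - z) + (‖y‖⁻¹ * (‖z‖ - ‖y‖) * ‖z‖⁻¹) • z‖
      ≤ ‖‖y‖⁻¹ • (y - z)‖ + ‖(‖y‖⁻¹ * (‖z‖ - ‖y‖) * ‖z‖⁻¹) • z‖ := norm_add_le _ _
    _ = ‖y‖⁻¹ * ‖y - z‖ + ‖y‖⁻¹ * |‖z‖ - ‖y‖| := by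
      simp only [norm_smul, norm_mul, norm_inv, norm_norm, Real.norm_eq_abs (‖z‖ - ‖y‖),
        inv_mul_cancel_right₀ hz0.ne']
    _ ≤ 2 * ‖y - z‖ + 2 * ‖y - z‖ := by
      have : ‖y‖⁻¹ ≤ 2 := inv_le_of_inv_le₀ two_pos (by linarith)
      gcongr
      exact norm_sub_rev y z ▸ abs_norm_sub_norm_le z y
    _ = 4 * ‖y - z‖ := by ring

lemma homotopic_sphereProj_of_norm_sub_lt {F G : X → Euc (m + 1)} (hF : Continuous F)
    (hG : Continuous G) (h : ∀ x, ‖F x - G x‖ < ‖F x‖) :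
    Homotopic (fun x => sphereProj m (F x)) fun x => sphereProj m (G x) := by
  refine ⟨fun z => sphereProj m (F z.2 + (z.1 : ℝ) • (G z.2 - F z.2)),
    continuous_sphereProj_comp (by fun_prop) ?_, by simp, by simp⟩
  rintro ⟨t, x⟩ h0
  have hnorm : ‖F x‖ = t * ‖F x - G x‖ := by
    have hFx : F x = -((t : ℝ) • (G x - F x)) := eq_neg_of_add_eq_zero_left h0
    calc ‖F x‖ = ‖(t : ℝ) • (G x - F x)‖ := (congrArg norm hFx).trans (norm_neg _)
      _ = t * ‖F x - G x‖ := by rw [norm_smul, Real.norm_of_nonneg t.2.1, norm_sub_rev]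
  nlinarith [h x, t.2.2, norm_nonneg (F x - G x)]

lemma homotopic_sphereProj_of_norm_sub_lt_one {F : X → Sph m} {G : X → Euc (m + 1)}
    (hF : Continuous F) (hG : Continuous G) (h : ∀ x, ‖(F x : Euc (m + 1)) - G x‖ < 1) :
    Homotopic F fun x => sphereProj m (G x) := by
  simpa only [sphereProj_coe] using homotopic_sphereProj_of_norm_sub_lt
    (F := fun x => (F x : Euc (m + 1))) (by fun_prop) hG fun x => by simpa using h x

end SphereProjection

section Gluing

variable {T X Y Z : Type*} [TopologicalSpace T] [TopologicalSpace X] [TopologicalSpace Y]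
  [TopologicalSpace Z] [T2Space Z] {φ : X → Z} {U : Z → Y} {K : Set X}

lemma continuous_extend_of_eq_off_compact (hφ : IsOpenEmbedding φ) (hU : Continuous U)
    (hK : IsCompact K) {F : T × X → Y} (hF : Continuous F)
    (hFU : ∀ t, ∀ x ∉ K, F (t, x) = U (φ x)) :
    Continuous fun z : T × Z => Function.extend φ (fun x => F (z.1, x)) U z.2 := by
  rw [continuous_iff_continuousAt]
  rintro ⟨t, z⟩
  by_cases hz : z ∈ range φ
  · obtain ⟨x, rfl⟩ := hz
    refine ((IsOpenEmbedding.id (X := T)).prodMap hφ).continuousAt_iff (x := (t, x)) |>.1 ?_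
    refine (hF.congr fun w => ?_).continuousAt
    exact (hφ.injective.extend_apply (fun x => F (w.1, x)) U w.2).symm
  · have hopen : {w : T × Z | w.2 ∈ (φ '' K)ᶜ} ∈ 𝓝 (t, z) :=
      ((hK.image hφ.continuous).isClosed.isOpen_compl.preimage continuous_snd).mem_nhds
        fun hzK => hz (image_subset_range φ K hzK)
    refine (hU.comp continuous_snd).continuousAt.congr ?_
    filter_upwards [hopen] with w hw
    by_cases hwφ : w.2 ∈ range φ
    · obtain ⟨x, hx⟩ := hwφ
      rw [Function.comp_apply, ← hx, hφ.injective.extend_apply]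
      exact (hFU w.1 x fun hxK => hw (hx ▸ mem_image_of_mem φ hxK)).symm
    · exact (Function.extend_apply' _ _ _ hwφ).symm

lemma homotopic_extend_of_eq_off_compact (hφ : IsOpenEmbedding φ) (hU : Continuous U)
    (hK : IsCompact K) {F : unitInterval × X → Y} (hF : Continuous F)
    (hFU : ∀ t, ∀ x ∉ K, F (t, x) = U (φ x)) :
    Homotopic (Function.extend φ (fun x => F (0, x)) U)
      (Function.extend φ (fun x => F (1, x)) U) :=
  ⟨_, continuous_extend_of_eq_off_compact hφ hU hK hF hFU, fun _ => rfl, fun _ => rfl⟩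

end Gluing

section NullHomotopicInside

lemma NullHomotopic.exists_continuous_extension {n : ℕ} {Y : Type*} [TopologicalSpace Y]
    {u : Sph n → Y} (hu : NullHomotopic u) :
    ∃ F : Euc (n + 1) → Y, Continuous F ∧ ∀ x : Sph n, F x = u x := by
  obtain ⟨c, H, hH, hH0, hH1⟩ := hu
  have hτ : Continuous fun y : Euc (n + 1) => projIcc (0 : ℝ) 1 zero_le_one (1 - ‖y‖) :=
    continuous_projIcc.comp (by fun_prop)
  refine ⟨fun y => H (projIcc 0 1 zero_le_one (1 - ‖y‖), sphereProj n y), ?_, fun x => ?_⟩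
  · rw [continuous_iff_continuousAt]
    intro y
    by_cases hy : y = 0
    · have hτ0 : projIcc (0 : ℝ) 1 zero_le_one (1 - ‖y‖) = 1 := by simp [hy]
      rw [ContinuousAt, hτ0, hH1, tendsto_def]
      intro W hW
      have hunif : ∀ᶠ t in 𝓝 (1 : unitInterval), ∀ x ∈ (univ : Set (Sph n)), H (t, x) ∈ W :=
        isCompact_univ.eventually_forall_of_forall_eventually fun x _ =>
          (hH.tendsto (1, x)).eventually ((hH1 x).symm ▸ hW)
      filter_upwards [(hτ0 ▸ hτ.tendsto y).eventually hunif] with z hz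
      exact hz _ (mem_univ _)
    · have hproj := continuousOn_sphereProj.continuousAt (isOpen_compl_singleton.mem_nhds hy)
      exact ContinuousAt.comp (g := H) (f := fun y : Euc (n + 1) =>
        (projIcc (0 : ℝ) 1 zero_le_one (1 - ‖y‖), sphereProj n y)) hH.continuousAt
        (hτ.continuousAt.prodMk hproj)
  · simp [sphereProj_coe, hH0]

variable {n : ℕ} {Y : Type*} [TopologicalSpace Y] (e : Sph n)

lemma dist_sq_eq_two_sub_inner (x : Sph n) :
    dist x e ^ 2 = 2 - 2 * inner ℝ (x : Euc (n + 1)) (e : Euc (n + 1)) := by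
  rw [Subtype.dist_eq, dist_eq_norm, norm_sub_sq_real, norm_eq_of_mem_sphere,
    norm_eq_of_mem_sphere]
  ring

/-- The straight path `(1 - t) x - t e` from `x` to `-e` in the ball, rescaled so that it runs in
the sphere as soon as `ρ ≤ |x - e|`. It contracts the ball-valued identity of the sphere to `-e`
while the complement of the cap of radius `ρ` about `e` never leaves the sphere or enters that
cap. -/
def capContraction (ρ t : ℝ) (x : Sph n) : Euc (n + 1) :=
  (min 1 (dist x e / ρ) * ‖(1 - t) • (x : Euc (n + 1)) - t • (e : Euc (n + 1))‖
    + (1 - min 1 (dist x e / ρ)))⁻¹ • ((1 - t) • (x : Euc (n + 1)) - t • (e : Euc (n + 1)))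

lemma eq_of_smul_sub_smul_eq_zero {x : Sph n} {t : ℝ}
    (h : (1 - t) • (x : Euc (n + 1)) - t • (e : Euc (n + 1)) = 0) (ht : t ∈ Icc (0 : ℝ) 1) :
    x = e := by
  have hx := sub_eq_zero.1 h
  have hnorm := congrArg norm hx
  rw [norm_smul, norm_smul, norm_eq_of_mem_sphere, norm_eq_of_mem_sphere, Real.norm_of_nonneg ht.1,
    Real.norm_of_nonneg (sub_nonneg.2 ht.2)] at hnorm
  have ht' : t ≠ 0 := fun h0 => by simp [h0] at hnorm
  rw [mul_one, mul_one] at hnorm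
  rw [hnorm] at hx
  exact Subtype.ext (smul_right_injective _ ht' hx)

lemma continuous_capContraction {ρ : ℝ} (hρ : 0 < ρ) :
    Continuous fun z : unitInterval × Sph n => capContraction e ρ z.1 z.2 := by
  unfold capContraction
  refine Continuous.fun_smul (Continuous.fun_inv₀ (by fun_prop) ?_) (by fun_prop)
  rintro ⟨t, x⟩ h
  set y := (1 - (t : ℝ)) • (x : Euc (n + 1)) - (t : ℝ) • (e : Euc (n + 1))
  set a := min 1 (dist x e / ρ) with ha
  have : 0 ≤ a := by positivity
  have ha1 : a ≤ 1 := min_le_left _ _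
  have hay : 0 ≤ a * ‖y‖ := by positivity
  have h1 : a = 1 := by
    change a * ‖y‖ + (1 - a) = 0 at h
    linarith
  have hy : y = 0 := by
    change a * ‖y‖ + (1 - a) = 0 at h
    simpa [h1] using h
  have hxe : x = e := eq_of_smul_sub_smul_eq_zero e hy t.2
  simp [ha, hxe] at h1

lemma inner_smul_sub_smul_le (x : Sph n) {t : ℝ} (ht : t ∈ Icc (0 : ℝ) 1) :
    inner ℝ ((1 - t) • (x : Euc (n + 1)) - t • (e : Euc (n + 1))) (e : Euc (n + 1)) ≤
      inner ℝ (x : Euc (n + 1)) (e : Euc (n + 1)) *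
        ‖(1 - t) • (x : Euc (n + 1)) - t • (e : Euc (n + 1))‖ := by
  obtain ⟨ht0, ht1⟩ := ht
  have hx : ‖(1 - t) • (x : Euc (n + 1))‖ = 1 - t := by
    rw [norm_smul, norm_eq_of_mem_sphere, Real.norm_of_nonneg (sub_nonneg.2 ht1), mul_one]
  have he : ‖t • (e : Euc (n + 1))‖ = t := by
    rw [norm_smul, norm_eq_of_mem_sphere, Real.norm_of_nonneg ht0, mul_one]
  have hle := norm_sub_le ((1 - t) • (x : Euc (n + 1))) (t • (e : Euc (n + 1)))
  have hge := norm_sub_norm_le ((1 - t) • (x : Euc (n + 1))) (t • (e : Euc (n + 1)))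
  have hinner := abs_le.1 (abs_real_inner_le_norm (x : Euc (n + 1)) (e : Euc (n + 1)))
  rw [hx, he] at hle hge
  rw [norm_eq_of_mem_sphere, norm_eq_of_mem_sphere, mul_one] at hinner
  rw [inner_sub_left, real_inner_smul_left, real_inner_smul_left, real_inner_self_eq_norm_sq,
    norm_eq_of_mem_sphere]
  rcases le_total 0 (inner ℝ (x : Euc (n + 1)) (e : Euc (n + 1))) with _ | _ <;> nlinarith

lemma exists_capContraction_eq_coe {ρ : ℝ} (hρ : 0 < ρ) {x : Sph n} (hx : ρ ≤ dist x e) {t : ℝ}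
    (ht : t ∈ Icc (0 : ℝ) 1) :
    ∃ y : Sph n, ρ ≤ dist y e ∧ capContraction e ρ t x = (y : Euc (n + 1)) := by
  set q := (1 - t) • (x : Euc (n + 1)) - t • (e : Euc (n + 1)) with hq
  have hq0 : q ≠ 0 := fun h => by
    rw [eq_of_smul_sub_smul_eq_zero e h ht, dist_self] at hx
    exact hx.not_gt hρ
  refine ⟨sphereProj n q, hx.trans (le_of_sq_le_sq ?_ dist_nonneg), ?_⟩
  · have := inner_smul_sub_smul_le e x ht
    rw [dist_sq_eq_two_sub_inner, dist_sq_eq_two_sub_inner, coe_sphereProj hq0,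
      real_inner_smul_left]
    linarith [(inv_mul_le_iff₀' (norm_pos_iff.2 hq0)).2 this]
  · simp [capContraction, coe_sphereProj hq0, ← hq, min_eq_left ((one_le_div hρ).2 hx)]

theorem homotopic_const_inside_of_nullHomotopic {ρ : ℝ} (hρ : 0 < ρ) (hρ2 : ρ ≤ 2) {U : Sph n → Y}
    (hU : Continuous U) {c : Y} (hc : ∀ x, dist x e = ρ → U x = c)
    (hin : NullHomotopic fun x => if ρ ≤ dist x e then c else U x) :
    Homotopic U fun x => if ρ ≤ dist x e then U x else c := by
  obtain ⟨F, hF, hFu⟩ := hin.exists_continuous_extension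
  have hFout {x : Sph n} (hx : ρ ≤ dist x e) : F x = c := (hFu x).trans (if_pos hx)
  refine ⟨fun z => if ρ ≤ dist z.2 e then U z.2 else F (capContraction e ρ z.1 z.2),
    Continuous.if_le (by fun_prop) (hF.comp (continuous_capContraction e hρ)) (by fun_prop)
      (by fun_prop) ?_, fun x => ?_, fun x => ?_⟩
  · rintro ⟨t, x⟩ hx
    obtain ⟨y, hy, hxy⟩ := exists_capContraction_eq_coe e hρ hx.le t.2
    rw [hc x hx.symm, hxy, hFout hy]
  · have hstart : capContraction e ρ 0 x = x := by simp [capContraction]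
    simp only [Icc.coe_zero, hstart, hFu]
    split_ifs <;> rfl
  · have hend : capContraction e ρ 1 x = ((-e : Sph n) : Euc (n + 1)) := by simp [capContraction]
    simp only [Icc.coe_one, hend, hFout (hρ2.trans_eq (dist_neg_self e).symm)]

end NullHomotopicInside

section Jensen

variable {X G : Type*} [MeasurableSpace X] [NormedAddCommGroup G] {p : ℝ}

lemma norm_le_rpow_inv_of_enorm_rpow_le (hp : 0 < p) {v : G} {b : ℝ} (hb : 0 ≤ b)
    (h : ‖v‖ₑ ^ p ≤ ENNReal.ofReal b) : ‖v‖ ≤ b ^ p⁻¹ := by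
  rw [← ofReal_norm, ENNReal.ofReal_rpow_of_nonneg (norm_nonneg _) hp.le,
    ENNReal.ofReal_le_ofReal_iff hb] at h
  rwa [Real.le_rpow_inv_iff_of_pos (norm_nonneg _) hb hp]

lemma ofReal_mul_le_ofReal_of_le_div {C b : ℝ} (hC : 0 < C) {E : ℝ≥0∞}
    (h : E ≤ ENNReal.ofReal (b / C)) : ENNReal.ofReal C * E ≤ ENNReal.ofReal b := by
  refine (mul_le_mul' le_rfl h).trans ?_
  rw [← ENNReal.ofReal_mul hC.le, mul_div_cancel₀ _ hC.ne']

variable [NormedSpace ℝ G] (P Q : Measure X) [IsProbabilityMeasure P] [IsProbabilityMeasure Q]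
  {f : X → G}

lemma enorm_integral_rpow_le_lintegral (hp : 1 ≤ p) (hf : AEStronglyMeasurable f P) :
    ‖∫ x, f x ∂P‖ₑ ^ p ≤ ∫⁻ x, ‖f x‖ₑ ^ p ∂P := by
  have hp0 : 0 < p := by linarith
  have hLp := eLpNorm_le_eLpNorm_of_exponent_le (μ := P) (p := 1) (q := ENNReal.ofReal p)
    (by simpa using hp) hf
  rw [eLpNorm_one_eq_lintegral_enorm, eLpNorm_eq_lintegral_rpow_enorm_toReal (by simpa using hp0)
    (by simp), ENNReal.toReal_ofReal hp0.le] at hLp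
  calc _ ≤ ((∫⁻ x, ‖f x‖ₑ ^ p ∂P) ^ (1 / p)) ^ p := by
        gcongr; exact (enorm_integral_le_lintegral_enorm _).trans hLp
    _ = _ := by rw [← ENNReal.rpow_mul, one_div_mul_cancel hp0.ne', ENNReal.rpow_one]

variable [CompleteSpace G]

lemma enorm_integral_sub_rpow_le (hp : 1 ≤ p) (hf : Integrable f P) (v : G) :
    ‖(∫ x, f x ∂P) - v‖ₑ ^ p ≤ ∫⁻ x, ‖f x - v‖ₑ ^ p ∂P := by
  have hsub : (∫ x, f x ∂P) - v = ∫ x, (f x - v) ∂P := by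
    simp [integral_sub hf (integrable_const v)]
  rw [hsub]
  exact enorm_integral_rpow_le_lintegral P hp (hf.sub (integrable_const v)).1

lemma enorm_integral_sub_integral_rpow_le (hp : 1 ≤ p) (hfP : Integrable f P)
    (hfQ : Integrable f Q) :
    ‖(∫ x, f x ∂P) - ∫ x, f x ∂Q‖ₑ ^ p ≤ ∫⁻ x, ∫⁻ y, ‖f x - f y‖ₑ ^ p ∂Q ∂P := by
  refine (enorm_integral_sub_rpow_le P hp hfP _).trans (lintegral_mono fun x => ?_)
  rw [enorm_sub_rev]
  refine (enorm_integral_sub_rpow_le Q hp hfQ _).trans (lintegral_mono fun y => ?_)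
  rw [enorm_sub_rev]

lemma one_sub_le_norm_integral_of_lintegral_le (hp : 1 ≤ p) (hf : Integrable f P)
    (hf1 : ∀ x, ‖f x‖ = 1) (hm : AEMeasurable (fun x => ∫⁻ y, ‖f x - f y‖ₑ ^ p ∂P) P) {b : ℝ}
    (hb : 0 ≤ b) (h : ∫⁻ x, ∫⁻ y, ‖f x - f y‖ₑ ^ p ∂P ∂P ≤ ENNReal.ofReal b) :
    1 - b ^ p⁻¹ ≤ ‖∫ x, f x ∂P‖ := by
  obtain ⟨x, hx⟩ := exists_le_lintegral hm
  have hclose : ‖f x - ∫ x, f x ∂P‖ ≤ b ^ p⁻¹ := by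
    rw [norm_sub_rev]
    refine norm_le_rpow_inv_of_enorm_rpow_le (by linarith) hb
      ((enorm_integral_sub_rpow_le P hp hf _).trans (le_trans ?_ (hx.trans h)))
    simp only [enorm_sub_rev (f x), le_refl]
  have htri := norm_sub_norm_le (f x) (f x - ∫ x, f x ∂P)
  simp only [sub_sub_cancel, hf1] at htri
  linarith

end Jensen

section AverageEnergy

variable {X G : Type*} [MetricSpace X] [NormedAddCommGroup G] {p : ℝ}

lemma enorm_sub_rpow_le_energyDensity (d : ℝ) (hd : 0 ≤ d) (hp : 0 < p) (v : X → G) {x y : X}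
    {D : ℝ} (h : dist x y ≤ D) :
    ‖v x - v y‖ₑ ^ p ≤ ENNReal.ofReal ((D ^ d) ^ 2) * energyDensity d p v x y := by
  have : 0 ≤ D := dist_nonneg.trans h
  rw [← ofReal_norm, ENNReal.ofReal_rpow_of_nonneg (norm_nonneg _) hp.le, energyDensity,
    ← ENNReal.ofReal_mul (by positivity), ← dist_eq_norm]
  apply ENNReal.ofReal_le_ofReal
  rcases eq_or_ne x y with rfl | hxy
  · simp [Real.zero_rpow hp.ne']
  · have hxy : 0 < dist x y := dist_pos.2 hxy
    rw [mul_comm 2 d, Real.rpow_mul hxy.le, Real.rpow_two, ← mul_div_assoc,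
      le_div_iff₀ (by positivity), mul_comm]
    gcongr

variable [MeasurableSpace X] [BorelSpace X]

lemma lintegral_enorm_sub_rpow_le_energyOn {d : ℝ} (hd : 0 ≤ d) (hp : 0 < p) (v : X → G)
    {P Q : Measure X} {A B : ℝ≥0∞} (hB : B ≠ ∞) {S T : Set X} (hS : MeasurableSet S)
    (hT : MeasurableSet T) (hP : P ≤ A • μH[d].restrict S) (hQ : Q ≤ B • μH[d].restrict T)
    {D : ℝ} (hD : ∀ x ∈ S, ∀ y ∈ T, dist x y ≤ D) :
    ∫⁻ x, ∫⁻ y, ‖v x - v y‖ₑ ^ p ∂Q ∂P ≤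
      ENNReal.ofReal ((D ^ d) ^ 2) * A * B * energyOn d p v S T := by
  have hinner : ∀ x ∈ S, ∫⁻ y, ‖v x - v y‖ₑ ^ p ∂Q ≤
      B * (ENNReal.ofReal ((D ^ d) ^ 2) * ∫⁻ y in T, energyDensity d p v x y ∂μH[d]) := by
    intro x hx
    refine (lintegral_mono' hQ le_rfl).trans ?_
    rw [lintegral_smul_measure, smul_eq_mul, ← lintegral_const_mul' _ _ ENNReal.ofReal_ne_top]
    refine mul_le_mul' le_rfl ?_
    exact setLIntegral_mono' hT fun y hy => enorm_sub_rpow_le_energyDensity d hd hp v (hD x hx y hy)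
  refine (lintegral_mono' hP le_rfl).trans ?_
  rw [lintegral_smul_measure, smul_eq_mul]
  refine (mul_le_mul' le_rfl (setLIntegral_mono' hS hinner)).trans ?_
  rw [lintegral_const_mul' _ _ hB, lintegral_const_mul' _ _ ENNReal.ofReal_ne_top, energyOn]
  apply le_of_eq; ring

lemma measurable_lintegral_enorm_sub_rpow [SecondCountableTopology X] (p : ℝ) {f : X → G}
    (hf : Continuous f) (P : Measure X) [SFinite P] :
    Measurable fun x => ∫⁻ y, ‖f x - f y‖ₑ ^ p ∂P := by
  have : Measurable fun z : X × X => ‖f z.1 - f z.2‖ₑ ^ p :=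
    ((by fun_prop : Continuous fun z : X × X => ‖f z.1 - f z.2‖ₑ).measurable).pow_const p
  exact this.lintegral_prod_right'

end AverageEnergy

section TentAverage

/-- Lower Ahlfors `d`-regularity of a metric space at scales at most one. -/
class LowerAhlforsRegular (d : ℝ) (X : Type*) [MetricSpace X] [MeasurableSpace X]
    [BorelSpace X] : Prop where
  exists_le_measureReal_ball : ∃ c > 0, ∀ (x : X) (t : ℝ), 0 < t → t ≤ 1 →
    c * t ^ d ≤ (μH[d] : Measure X).real (Metric.ball x t)

instance (n : ℕ) : LowerAhlforsRegular n (Sph n) where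
  exists_le_measureReal_ball := by
    refine ⟨(1 / 2) ^ (n : ℝ) * (μH[n] : Measure (Euc n)).real (Metric.ball 0 1),
      mul_pos (by positivity) (ENNReal.toReal_pos ?_ measure_ball_lt_top.ne), fun a t ht ht1 => ?_⟩
    · exact (Metric.measure_ball_pos _ _ one_pos).ne'
    · have h := ENNReal.toReal_mono (measure_ne_top _ _) (le_hausdorffMeasure_sphere_ball a ht ht1)
      rw [ENNReal.toReal_mul, ENNReal.toReal_ofReal (by positivity)] at h
      rw [Measure.real, Measure.real]
      convert h using 1
      rw [div_pow, Real.rpow_natCast, Real.rpow_natCast, div_pow, one_pow]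
      ring

variable {X : Type*} [MetricSpace X]

/-- The kernel against which maps are averaged at scale `t` around `x`. -/
def tentKernel (t : ℝ) (x y : X) : ℝ := max 0 (t - dist x y)

lemma tentKernel_nonneg (t : ℝ) (x y : X) : 0 ≤ tentKernel t x y := le_max_left _ _

lemma tentKernel_le {t : ℝ} (ht : 0 ≤ t) (x y : X) : tentKernel t x y ≤ t :=
  max_le ht (by linarith [dist_nonneg (x := x) (y := y)])

lemma tentKernel_eq_zero {t : ℝ} {x y : X} (hy : y ∉ Metric.ball x t) : tentKernel t x y = 0 := by
  rw [Metric.mem_ball, not_lt, dist_comm] at hy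
  exact max_eq_left (by linarith)

lemma continuous_tentKernel : Continuous fun z : (ℝ × X) × X => tentKernel z.1.1 z.1.2 z.2 := by
  unfold tentKernel; fun_prop

lemma continuous_tentKernel_right (t : ℝ) (x : X) : Continuous (tentKernel t x) := by
  unfold tentKernel; fun_prop

variable [MeasurableSpace X] [BorelSpace X] (d : ℝ)

/-- The total mass of the tent kernel. -/
def tentMass (t : ℝ) (x : X) : ℝ := ∫ y, tentKernel t x y ∂μH[d]

/-- The tent kernel at scale `t` around `x`, normalised to a probability measure. -/
def tentMeasure (t : ℝ) (x : X) : Measure X :=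
  μH[d].withDensity fun y => ENNReal.ofReal (tentKernel t x y / tentMass d t x)

/-- The average of `v` at scale `t` around `x`. -/
def tentAverage {E : Type*} [NormedAddCommGroup E] [NormedSpace ℝ E] (t : ℝ) (v : X → E) (x : X) :
    E :=
  ∫ y, v y ∂(tentMeasure d t x)

variable (X) in
/-- A constant controlling the normalised tent kernels by the volume of the ball carrying them. -/
def tentConst [LowerAhlforsRegular d X] : ℝ :=
  2 ^ (d + 1) / (LowerAhlforsRegular.exists_le_measureReal_ball (d := d) (X := X)).choose

section

variable [LowerAhlforsRegular d X]

variable (X) in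
lemma tentConst_pos : 0 < tentConst X d :=
  div_pos (by positivity) (LowerAhlforsRegular.exists_le_measureReal_ball (d := d)).choose_spec.1

lemma le_tentConst_mul_measureReal_ball {t : ℝ} (ht : t ∈ Ioc (0 : ℝ) 1) (x : X) :
    t ^ d ≤ tentConst X d / 2 * (μH[d] : Measure X).real (Metric.ball x (t / 2)) := by
  obtain ⟨hc, h⟩ := (LowerAhlforsRegular.exists_le_measureReal_ball (d := d) (X := X)).choose_spec
  have hball := h x (t / 2) (half_pos ht.1) (by linarith [ht.2, ht.1])
  rw [Real.div_rpow ht.1.le (by norm_num)] at hball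
  rw [tentConst, Real.rpow_add (by norm_num), Real.rpow_one]
  set c := (LowerAhlforsRegular.exists_le_measureReal_ball (d := d) (X := X)).choose
  calc t ^ d = 2 ^ d / c * (c * (t ^ d / 2 ^ d)) := by field_simp
    _ ≤ 2 ^ d / c * (μH[d] : Measure X).real (Metric.ball x (t / 2)) := by gcongr
    _ = _ := by ring

end

variable [CompactSpace X] [IsFiniteMeasure (μH[d] : Measure X)]

lemma continuous_tentMass : Continuous fun z : ℝ × X => tentMass d z.1 z.2 := by
  simpa only [tentMass, setIntegral_univ] using
    continuous_parametric_integral_of_continuous (μ := (μH[d] : Measure X))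
      (f := fun z : ℝ × X => tentKernel z.1 z.2) continuous_tentKernel (s := univ) isCompact_univ

lemma integrable_of_continuous {E : Type*} [NormedAddCommGroup E] (P : Measure X)
    [IsFiniteMeasure P] {f : X → E} (hf : Continuous f) : Integrable f P :=
  hf.integrable_of_hasCompactSupport (HasCompactSupport.of_compactSpace f)

variable [LowerAhlforsRegular d X] {t : ℝ}

lemma mul_rpow_le_tentConst_mul_tentMass (ht : t ∈ Ioc (0 : ℝ) 1) (x : X) :
    t * t ^ d ≤ tentConst X d * tentMass d t x := by
  have hint : Integrable (tentKernel t x) μH[d] :=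
    integrable_of_continuous _ (continuous_tentKernel_right t x)
  have hhalf : (μH[d] : Measure X).real (Metric.ball x (t / 2)) * (t / 2) ≤ tentMass d t x := by
    rw [← smul_eq_mul, ← setIntegral_const]
    refine (setIntegral_mono_on (integrable_const _) hint.integrableOn measurableSet_ball
      fun y hy => ?_).trans (setIntegral_le_integral hint
        (Eventually.of_forall (tentKernel_nonneg t x)))
    rw [Metric.mem_ball, dist_comm] at hy
    exact le_max_of_le_right (by linarith)
  calc t * t ^ d ≤ t * (tentConst X d / 2 * (μH[d] : Measure X).real (Metric.ball x (t / 2))) :=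
        mul_le_mul_of_nonneg_left (le_tentConst_mul_measureReal_ball d ht x) ht.1.le
    _ = tentConst X d * ((μH[d] : Measure X).real (Metric.ball x (t / 2)) * (t / 2)) := by ring
    _ ≤ _ := by gcongr; exact (tentConst_pos X d).le

lemma tentMass_pos (ht : t ∈ Ioc (0 : ℝ) 1) (x : X) : 0 < tentMass d t x := by
  have := ht.1
  exact pos_of_mul_pos_right
    ((by positivity : 0 < t * t ^ d).trans_le (mul_rpow_le_tentConst_mul_tentMass d ht x))
    (tentConst_pos X d).le

lemma isProbabilityMeasure_tentMeasure (ht : t ∈ Ioc (0 : ℝ) 1) (x : X) :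
    IsProbabilityMeasure (tentMeasure d t x) := by
  constructor
  have hm := tentMass_pos d ht x
  rw [tentMeasure, withDensity_apply _ MeasurableSet.univ, setLIntegral_univ,
    ← ofReal_integral_eq_lintegral_ofReal, integral_div, ← tentMass, div_self hm.ne',
    ENNReal.ofReal_one]
  · exact integrable_of_continuous _ ((continuous_tentKernel_right t x).div_const _)
  · exact Eventually.of_forall fun y => div_nonneg (tentKernel_nonneg t x y) hm.le

lemma tentMeasure_le (ht : t ∈ Ioc (0 : ℝ) 1) (x : X) : tentMeasure d t x ≤
    ENNReal.ofReal (tentConst X d / t ^ d) • μH[d].restrict (Metric.ball x t) := by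
  have hm := tentMass_pos d ht x
  have htd : 0 < t ^ d := Real.rpow_pos_of_pos ht.1 d
  rw [← withDensity_const, ← withDensity_indicator measurableSet_ball, tentMeasure]
  refine withDensity_mono (Eventually.of_forall fun y => ?_)
  by_cases hy : y ∈ Metric.ball x t
  · rw [indicator_of_mem hy]
    refine ENNReal.ofReal_le_ofReal ((div_le_div_iff₀ hm htd).2 ?_)
    calc tentKernel t x y * t ^ d ≤ t * t ^ d := by gcongr; exact tentKernel_le ht.1.le x y
      _ ≤ _ := mul_rpow_le_tentConst_mul_tentMass d ht x
  · simp [tentKernel_eq_zero hy]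

lemma ae_mem_ball_tentMeasure (ht : t ∈ Ioc (0 : ℝ) 1) (x : X) :
    ∀ᵐ y ∂(tentMeasure d t x), y ∈ Metric.ball x t :=
  (Measure.absolutelyContinuous_of_le (tentMeasure_le d ht x)).ae_le
    (Measure.ae_smul_measure (ae_restrict_mem measurableSet_ball) _)

variable {E : Type*} [NormedAddCommGroup E] [NormedSpace ℝ E] {v : X → E}

lemma tentAverage_eq_smul_integral (ht : t ∈ Ioc (0 : ℝ) 1) (v : X → E) (x : X) :
    tentAverage d t v x = (tentMass d t x)⁻¹ • ∫ y, tentKernel t x y • v y ∂μH[d] := by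
  have hm := tentMass_pos d ht x
  rw [tentAverage, tentMeasure, integral_withDensity_eq_integral_toReal_smul, ← integral_smul]
  · refine integral_congr_ae (Eventually.of_forall fun y => ?_)
    simp only
    rw [ENNReal.toReal_ofReal (div_nonneg (tentKernel_nonneg t x y) hm.le), smul_smul,
      div_eq_inv_mul]
  · exact ((continuous_tentKernel_right t x).div_const _).measurable.ennreal_ofReal
  · exact Eventually.of_forall fun y => ENNReal.ofReal_lt_top

lemma continuousOn_tentAverage (hv : Continuous v) :
    ContinuousOn (fun z : ℝ × X => tentAverage d z.1 v z.2) (Ioc 0 1 ×ˢ univ) := by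
  have hnum : Continuous fun z : ℝ × X => ∫ y, tentKernel z.1 z.2 y • v y ∂μH[d] := by
    have hker : Continuous fun z : (ℝ × X) × X => tentKernel z.1.1 z.1.2 z.2 • v z.2 :=
      continuous_tentKernel.smul (hv.comp continuous_snd)
    simpa only [setIntegral_univ] using
      continuous_parametric_integral_of_continuous (μ := (μH[d] : Measure X))
        (f := fun (z : ℝ × X) y => tentKernel z.1 z.2 y • v y) hker (s := univ) isCompact_univ
  refine (((continuous_tentMass d).continuousOn.inv₀ fun z hz => ?_).smul
    hnum.continuousOn).congr fun z hz => tentAverage_eq_smul_integral d hz.1 v z.2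
  exact (tentMass_pos d hz.1 z.2).ne'

lemma continuous_tentAverage (hv : Continuous v) (ht : t ∈ Ioc (0 : ℝ) 1) :
    Continuous (tentAverage d t v) :=
  (continuousOn_tentAverage d hv).comp_continuous (f := fun x => (t, x)) (by fun_prop)
    fun _ => ⟨ht, mem_univ _⟩

variable [CompleteSpace E]

lemma norm_tentAverage_sub_le (hv : Continuous v) (ht : t ∈ Ioc (0 : ℝ) 1) {x : X} {w : E} {b : ℝ}
    (h : ∀ y ∈ Metric.ball x t, ‖v y - w‖ ≤ b) : ‖tentAverage d t v x - w‖ ≤ b := by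
  have := isProbabilityMeasure_tentMeasure d ht x
  have hsub : tentAverage d t v x - w = ∫ y, (v y - w) ∂(tentMeasure d t x) := by
    rw [integral_sub (integrable_of_continuous _ hv) (integrable_const w)]; simp [tentAverage]
  have hb : ∀ᵐ y ∂(tentMeasure d t x), ‖v y - w‖ ≤ b := by
    filter_upwards [ae_mem_ball_tentMeasure d ht x] with y hy using h y hy
  simpa [hsub] using norm_integral_le_of_norm_le_const hb

lemma norm_tentAverage_le (hv : Continuous v) (ht : t ∈ Ioc (0 : ℝ) 1) {b : ℝ}
    (h : ∀ y, ‖v y‖ ≤ b) (x : X) : ‖tentAverage d t v x‖ ≤ b := by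
  simpa using norm_tentAverage_sub_le d hv ht (x := x) (w := 0) fun y _ => by simpa using h y

end TentAverage

lemma dist_le_two_mul_of_mem_ball {X : Type*} [PseudoMetricSpace X] {t r : ℝ} {x y z : X}
    (hy : y ∈ Metric.ball x t) (hz : z ∈ Metric.ball x r) (hr : r ≤ t) : dist y z ≤ 2 * t := by
  rw [Metric.mem_ball] at hy hz
  linarith [dist_triangle_right y z x]

section TentAverageEstimates

section

variable (X : Type*) [MetricSpace X] [MeasurableSpace X] [BorelSpace X] (d : ℝ)
  [LowerAhlforsRegular d X]

/-- The constant in the comparison of averages at the scales `t` and `t / 6` with the energy in a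
ball of radius `t`. -/
def scaleConst : ℝ := (tentConst X d * 2 ^ d) ^ 2 * 6 ^ d

lemma scaleConst_pos : 0 < scaleConst X d := by
  have := tentConst_pos X d
  unfold scaleConst; positivity

end

variable {X : Type*} [MetricSpace X] [CompactSpace X] [MeasurableSpace X] [BorelSpace X] (d : ℝ)
  [IsFiniteMeasure (μH[d] : Measure X)] [LowerAhlforsRegular d X] {t : ℝ}
  {E : Type*} [NormedAddCommGroup E] [NormedSpace ℝ E]

lemma uniformEquicontinuous_tentAverage {ι : Type*} {v : ι → X → E} (hv : ∀ i, Continuous (v i))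
    {b : ℝ} (hb : ∀ i x, ‖v i x‖ ≤ b) (ht : t ∈ Ioc (0 : ℝ) 1) :
    UniformEquicontinuous fun i => tentAverage d t (v i) := by
  set k : X → X → ℝ := fun x y => (tentMass d t x)⁻¹ * tentKernel t x y with hk
  have hkc : Continuous fun z : X × X => k z.1 z.2 := by
    refine Continuous.mul (Continuous.inv₀ ?_ fun z => (tentMass_pos d ht z.1).ne') ?_
    · exact (continuous_tentMass d).comp (by fun_prop : Continuous fun z : X × X => (t, z.1))
    · exact continuous_tentKernel.comp (by fun_prop : Continuous fun z : X × X => ((t, z.1), z.2))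
  have havg : ∀ i x, tentAverage d t (v i) x = ∫ y, k x y • v i y ∂μH[d] := fun i x => by
    simp only [tentAverage_eq_smul_integral d ht, hk, ← integral_smul, smul_smul]
  have hint : ∀ i x, Integrable (fun y => k x y • v i y) μH[d] := fun i x =>
    integrable_of_continuous _ ((hkc.comp (by fun_prop : Continuous fun y => (x, y))).smul (hv i))
  rw [Metric.uniformEquicontinuous_iff]
  intro ε hε
  set M := (μH[d] : Measure X).real univ
  obtain ⟨r, hr, h⟩ := Metric.uniformContinuous_iff.1
    (CompactSpace.uniformContinuous_of_continuous hkc) (ε / (|b| * M + 1)) (by positivity)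
  refine ⟨r, hr, fun x x' hxx' i => ?_⟩
  rw [dist_eq_norm, havg, havg, ← integral_sub (hint i x) (hint i x')]
  have hpt : ∀ y, ‖k x y • v i y - k x' y • v i y‖ ≤ ε / (|b| * M + 1) * |b| := fun y => by
    rw [← sub_smul, norm_smul, ← dist_eq_norm]
    have hdist : dist (x, y) (x', y) < r := by simpa [Prod.dist_eq, hr] using hxx'
    exact mul_le_mul (h hdist).le ((hb i y).trans (le_abs_self b)) (norm_nonneg _) (by positivity)
  calc _ ≤ ε / (|b| * M + 1) * |b| * M :=
        norm_integral_le_of_norm_le_const (Eventually.of_forall hpt)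
    _ = ε * (|b| * M) / (|b| * M + 1) := by ring
    _ < ε := by rw [div_lt_iff₀ (by positivity)]; nlinarith

variable {p : ℝ}

lemma lintegral_tentMeasure_le_energyOn {G : Type*} [NormedAddCommGroup G] (hd : 0 ≤ d)
    (hp : 0 < p) (v : X → G) {t' D : ℝ}
    (ht : t ∈ Ioc (0 : ℝ) 1) (ht' : t' ∈ Ioc (0 : ℝ) 1) {x x' : X}
    (hD : ∀ y ∈ Metric.ball x t, ∀ z ∈ Metric.ball x' t', dist y z ≤ D) :
    ∫⁻ y, ∫⁻ z, ‖v y - v z‖ₑ ^ p ∂(tentMeasure d t' x') ∂(tentMeasure d t x) ≤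
      ENNReal.ofReal ((tentConst X d * D ^ d) ^ 2 / (t ^ d * t' ^ d)) *
        energyOn d p v (Metric.ball x t) (Metric.ball x' t') := by
  have hC := tentConst_pos X d
  have := ht.1
  have := ht'.1
  refine (lintegral_enorm_sub_rpow_le_energyOn hd hp v ENNReal.ofReal_ne_top measurableSet_ball
    measurableSet_ball (tentMeasure_le d ht x) (tentMeasure_le d ht' x') hD).trans (le_of_eq ?_)
  rw [← ENNReal.ofReal_mul (by positivity), ← ENNReal.ofReal_mul (by positivity)]
  congr 2
  field_simp

variable [CompleteSpace E] {v : X → E}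

lemma enorm_tentAverage_sub_rpow_le (hd : 0 ≤ d) (hp : 1 ≤ p) (hv : Continuous v) {t' D : ℝ}
    (ht : t ∈ Ioc (0 : ℝ) 1) (ht' : t' ∈ Ioc (0 : ℝ) 1) {x x' : X}
    (hD : ∀ y ∈ Metric.ball x t, ∀ z ∈ Metric.ball x' t', dist y z ≤ D) :
    ‖tentAverage d t v x - tentAverage d t' v x'‖ₑ ^ p ≤
      ENNReal.ofReal ((tentConst X d * D ^ d) ^ 2 / (t ^ d * t' ^ d)) *
        energyOn d p v (Metric.ball x t) (Metric.ball x' t') := by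
  have := isProbabilityMeasure_tentMeasure d ht x
  have := isProbabilityMeasure_tentMeasure d ht' x'
  exact (enorm_integral_sub_integral_rpow_le _ _ hp (integrable_of_continuous _ hv)
    (integrable_of_continuous _ hv)).trans
    (lintegral_tentMeasure_le_energyOn d hd (by linarith) v ht ht' hD)

lemma norm_tentAverage_sub_tentAverage_div_le (hd : 0 ≤ d) (hp : 1 ≤ p) (hv : Continuous v)
    (ht : t ∈ Ioc (0 : ℝ) 1) {x : X} {b : ℝ} (hb : 0 ≤ b)
    (hE : energyOn d p v (Metric.ball x t) univ ≤ ENNReal.ofReal b) :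
    ‖tentAverage d t v x - tentAverage d (t / 6) v x‖ ≤ (scaleConst X d * b) ^ p⁻¹ := by
  have ht0 := ht.1
  have hC := scaleConst_pos X d
  refine norm_le_rpow_inv_of_enorm_rpow_le (by linarith) (by positivity)
    ((enorm_tentAverage_sub_rpow_le d hd hp hv ht ⟨by positivity, by linarith [ht.2]⟩
      (D := 2 * t) fun y hy z hz => dist_le_two_mul_of_mem_ball hy hz (by linarith)).trans ?_)
  rw [ENNReal.ofReal_mul hC.le]
  refine mul_le_mul' (le_of_eq ?_) ((energyOn_mono d p v subset_rfl (subset_univ _)).trans hE)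
  rw [scaleConst, Real.div_rpow ht0.le (by norm_num), Real.mul_rpow (by norm_num) ht0.le]
  congr 1
  have := Real.rpow_pos_of_pos ht0 d
  field_simp

lemma one_sub_le_norm_tentAverage (hd : 0 ≤ d) (hp : 1 ≤ p) (hv : Continuous v)
    (hv1 : ∀ x, ‖v x‖ = 1) (ht : t ∈ Ioc (0 : ℝ) 1) {x : X} {b : ℝ} (hb : 0 ≤ b)
    (hE : energyOn d p v (Metric.ball x t) univ ≤ ENNReal.ofReal b) :
    1 - (scaleConst X d * b) ^ p⁻¹ ≤ ‖tentAverage d t v x‖ := by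
  have := isProbabilityMeasure_tentMeasure d ht x
  have ht0 := ht.1
  have hC := scaleConst_pos X d
  refine one_sub_le_norm_integral_of_lintegral_le _ hp (integrable_of_continuous _ hv) hv1
    (measurable_lintegral_enorm_sub_rpow p hv _).aemeasurable (by positivity)
    ((lintegral_tentMeasure_le_energyOn d hd (by linarith) v ht ht (D := 2 * t)
      fun y hy z hz => dist_le_two_mul_of_mem_ball hy hz le_rfl).trans ?_)
  rw [ENNReal.ofReal_mul hC.le]
  refine mul_le_mul' (ENNReal.ofReal_le_ofReal ?_)
    ((energyOn_mono d p v subset_rfl (subset_univ _)).trans hE)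
  have h6 : (1 : ℝ) ≤ 6 ^ d := Real.one_le_rpow (by norm_num) hd
  rw [scaleConst, Real.mul_rpow (by norm_num) ht0.le]
  have := Real.rpow_pos_of_pos ht0 d
  calc _ = (tentConst X d * 2 ^ d) ^ 2 * 1 := by field_simp
    _ ≤ _ := by gcongr

lemma exists_three_quarters_le_norm_tentAverage (X : Type*) [MetricSpace X] [CompactSpace X]
    [MeasurableSpace X] [BorelSpace X] [IsFiniteMeasure (μH[d] : Measure X)]
    [LowerAhlforsRegular d X] (E : Type*) [NormedAddCommGroup E] [NormedSpace ℝ E]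
    [CompleteSpace E] (hd : 0 ≤ d) (hp : 1 ≤ p) : ∃ ε : ℝ, 0 < ε ∧ ∀ v : X → E, Continuous v →
      (∀ x, ‖v x‖ = 1) → ∀ t ∈ Ioc (0 : ℝ) 1, ∀ x,
        energyOn d p v (Metric.ball x t) univ ≤ ENNReal.ofReal ε →
        3 / 4 ≤ ‖tentAverage d t v x‖ := by
  have hC := scaleConst_pos X d
  refine ⟨(1 / 4) ^ p / scaleConst X d, by positivity, fun v hv hv1 t ht x hE => ?_⟩
  have h := one_sub_le_norm_tentAverage d hd hp hv hv1 ht (by positivity) hE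
  rw [mul_div_cancel₀ _ hC.ne', Real.rpow_rpow_inv (by norm_num) (by linarith)] at h
  linarith

lemma lintegral_tentAverage_sub_le (hd : 0 ≤ d) (hp : 1 ≤ p) (hv : Continuous v)
    (ht : t ∈ Ioc (0 : ℝ) 1) :
    ∫⁻ x, ‖tentAverage d t v x - v x‖ₑ ^ p ∂μH[d] ≤
      ENNReal.ofReal (tentConst X d * t ^ d) * energyOn d p v univ univ := by
  have ht0 := ht.1
  rw [energyOn, ← lintegral_const_mul' _ _ ENNReal.ofReal_ne_top, setLIntegral_univ]
  refine lintegral_mono fun x => ?_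
  have := isProbabilityMeasure_tentMeasure d ht x
  have hball : ∫⁻ y in Metric.ball x t, ‖v y - v x‖ₑ ^ p ∂μH[d] ≤
      ENNReal.ofReal ((t ^ d) ^ 2) * ∫⁻ y in univ, energyDensity d p v x y ∂μH[d] := by
    rw [← lintegral_const_mul' _ _ ENNReal.ofReal_ne_top]
    refine (setLIntegral_mono' measurableSet_ball fun y hy => ?_).trans
      (lintegral_mono_set (subset_univ _))
    rw [enorm_sub_rev]
    exact enorm_sub_rpow_le_energyDensity d hd (by linarith) v (Metric.mem_ball'.1 hy).le
  calc _ ≤ ∫⁻ y, ‖v y - v x‖ₑ ^ p ∂(tentMeasure d t x) :=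
        enorm_integral_sub_rpow_le _ hp (integrable_of_continuous _ hv) _
    _ ≤ ENNReal.ofReal (tentConst X d / t ^ d) *
          ∫⁻ y in Metric.ball x t, ‖v y - v x‖ₑ ^ p ∂μH[d] := by
        rw [← smul_eq_mul, ← lintegral_smul_measure]
        exact lintegral_mono' (tentMeasure_le d ht x) le_rfl
    _ ≤ _ := mul_le_mul' le_rfl hball
    _ = _ := by
        rw [← mul_assoc, ← ENNReal.ofReal_mul (div_nonneg (tentConst_pos X d).le (by positivity))]
        congr 2
        have := Real.rpow_pos_of_pos ht0 d
        field_simp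

end TentAverageEstimates

section EpsilonRegularity

variable {X : Type*} [MetricSpace X] [CompactSpace X] [MeasurableSpace X] [BorelSpace X] (d : ℝ)
  [IsFiniteMeasure (μH[d] : Measure X)] [LowerAhlforsRegular d X] {m : ℕ} {u : X → Sph m}

lemma exists_homotopic_sphereProj_tentAverage (hu : Continuous u) : ∃ r > 0, ∀ t ∈ Ioc (0 : ℝ) 1,
    t ≤ r → Homotopic u fun x => sphereProj m (tentAverage d t (Subtype.val ∘ u) x) := by
  obtain ⟨r, hr, h⟩ := Metric.uniformContinuous_iff.1
    (CompactSpace.uniformContinuous_of_continuous hu) (1 / 2) (by norm_num)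
  have hv : Continuous (Subtype.val ∘ u) := continuous_subtype_val.comp hu
  refine ⟨r, hr, fun t ht htr => homotopic_sphereProj_of_norm_sub_lt_one hu
    (continuous_tentAverage d hv ht) fun x => ?_⟩
  rw [norm_sub_rev]
  refine (norm_tentAverage_sub_le d hv ht fun y hy => ?_).trans_lt (one_half_lt_one (α := ℝ))
  rw [← dist_eq_norm]
  exact (h ((Metric.mem_ball.1 hy).trans_le htr)).le

lemma homotopic_sphereProj_tentAverage (hu : Continuous u) {T : ℝ} (hT : T ∈ Ioc (0 : ℝ) 1)
    (h0 : ∀ t ∈ Ioc 0 T, ∀ x, tentAverage d t (Subtype.val ∘ u) x ≠ 0) :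
    Homotopic u fun x => sphereProj m (tentAverage d T (Subtype.val ∘ u) x) := by
  obtain ⟨r, hr, h⟩ := exists_homotopic_sphereProj_tentAverage d hu
  have hs : min r T ∈ Ioc 0 T := ⟨lt_min hr hT.1, min_le_right _ _⟩
  have hpath (σ : unitInterval) : AffineMap.lineMap (min r T) T (σ : ℝ) ∈ Ioc 0 T :=
    (convex_Ioc 0 T).lineMap_mem hs (right_mem_Ioc.2 hT.1) σ.2
  refine (h _ ⟨hs.1, hs.2.trans hT.2⟩ (min_le_left _ _)).trans
    ⟨fun z => sphereProj m (tentAverage d (AffineMap.lineMap (min r T) T (z.1 : ℝ))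
      (Subtype.val ∘ u) z.2), continuous_sphereProj_comp ?_ fun z => h0 _ (hpath z.1) z.2,
      by simp, by simp⟩
  refine (continuousOn_tentAverage d (continuous_subtype_val.comp hu)).comp_continuous
    (f := fun z : unitInterval × X => (AffineMap.lineMap (min r T) T (z.1 : ℝ), z.2)) ?_
    fun z => ⟨Ioc_subset_Ioc_right hT.2 (hpath z.1), mem_univ _⟩
  exact (AffineMap.lineMap_continuous.comp
    (continuous_subtype_val.comp continuous_fst)).prodMk continuous_snd

theorem exists_nullHomotopic_of_energyOn_le [Nonempty X] (m : ℕ) (hd : 0 ≤ d) {p : ℝ}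
    (hp : 1 ≤ p) : ∃ ε : ℝ, 0 < ε ∧ ∀ u : X → Sph m, Continuous u →
      energyOn d p u univ univ ≤ ENNReal.ofReal ε → NullHomotopic u := by
  have hp0 : 0 < p := by linarith
  set D := Metric.diam (univ : Set X)
  have hD : ∀ x y : X, dist x y ≤ D := fun x y =>
    Metric.dist_le_diam_of_mem isCompact_univ.isBounded (mem_univ x) (mem_univ y)
  obtain ⟨ε, hε, hlow⟩ :=
    exists_three_quarters_le_norm_tentAverage d X (Euc (m + 1)) hd hp
  set K := (tentConst X d * D ^ d) ^ 2 / (1 ^ d * 1 ^ d) + 1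
  have hK : 0 < K := by positivity
  refine ⟨min ε ((1 / 4) ^ p / K), by positivity, fun u hu hE => ?_⟩
  have hEε := hE.trans (ENNReal.ofReal_le_ofReal (min_le_left _ _))
  have hEK := hE.trans (ENNReal.ofReal_le_ofReal (min_le_right _ _))
  have hv : Continuous (Subtype.val ∘ u) := continuous_subtype_val.comp hu
  have hlow : ∀ t ∈ Ioc (0 : ℝ) 1, ∀ x, 3 / 4 ≤ ‖tentAverage d t (Subtype.val ∘ u) x‖ :=
    fun t ht x => hlow _ hv (fun x => by simp) t ht x
      ((energyOn_mono d p u (subset_univ _) subset_rfl).trans hEε)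
  have h1 : (1 : ℝ) ∈ Ioc (0 : ℝ) 1 := right_mem_Ioc.2 one_pos
  have hclose : ∀ x x', ‖tentAverage d 1 (Subtype.val ∘ u) x -
      tentAverage d 1 (Subtype.val ∘ u) x'‖ ≤ 1 / 4 := fun x x' => by
    refine (norm_le_rpow_inv_of_enorm_rpow_le hp0 (b := (1 / 4) ^ p) (by positivity) ?_).trans_eq
      (Real.rpow_rpow_inv (by norm_num) hp0.ne')
    refine (enorm_tentAverage_sub_rpow_le d hd hp hv h1 h1 fun y _ z _ => hD y z).trans
      (le_trans (mul_le_mul' (ENNReal.ofReal_le_ofReal ?_)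
        (energyOn_mono d p u (subset_univ _) (subset_univ _)))
        (ofReal_mul_le_ofReal_of_le_div hK hEK))
    exact le_add_of_nonneg_right zero_le_one
  refine ⟨_, (homotopic_sphereProj_tentAverage d hu h1 fun t ht x h0 => ?_).trans
    (homotopic_sphereProj_of_norm_sub_lt (continuous_tentAverage d hv h1)
      (continuous_const (y := tentAverage d 1 (Subtype.val ∘ u) (Classical.arbitrary X)))
      fun x => (hclose _ _).trans_lt (by linarith [hlow 1 h1 x]))⟩
  have := hlow t ht x
  rw [h0, norm_zero] at this
  norm_num at this

end EpsilonRegularity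

section AveragedComposition

variable {X Z G : Type*} [MetricSpace X] [NormedAddCommGroup G] {d p : ℝ}

lemma energyDensity_eq_mul_enorm_rpow (d : ℝ) (hp : 0 ≤ p) (v : X → G) (x y : X) :
    energyDensity d p v x y =
      ENNReal.ofReal (1 / dist x y ^ (2 * d)) * ‖v x - v y‖ₑ ^ p := by
  rw [← ofReal_norm, ENNReal.ofReal_rpow_of_nonneg (norm_nonneg _) hp,
    ← ENNReal.ofReal_mul (by positivity), energyDensity, dist_eq_norm, one_div_mul_eq_div]

section ChangeOfVariables

variable [MeasurableSpace X] [BorelSpace X] {K : NNReal}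

lemma setLIntegral_comp_le_of_antilipschitzWith (hd : 0 ≤ d) {ψ : X → X}
    (hψ : AntilipschitzWith K ψ) (hm : Measurable ψ) {A : Set X} (hψA : MapsTo ψ A A)
    {h : X → ℝ≥0∞} (hh : Measurable h) :
    ∫⁻ x in A, h (ψ x) ∂μH[d] ≤ (K : ℝ≥0∞) ^ d * ∫⁻ x in A, h x ∂μH[d] := by
  have hmap : ((μH[d] : Measure X).restrict A).map ψ ≤
      (K : ℝ≥0∞) ^ d • (μH[d] : Measure X).restrict A := by
    refine Measure.le_iff.2 fun s hs => ?_
    rw [Measure.map_apply hm hs, Measure.restrict_apply (hm hs), Measure.smul_apply,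
      Measure.restrict_apply hs, smul_eq_mul]
    exact (measure_mono fun x hx => (⟨hx.1, hψA hx.2⟩ : ψ x ∈ s ∩ A)).trans
      (hψ.hausdorffMeasure_preimage_le hd _)
  rw [← lintegral_map hh hm, ← smul_eq_mul, ← lintegral_smul_measure]
  exact lintegral_mono' hmap le_rfl

lemma lintegral_energyDensity_comp_le [SecondCountableTopology X] [SFinite (μH[d] : Measure X)]
    (hd : 0 ≤ d) {ψ : X → X} (hψ : AntilipschitzWith K ψ) (hm : Measurable ψ) {A : Set X}
    (hψA : MapsTo ψ A A) {f : X → G} (hf : Continuous f) :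
    ∫⁻ x in A, ∫⁻ y, energyDensity d p f (ψ x) (ψ y) ∂μH[d] ∂μH[d] ≤
      (K : ℝ≥0∞) ^ d * ((K : ℝ≥0∞) ^ d * energyOn d p f A univ) := by
  have hinner (x : X) : ∫⁻ y, energyDensity d p f (ψ x) (ψ y) ∂μH[d] ≤
      (K : ℝ≥0∞) ^ d * ∫⁻ y, energyDensity d p f (ψ x) y ∂μH[d] := by
    have hmeas : Measurable (energyDensity d p f (ψ x)) :=
      measurable_energyDensity_comp d p hf measurable_const measurable_id
    have := setLIntegral_comp_le_of_antilipschitzWith (A := univ)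
      (h := fun y => energyDensity d p f (ψ x) y) hd hψ hm (mapsTo_univ ψ univ) hmeas
    rwa [Measure.restrict_univ] at this
  have hK : (K : ℝ≥0∞) ^ d ≠ ∞ := ENNReal.rpow_ne_top_of_nonneg hd ENNReal.coe_ne_top
  have houter := setLIntegral_comp_le_of_antilipschitzWith hd hψ hm hψA
    (h := fun x => ∫⁻ y, energyDensity d p f x y ∂μH[d])
    (measurable_lintegral_energyDensity d p hf _)
  calc ∫⁻ x in A, ∫⁻ y, energyDensity d p f (ψ x) (ψ y) ∂μH[d] ∂μH[d]
      ≤ ∫⁻ x in A, (K : ℝ≥0∞) ^ d * ∫⁻ y, energyDensity d p f (ψ x) y ∂μH[d] ∂μH[d] :=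
        lintegral_mono hinner
    _ = (K : ℝ≥0∞) ^ d * ∫⁻ x in A, ∫⁻ y, energyDensity d p f (ψ x) y ∂μH[d] ∂μH[d] :=
        lintegral_const_mul' _ _ hK
    _ ≤ _ := by
        rw [energyOn, Measure.restrict_univ]
        gcongr

end ChangeOfVariables

variable [NormedSpace ℝ G] [MeasurableSpace Z] {P : Measure Z} [IsProbabilityMeasure P]
  {ψ : Z → X → X} {f : X → G} {L : NNReal}

lemma energyDensity_integral_comp_le (hd : 0 ≤ d) (hp : 1 ≤ p)
    (hL : ∀ᵐ z ∂P, LipschitzWith L (ψ z)) (hinj : ∀ᵐ z ∂P, Function.Injective (ψ z))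
    (hi : ∀ x, Integrable (fun z => f (ψ z x)) P) (x y : X) :
    energyDensity d p (fun x => ∫ z, f (ψ z x) ∂P) x y ≤
      (L : ℝ≥0∞) ^ (2 * d) * ∫⁻ z, energyDensity d p f (ψ z x) (ψ z y) ∂P := by
  have hp0 : 0 < p := by linarith
  rcases eq_or_ne x y with rfl | hxy
  · simp [energyDensity, Real.zero_rpow hp0.ne']
  have hweight : ∀ᵐ z ∂P, ENNReal.ofReal (1 / dist x y ^ (2 * d)) ≤
      (L : ℝ≥0∞) ^ (2 * d) * ENNReal.ofReal (1 / dist (ψ z x) (ψ z y) ^ (2 * d)) := by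
    filter_upwards [hL, hinj] with z hLz hz
    have hψ : 0 < dist (ψ z x) (ψ z y) := dist_pos.2 fun h => hxy (hz h)
    have hdist : 0 < dist x y := dist_pos.2 hxy
    rw [← ENNReal.ofReal_coe_nnreal, ENNReal.ofReal_rpow_of_nonneg L.coe_nonneg (by positivity),
      ← ENNReal.ofReal_mul (by positivity), mul_one_div]
    apply ENNReal.ofReal_le_ofReal
    rw [div_le_div_iff₀ (by positivity) (by positivity), one_mul,
      ← Real.mul_rpow L.coe_nonneg hdist.le]
    gcongr
    exact hLz.dist_le_mul x y
  have hLtop : (L : ℝ≥0∞) ^ (2 * d) ≠ ∞ :=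
    ENNReal.rpow_ne_top_of_nonneg (by positivity) ENNReal.coe_ne_top
  rw [energyDensity_eq_mul_enorm_rpow d hp0.le, ← integral_sub (hi x) (hi y)]
  refine (mul_le_mul' le_rfl
    (enorm_integral_rpow_le_lintegral P hp ((hi x).sub (hi y)).1)).trans ?_
  rw [← lintegral_const_mul' _ _ ENNReal.ofReal_ne_top, ← lintegral_const_mul' _ _ hLtop]
  refine lintegral_mono_ae (hweight.mono fun z hz => ?_)
  rw [energyDensity_eq_mul_enorm_rpow d hp0.le, ← mul_assoc]
  exact mul_le_mul' hz le_rfl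

variable [MeasurableSpace X] [BorelSpace X] {K : NNReal} [SFinite (μH[d] : Measure X)]
  [TopologicalSpace Z] [SecondCountableTopology Z] [BorelSpace Z]

lemma lintegral_enorm_integral_comp_sub_rpow_le [CompleteSpace G] (hd : 0 ≤ d) (hp : 1 ≤ p)
    (hψc : Continuous fun q : Z × X => ψ q.1 q.2) (hK : ∀ᵐ z ∂P, AntilipschitzWith K (ψ z))
    {A : Set X} (hψA : ∀ᵐ z ∂P, MapsTo (ψ z) A A) (hf : Continuous f)
    (hi : ∀ x, Integrable (fun z => f (ψ z x)) P) (c : G) :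
    ∫⁻ x in A, ‖(∫ z, f (ψ z x) ∂P) - c‖ₑ ^ p ∂μH[d] ≤
      (K : ℝ≥0∞) ^ d * ∫⁻ x in A, ‖f x - c‖ₑ ^ p ∂μH[d] := by
  have hmeas : Measurable fun x => ‖f x - c‖ₑ ^ p :=
    (hf.sub continuous_const).enorm.measurable.pow_const p
  calc ∫⁻ x in A, ‖(∫ z, f (ψ z x) ∂P) - c‖ₑ ^ p ∂μH[d]
      ≤ ∫⁻ x in A, ∫⁻ z, ‖f (ψ z x) - c‖ₑ ^ p ∂P ∂μH[d] :=
        lintegral_mono fun x => enorm_integral_sub_rpow_le P hp (hi x) c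
    _ = ∫⁻ z, ∫⁻ x in A, ‖f (ψ z x) - c‖ₑ ^ p ∂μH[d] ∂P :=
        lintegral_lintegral_swap
          (hmeas.comp (hψc.comp continuous_swap).measurable).aemeasurable
    _ ≤ ∫⁻ _, (K : ℝ≥0∞) ^ d * ∫⁻ x in A, ‖f x - c‖ₑ ^ p ∂μH[d] ∂P := by
        refine lintegral_mono_ae ?_
        filter_upwards [hK, hψA] with z hKz hz
        exact setLIntegral_comp_le_of_antilipschitzWith hd hKz
          (hψc.comp (Continuous.prodMk_right z)).measurable hz hmeas
    _ = _ := by rw [lintegral_const, measure_univ, mul_one]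

variable [SecondCountableTopology X]

/-- Jensen's inequality, followed by a change of variables in each map. -/
theorem energyOn_integral_comp_le (hd : 0 ≤ d) (hp : 1 ≤ p)
    (hψc : Continuous fun q : Z × X => ψ q.1 q.2) (hL : ∀ᵐ z ∂P, LipschitzWith L (ψ z))
    (hK : ∀ᵐ z ∂P, AntilipschitzWith K (ψ z)) {A : Set X}
    (hψA : ∀ᵐ z ∂P, MapsTo (ψ z) A A) (hf : Continuous f)
    (hi : ∀ x, Integrable (fun z => f (ψ z x)) P) :
    energyOn d p (fun x => ∫ z, f (ψ z x) ∂P) A univ ≤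
      (L : ℝ≥0∞) ^ (2 * d) * ((K : ℝ≥0∞) ^ d * ((K : ℝ≥0∞) ^ d * energyOn d p f A univ)) := by
  set D : Z → X → X → ℝ≥0∞ := fun z x y => energyDensity d p f (ψ z x) (ψ z y)
  have hD {T : Type _} [MeasurableSpace T] {a : T → Z} {b c : T → X} (ha : Measurable a)
      (hb : Measurable b) (hc : Measurable c) : Measurable fun q => D (a q) (b q) (c q) := by
    have hψm := hψc.measurable
    exact measurable_energyDensity_comp d p hf (hψm.comp (ha.prodMk hb)) (hψm.comp (ha.prodMk hc))
  have hLtop : (L : ℝ≥0∞) ^ (2 * d) ≠ ∞ :=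
    ENNReal.rpow_ne_top_of_nonneg (by positivity) ENNReal.coe_ne_top
  calc energyOn d p (fun x => ∫ z, f (ψ z x) ∂P) A univ
      ≤ ∫⁻ x in A, ∫⁻ y, (L : ℝ≥0∞) ^ (2 * d) * ∫⁻ z, D z x y ∂P ∂μH[d] ∂μH[d] := by
        rw [energyOn, Measure.restrict_univ]
        exact lintegral_mono fun x => lintegral_mono fun y =>
          energyDensity_integral_comp_le hd hp hL (hK.mono fun z hz => hz.injective) hi x y
    _ = (L : ℝ≥0∞) ^ (2 * d) * ∫⁻ x in A, ∫⁻ z, ∫⁻ y, D z x y ∂μH[d] ∂P ∂μH[d] := by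
        simp_rw [lintegral_const_mul' _ _ hLtop]
        refine congrArg _ (lintegral_congr fun x => lintegral_lintegral_swap ?_)
        exact (hD (T := X × Z) measurable_snd measurable_const measurable_fst).aemeasurable
    _ = (L : ℝ≥0∞) ^ (2 * d) * ∫⁻ z, ∫⁻ x in A, ∫⁻ y, D z x y ∂μH[d] ∂μH[d] ∂P := by
        refine congrArg _ (lintegral_lintegral_swap ?_)
        exact (hD (T := (X × Z) × X) (measurable_snd.comp measurable_fst)
          (measurable_fst.comp measurable_fst) measurable_snd).lintegral_prod_right'.aemeasurable
    _ ≤ (L : ℝ≥0∞) ^ (2 * d) *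
          ∫⁻ _, (K : ℝ≥0∞) ^ d * ((K : ℝ≥0∞) ^ d * energyOn d p f A univ) ∂P := by
        gcongr 1
        refine lintegral_mono_ae ?_
        filter_upwards [hK, hψA] with z hKz hz
        exact lintegral_energyDensity_comp_le hd hKz
          (hψc.comp (Continuous.prodMk_right z)).measurable hz hf
    _ = _ := by rw [lintegral_const, measure_univ, mul_one]

end AveragedComposition

section Shell

variable {n : ℕ}

/-- The spherical shell `1 < ‖x‖ < 3`, in which maps are flattened to a constant. -/
def shell (n : ℕ) : Set (Euc n) := {x | 1 < ‖x‖ ∧ ‖x‖ < 3}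

lemma isOpen_shell : IsOpen (shell n) :=
  (isOpen_lt continuous_const continuous_norm).inter (isOpen_lt continuous_norm continuous_const)

lemma measurableSet_shell : MeasurableSet (shell n) := isOpen_shell.measurableSet

lemma measure_shell_ne_top : μH[n] (shell n) ≠ ∞ := by
  refine ne_top_of_le_ne_top (measure_ball_lt_top (x := (0 : Euc n)) (r := 3)).ne
    (measure_mono fun x hx => ?_)
  simpa using hx.2

lemma exists_norm_eq_two (hn : 1 ≤ n) : ∃ x : Euc n, ‖x‖ = 2 :=
  ⟨EuclideanSpace.single ⟨0, hn⟩ 2, by simp⟩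

lemma measure_shell_ne_zero (hn : 1 ≤ n) : μH[n] (shell n) ≠ 0 := by
  obtain ⟨x, hx⟩ := exists_norm_eq_two hn
  exact (isOpen_shell.measure_pos _ ⟨x, by constructor <;> linarith⟩).ne'

lemma dist_le_six_of_mem_shell {x y : Euc n} (hx : x ∈ shell n) (hy : y ∈ shell n) :
    dist x y ≤ 6 := by
  linarith [dist_le_norm_add_norm x y, hx.2, hy.2]

/-- The averaging scale at `x`. It is positive exactly in the shell, and the ball of this radius
around a point of the shell stays in the shell. -/
def shellRadius (x : Euc n) : ℝ := 2⁻¹ * max 0 (1 - |‖x‖ - 2|)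

lemma continuous_shellRadius : Continuous (shellRadius (n := n)) := by
  unfold shellRadius
  fun_prop

lemma shellRadius_nonneg (x : Euc n) : 0 ≤ shellRadius x := by
  unfold shellRadius
  positivity

lemma mem_shell_iff {x : Euc n} : x ∈ shell n ↔ |‖x‖ - 2| < 1 := by
  rw [abs_lt, shell, mem_ofPred_eq]
  constructor <;> rintro ⟨h, h'⟩ <;> constructor <;> linarith

lemma shellRadius_of_mem {x : Euc n} (hx : x ∈ shell n) :
    shellRadius x = 2⁻¹ * (1 - |‖x‖ - 2|) := by
  rw [shellRadius, max_eq_right (by linarith [mem_shell_iff.1 hx])]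

lemma shellRadius_of_notMem {x : Euc n} (hx : x ∉ shell n) : shellRadius x = 0 := by
  rw [mem_shell_iff, not_lt] at hx
  rw [shellRadius, max_eq_left (by linarith), mul_zero]

lemma shellRadius_pos {x : Euc n} (hx : x ∈ shell n) : 0 < shellRadius x := by
  rw [shellRadius_of_mem hx]
  linarith [mem_shell_iff.1 hx]

lemma abs_shellRadius_sub_le (x y : Euc n) :
    |shellRadius x - shellRadius y| ≤ 2⁻¹ * dist x y := by
  rw [shellRadius, shellRadius, ← mul_sub, abs_mul, abs_of_pos (by norm_num)]
  gcongr
  calc |max 0 (1 - |‖x‖ - 2|) - max 0 (1 - |‖y‖ - 2|)|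
      ≤ |(1 - |‖x‖ - 2|) - (1 - |‖y‖ - 2|)| := by
        simpa only [max_comm] using abs_max_sub_max_le_abs (1 - |‖x‖ - 2|) (1 - |‖y‖ - 2|) 0
    _ = |(|‖y‖ - 2|) - (|‖x‖ - 2|)| := by rw [sub_sub_sub_cancel_left]
    _ ≤ |(‖y‖ - 2) - (‖x‖ - 2)| := abs_abs_sub_abs_le _ _
    _ = |‖y‖ - ‖x‖| := by rw [sub_sub_sub_cancel_right]
    _ ≤ dist x y := by
      rw [dist_comm, dist_eq_norm]
      exact abs_norm_sub_norm_le y x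

lemma mem_shell_of_dist_le {x y : Euc n} (hx : x ∈ shell n) (h : dist y x ≤ shellRadius x) :
    y ∈ shell n := by
  have hnorm : |‖y‖ - ‖x‖| ≤ dist y x := by
    rw [dist_eq_norm]
    exact abs_norm_sub_norm_le y x
  have htriangle := abs_sub_le ‖y‖ ‖x‖ 2
  rw [shellRadius_of_mem hx] at h
  rw [mem_shell_iff] at hx ⊢
  linarith

lemma ball_subset_shell {x : Euc n} (hx : x ∈ shell n) {σ : ℝ} (hσ : σ ≤ 1) :
    Metric.ball x (σ * shellRadius x) ⊆ shell n := fun _ hy =>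
  mem_shell_of_dist_le hx
    ((Metric.mem_ball.1 hy).le.trans (mul_le_of_le_one_left (shellRadius_nonneg x) hσ))

/-- The perturbation `x ↦ x + r(x) z` of the identity, supported in the shell. -/
def shellMap (z x : Euc n) : Euc n := x + shellRadius x • z

lemma continuous_shellMap : Continuous fun q : Euc n × Euc n => shellMap q.1 q.2 := by
  have := continuous_shellRadius (n := n)
  unfold shellMap
  fun_prop

lemma mapsTo_shellMap {z : Euc n} (hz : ‖z‖ ≤ 1) : MapsTo (shellMap z) (shell n) (shell n) := by
  refine fun x hx => mem_shell_of_dist_le hx ?_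
  rw [shellMap, dist_self_add_left, norm_smul, Real.norm_of_nonneg (shellRadius_nonneg x)]
  exact mul_le_of_le_one_right (shellRadius_nonneg x) hz

lemma norm_shellMap_sub_sub_le {z : Euc n} (hz : ‖z‖ ≤ 1) (x y : Euc n) :
    ‖(shellMap z x - shellMap z y) - (x - y)‖ ≤ 2⁻¹ * dist x y := by
  have hdiff : (shellMap z x - shellMap z y) - (x - y) = (shellRadius x - shellRadius y) • z := by
    unfold shellMap
    module
  rw [hdiff, norm_smul]
  exact (mul_le_of_le_one_right (norm_nonneg _) hz).trans (abs_shellRadius_sub_le x y)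

lemma lipschitzWith_shellMap {z : Euc n} (hz : ‖z‖ ≤ 1) : LipschitzWith (3 / 2) (shellMap z) := by
  refine LipschitzWith.of_dist_le_mul fun x y => ?_
  have h := norm_sub_norm_le (shellMap z x - shellMap z y) (x - y)
  rw [← dist_eq_norm, ← dist_eq_norm] at h
  rw [NNReal.coe_div, NNReal.coe_ofNat, NNReal.coe_ofNat]
  linarith [norm_shellMap_sub_sub_le hz x y]

lemma antilipschitzWith_shellMap {z : Euc n} (hz : ‖z‖ ≤ 1) :
    AntilipschitzWith 2 (shellMap z) := by
  refine AntilipschitzWith.of_le_mul_dist fun x y => ?_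
  have h := norm_sub_norm_le (x - y) (shellMap z x - shellMap z y)
  rw [← dist_eq_norm, ← dist_eq_norm, norm_sub_rev] at h
  rw [NNReal.coe_ofNat]
  linarith [norm_shellMap_sub_sub_le hz x y]

end Shell

section UniformMeasure

lemma isProbabilityMeasure_cond_ball {E : Type*} [MeasurableSpace E] [PseudoMetricSpace E]
    [ProperSpace E] (μ : Measure E) [μ.IsOpenPosMeasure] [IsFiniteMeasureOnCompacts μ] (x : E)
    {r : ℝ} (hr : 0 < r) : IsProbabilityMeasure (μ[|Metric.ball x r]) :=
  cond_isProbabilityMeasure_of_finite (Metric.measure_ball_pos μ x hr).ne' measure_ball_lt_top.ne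

variable {E : Type*} [NormedAddCommGroup E] [NormedSpace ℝ E] [FiniteDimensional ℝ E]
  [MeasurableSpace E] [BorelSpace E] (μ : Measure E) [μ.IsAddHaarMeasure]

lemma map_cond_ball (x : E) {r : ℝ} (hr : 0 < r) :
    (μ[|Metric.ball 0 1]).map (fun z => x + r • z) = μ[|Metric.ball x r] := by
  have hm : Measurable fun z : E => x + r • z := (by fun_prop : Continuous _).measurable
  have hr0 : ENNReal.ofReal (r ^ Module.finrank ℝ E) ≠ 0 := by positivity
  ext s hs
  have hpre : Metric.ball 0 1 ∩ (fun z : E => x + r • z) ⁻¹' s =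
      (fun z => r • z) ⁻¹' ((fun z => x + z) ⁻¹' (Metric.ball x r ∩ s)) := by
    ext z
    simp only [mem_inter_iff, mem_preimage, Metric.mem_ball, dist_self_add_left, dist_zero_right,
      norm_smul, Real.norm_of_nonneg hr.le, mul_lt_iff_lt_one_right hr]
  rw [Measure.map_apply hm hs, cond_apply measurableSet_ball, cond_apply measurableSet_ball,
    hpre, Measure.addHaar_preimage_smul _ hr.ne', measure_preimage_add,
    Measure.addHaar_ball_of_pos _ x hr,
      ENNReal.mul_inv (.inl hr0) (.inl ENNReal.ofReal_ne_top), abs_of_nonneg (by positivity),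
    ENNReal.ofReal_inv_of_pos (by positivity)]
  ring

end UniformMeasure

section ShellAverage

variable {n : ℕ} {G : Type*} [NormedAddCommGroup G]

lemma integrable_of_continuous_of_norm_le {X : Type*} [TopologicalSpace X] [MeasurableSpace X]
    [OpensMeasurableSpace X] [SecondCountableTopology X] {P : Measure X} [IsFiniteMeasure P]
    {f : X → G} (hf : Continuous f) {b : ℝ} (hb : ∀ x, ‖f x‖ ≤ b) : Integrable f P :=
  Integrable.of_bound hf.aestronglyMeasurable b (Eventually.of_forall hb)

instance : IsProbabilityMeasure ((μH[n] : Measure (Euc n))[|Metric.ball 0 1]) :=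
  isProbabilityMeasure_cond_ball _ 0 one_pos

lemma ae_norm_le_one : ∀ᵐ z ∂(μH[n] : Measure (Euc n))[|Metric.ball 0 1], ‖z‖ ≤ 1 :=
  (ae_cond_mem measurableSet_ball).mono fun _ hz => (mem_ball_zero_iff.1 hz).le

variable {f : Euc n → G} {b p : ℝ}

lemma integrable_comp_shellMap (hf : Continuous f) (hb : ∀ x, ‖f x‖ ≤ b) (x : Euc n) :
    Integrable (fun z => f (shellMap z x)) (μH[n] : Measure (Euc n))[|Metric.ball 0 1] :=
  integrable_of_continuous_of_norm_le
    (hf.comp (continuous_shellMap.comp (Continuous.prodMk_left x))) fun _ => hb _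

variable [NormedSpace ℝ G]

/-- The average of `f` over the ball of radius `σ r(x)` around `x`, where `r = shellRadius`. It
interpolates between `f` (for `σ = 0`, or outside the shell) and a regularisation of `f` in the
shell. -/
def shellAverage (σ : ℝ) (f : Euc n → G) (x : Euc n) : G :=
  ∫ z, f (shellMap (σ • z) x) ∂(μH[n] : Measure (Euc n))[|Metric.ball 0 1]

/-- The mean of `f` over the shell. -/
def shellMean (f : Euc n → G) : G := ∫ x, f x ∂(μH[n] : Measure (Euc n))[|shell n]

lemma isProbabilityMeasure_cond_shell (hn : 1 ≤ n) :
    IsProbabilityMeasure ((μH[n] : Measure (Euc n))[|shell n]) :=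
  cond_isProbabilityMeasure_of_finite (measure_shell_ne_zero hn) measure_shell_ne_top

lemma shellAverage_of_notMem [CompleteSpace G] (σ : ℝ) (f : Euc n → G) {x : Euc n}
    (hx : x ∉ shell n) : shellAverage σ f x = f x := by
  simp [shellAverage, shellMap, shellRadius_of_notMem hx]

lemma shellAverage_zero [CompleteSpace G] (f : Euc n → G) (x : Euc n) :
    shellAverage 0 f x = f x := by
  simp [shellAverage, shellMap]

lemma shellAverage_one (f : Euc n → G) : shellAverage 1 f =
    fun x => ∫ z, f (shellMap z x) ∂(μH[n] : Measure (Euc n))[|Metric.ball 0 1] := by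
  funext x
  simp only [shellAverage, one_smul]

lemma continuous_shellAverage (hf : Continuous f) (hb : ∀ x, ‖f x‖ ≤ b) :
    Continuous fun q : ℝ × Euc n => shellAverage q.1 f q.2 := by
  have hmap : Continuous fun q : (ℝ × Euc n) × Euc n => shellMap (q.1.1 • q.2) q.1.2 :=
    continuous_shellMap.comp (by fun_prop : Continuous fun q : (ℝ × Euc n) × Euc n =>
      (q.1.1 • q.2, q.1.2))
  refine continuous_of_dominated (bound := fun _ => b) (fun q => ?_)
    (fun q => Eventually.of_forall fun z => hb _) (integrable_const _)
    (Eventually.of_forall fun z => hf.comp (hmap.comp (Continuous.prodMk_left z)))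
  exact (hf.comp (hmap.comp (Continuous.prodMk_right q))).aestronglyMeasurable

lemma continuous_shellAverage_one (hf : Continuous f) (hb : ∀ x, ‖f x‖ ≤ b) :
    Continuous (shellAverage 1 f) :=
  (continuous_shellAverage hf hb).comp (Continuous.prodMk_right 1)

lemma shellAverage_eq_integral_cond_ball (hf : Continuous f) {σ : ℝ} (hσ : 0 < σ) {x : Euc n}
    (hx : x ∈ shell n) : shellAverage σ f x =
      ∫ y, f y ∂(μH[n] : Measure (Euc n))[|Metric.ball x (σ * shellRadius x)] := by
  have hm : Measurable fun z : Euc n => x + (σ * shellRadius x) • z :=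
    (by fun_prop : Continuous _).measurable
  rw [← map_cond_ball _ x (mul_pos hσ (shellRadius_pos hx)),
    integral_map hm.aemeasurable hf.aestronglyMeasurable]
  simp only [shellAverage, shellMap, smul_smul, mul_comm]

theorem energyOn_shellAverage_le (hp : 1 ≤ p) (hf : Continuous f) (hb : ∀ x, ‖f x‖ ≤ b) :
    energyOn n p (shellAverage 1 f) (shell n) univ ≤ 9 ^ n * energyOn n p f (shell n) univ := by
  have hconst : ((3 / 2 : NNReal) : ℝ≥0∞) ^ (2 * n : ℝ) *
      (((2 : NNReal) : ℝ≥0∞) ^ (n : ℝ) * ((2 : NNReal) : ℝ≥0∞) ^ (n : ℝ)) = 9 ^ n := by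
    rw [ENNReal.rpow_mul, ENNReal.rpow_natCast, ENNReal.rpow_natCast, ENNReal.rpow_ofNat,
      ← mul_pow, ← mul_pow]
    norm_cast
    norm_num
  have h := energyOn_integral_comp_le (d := n) (ψ := shellMap) n.cast_nonneg hp
    continuous_shellMap (ae_norm_le_one.mono fun z => lipschitzWith_shellMap)
    (ae_norm_le_one.mono fun z => antilipschitzWith_shellMap)
    (ae_norm_le_one.mono fun z => mapsTo_shellMap) hf (integrable_comp_shellMap hf hb)
  rw [← mul_assoc (_ ^ (n : ℝ)), ← mul_assoc, hconst] at h
  rwa [shellAverage_one]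

lemma enorm_sub_shellMean_rpow_le [CompleteSpace G] (hn : 1 ≤ n) (hp : 1 ≤ p)
    (hf : Continuous f) (hb : ∀ x, ‖f x‖ ≤ b) (x : Euc n) :
    ‖f x - shellMean f‖ₑ ^ p ≤
      (μH[n] (shell n))⁻¹ * ∫⁻ y in shell n, ‖f x - f y‖ₑ ^ p ∂μH[n] := by
  have := isProbabilityMeasure_cond_shell hn
  rw [enorm_sub_rev, ← smul_eq_mul, ← lintegral_smul_measure]
  simp only [enorm_sub_rev (f x)]
  exact enorm_integral_sub_rpow_le _ hp (integrable_of_continuous_of_norm_le hf hb) _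

lemma setLIntegral_enorm_sub_shellMean_rpow_le [CompleteSpace G] (hn : 1 ≤ n) (hp : 1 ≤ p)
    (hf : Continuous f) (hb : ∀ x, ‖f x‖ ≤ b) {S : Set (Euc n)} (hS : MeasurableSet S) {D : ℝ}
    (hD : ∀ x ∈ S, ∀ y ∈ shell n, dist x y ≤ D) :
    ∫⁻ x in S, ‖f x - shellMean f‖ₑ ^ p ∂μH[n] ≤
      (μH[n] (shell n))⁻¹ * (ENNReal.ofReal ((D ^ n) ^ 2) * energyOn n p f S (shell n)) := by
  refine (lintegral_mono (enorm_sub_shellMean_rpow_le hn hp hf hb)).trans ?_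
  rw [lintegral_const_mul' _ _ (ENNReal.inv_ne_top.2 (measure_shell_ne_zero hn))]
  gcongr
  have h := lintegral_enorm_sub_rpow_le_energyOn (d := n) n.cast_nonneg (by linarith) f
    ENNReal.one_ne_top hS measurableSet_shell (one_smul ℝ≥0∞ (μH[n].restrict S)).ge
    (one_smul ℝ≥0∞ (μH[n].restrict (shell n))).ge hD
  rwa [mul_one, mul_one, Real.rpow_natCast] at h

lemma setLIntegral_enorm_shellAverage_sub_shellMean_rpow_le [CompleteSpace G]
    (hn : 1 ≤ n) (hp : 1 ≤ p) (hf : Continuous f) (hb : ∀ x, ‖f x‖ ≤ b) :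
    ∫⁻ x in shell n, ‖shellAverage 1 f x - shellMean f‖ₑ ^ p ∂μH[n] ≤
      2 ^ n * ((μH[n] (shell n))⁻¹ *
        (ENNReal.ofReal ((6 ^ n) ^ 2) * energyOn n p f (shell n) univ)) := by
  have h := lintegral_enorm_integral_comp_sub_rpow_le (d := n) (ψ := shellMap) n.cast_nonneg hp
    continuous_shellMap (ae_norm_le_one.mono fun z => antilipschitzWith_shellMap)
    (ae_norm_le_one.mono fun z => mapsTo_shellMap) hf (integrable_comp_shellMap hf hb)
    (shellMean f)
  rw [shellAverage_one]
  refine h.trans ?_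
  rw [ENNReal.rpow_natCast, ENNReal.coe_ofNat]
  gcongr
  refine (setLIntegral_enorm_sub_shellMean_rpow_le hn hp hf hb measurableSet_shell
    fun x hx y hy => dist_le_six_of_mem_shell hx hy).trans ?_
  gcongr
  exact energyOn_mono n p f subset_rfl (subset_univ _)

end ShellAverage

section ShellRegularity

lemma exists_pos_mul_ofReal_le {C : ℝ≥0∞} (hC : C ≠ ∞) {b : ℝ} (hb : 0 < b) :
    ∃ ε : ℝ, 0 < ε ∧ C * ENNReal.ofReal ε ≤ ENNReal.ofReal b := by
  have hpos : 0 < C.toReal + 1 := by positivity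
  refine ⟨b / (C.toReal + 1), div_pos hb hpos, ?_⟩
  calc C * ENNReal.ofReal (b / (C.toReal + 1))
      ≤ ENNReal.ofReal (C.toReal + 1) * ENNReal.ofReal (b / (C.toReal + 1)) := by
        gcongr
        rw [ENNReal.le_ofReal_iff_toReal_le hC hpos.le]
        linarith
    _ ≤ ENNReal.ofReal b := ofReal_mul_le_ofReal_of_le_div hpos le_rfl

variable {n : ℕ} {G : Type*} [NormedAddCommGroup G] {f : Euc n → G} {p : ℝ}

lemma cond_ball_le_smul_restrict {ρ r : ℝ} (hρ : 0 < ρ) (h : ρ ≤ r) (x : Euc n) :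
    (μH[n] : Measure (Euc n))[|Metric.ball x r] ≤
      (ENNReal.ofReal (ρ ^ n) * μH[n] (Metric.ball (0 : Euc n) 1))⁻¹ •
        (μH[n] : Measure (Euc n)).restrict (Metric.ball x r) := by
  rw [ProbabilityTheory.cond]
  gcongr
  rw [Measure.addHaar_ball_of_pos _ _ (hρ.trans_le h), finrank_euclideanSpace_fin]
  gcongr

lemma lintegral_cond_ball_enorm_sub_rpow_le (hp : 0 < p) (f : Euc n → G) (x : Euc n) {r : ℝ}
    (hr : 0 < r) :
    ∫⁻ y, ∫⁻ z, ‖f y - f z‖ₑ ^ p ∂(μH[n] : Measure (Euc n))[|Metric.ball x r]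
        ∂(μH[n] : Measure (Euc n))[|Metric.ball x r] ≤
      ((2 ^ n * (μH[n] (Metric.ball (0 : Euc n) 1))⁻¹) ^ 2) *
        energyOn n p f (Metric.ball x r) (Metric.ball x r) := by
  have hr0 : ENNReal.ofReal (r ^ n) ≠ 0 := (ENNReal.ofReal_pos.2 (by positivity)).ne'
  have hA : (ENNReal.ofReal (r ^ n) * μH[n] (Metric.ball (0 : Euc n) 1))⁻¹ =
      (ENNReal.ofReal (r ^ n))⁻¹ * (μH[n] (Metric.ball (0 : Euc n) 1))⁻¹ :=
    ENNReal.mul_inv (.inl hr0) (.inl ENNReal.ofReal_ne_top)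
  have h := lintegral_enorm_sub_rpow_le_energyOn (d := n) n.cast_nonneg hp f
    (ENNReal.inv_ne_top.2 (mul_ne_zero hr0 (Metric.measure_ball_pos _ _ one_pos).ne'))
    measurableSet_ball measurableSet_ball (cond_ball_le_smul_restrict hr le_rfl x)
    (cond_ball_le_smul_restrict hr le_rfl x)
    fun y hy z hz => dist_le_two_mul_of_mem_ball hy hz le_rfl
  refine h.trans_eq (congrArg (· * _) ?_)
  rw [hA, Real.rpow_natCast, mul_pow 2, mul_pow, ENNReal.ofReal_mul (by positivity),
    ENNReal.ofReal_pow (p := r ^ n) (by positivity),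
    ENNReal.ofReal_pow (p := 2 ^ n) (by positivity), ENNReal.ofReal_pow zero_le_two,
    ENNReal.ofReal_ofNat]
  have hcancel : ENNReal.ofReal (r ^ n) * (ENNReal.ofReal (r ^ n))⁻¹ = 1 :=
    ENNReal.mul_inv_cancel hr0 ENNReal.ofReal_ne_top
  calc _ = (ENNReal.ofReal (r ^ n) * (ENNReal.ofReal (r ^ n))⁻¹) ^ 2 *
        (2 ^ n * (μH[n] (Metric.ball (0 : Euc n) 1))⁻¹) ^ 2 := by ring
    _ = _ := by rw [hcancel, one_pow, one_mul]

variable [NormedSpace ℝ G]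

/-- A map into the unit sphere is nearly constant on the shell if its averages there stay away
from the origin and its regularisation is close to its mean in the middle of the shell. -/
structure NearlyConstantOnShell (f : Euc n → G) : Prop where
  le_norm_shellAverage : ∀ σ ∈ Icc (0 : ℝ) 1, ∀ x, 3 / 4 ≤ ‖shellAverage σ f x‖
  norm_shellAverage_sub_shellMean_le : ∀ x : Euc n, ‖x‖ ∈ Icc (3 / 2 : ℝ) (5 / 2) →
    ‖shellAverage 1 f x - shellMean f‖ ≤ 1 / 4

lemma NearlyConstantOnShell.half_le_norm_shellMean (hf : NearlyConstantOnShell f) (hn : 1 ≤ n) :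
    1 / 2 ≤ ‖shellMean f‖ := by
  obtain ⟨x, hx⟩ := exists_norm_eq_two hn
  have hclose := hf.norm_shellAverage_sub_shellMean_le x (by rw [hx]; norm_num)
  have hlow := hf.le_norm_shellAverage 1 (right_mem_Icc.2 zero_le_one) x
  linarith [norm_sub_norm_le (shellAverage 1 f x) (shellMean f)]

lemma exists_le_norm_shellAverage_of_energyOn_le (n : ℕ) (G : Type*) [NormedAddCommGroup G]
    [NormedSpace ℝ G] [CompleteSpace G] {p : ℝ} (hp : 1 ≤ p) :
    ∃ ε : ℝ, 0 < ε ∧ ∀ f : Euc n → G, Continuous f → (∀ x, ‖f x‖ = 1) →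
      energyOn n p f (shell n) univ ≤ ENNReal.ofReal ε →
      ∀ σ ∈ Icc (0 : ℝ) 1, ∀ x, 3 / 4 ≤ ‖shellAverage σ f x‖ := by
  obtain ⟨ε, hε, hsmall⟩ := exists_pos_mul_ofReal_le
    (C := (2 ^ n * (μH[n] (Metric.ball (0 : Euc n) 1))⁻¹) ^ 2) (b := (1 / 4) ^ p)
    (ENNReal.pow_ne_top (ENNReal.mul_ne_top (by simp)
      (ENNReal.inv_ne_top.2 (Metric.measure_ball_pos _ _ one_pos).ne'))) (by positivity)
  refine ⟨ε, hε, fun f hf hf1 hE σ hσ x => ?_⟩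
  by_cases hx : x ∈ shell n
  swap
  · rw [shellAverage_of_notMem σ f hx, hf1]
    norm_num
  obtain rfl | hσ0 := hσ.1.eq_or_lt
  · rw [shellAverage_zero, hf1]
    norm_num
  have hr : 0 < σ * shellRadius x := mul_pos hσ0 (shellRadius_pos hx)
  have := isProbabilityMeasure_cond_ball (μH[n] : Measure (Euc n)) x hr
  have hlow := one_sub_le_norm_integral_of_lintegral_le
    ((μH[n] : Measure (Euc n))[|Metric.ball x (σ * shellRadius x)]) hp
    (integrable_of_continuous_of_norm_le hf fun x => (hf1 x).le) hf1
    (measurable_lintegral_enorm_sub_rpow p hf _).aemeasurable (b := (1 / 4) ^ p) (by positivity)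
    ((lintegral_cond_ball_enorm_sub_rpow_le (by linarith) f x hr).trans (le_trans (by
      gcongr
      exact (energyOn_mono n p f (ball_subset_shell hx hσ.2) (subset_univ _)).trans hE) hsmall))
  rw [Real.rpow_rpow_inv (by norm_num) (by linarith),
    ← shellAverage_eq_integral_cond_ball hf hσ0 hx] at hlow
  linarith

lemma exists_norm_shellAverage_sub_shellMean_le (n : ℕ) (hn : 1 ≤ n) (G : Type*)
    [NormedAddCommGroup G] [NormedSpace ℝ G] [CompleteSpace G] {p : ℝ} (hp : 1 ≤ p) :
    ∃ ε : ℝ, 0 < ε ∧ ∀ f : Euc n → G, Continuous f → (∀ x, ‖f x‖ = 1) →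
      energyOn n p f (shell n) univ ≤ ENNReal.ofReal ε →
      ∀ x : Euc n, ‖x‖ ∈ Icc (3 / 2 : ℝ) (5 / 2) →
        ‖shellAverage 1 f x - shellMean f‖ ≤ 1 / 4 := by
  set A := (ENNReal.ofReal ((1 / 4) ^ n) * μH[n] (Metric.ball (0 : Euc n) 1))⁻¹
  set B := (μH[n] (shell n))⁻¹
  have hA : A ≠ ∞ := ENNReal.inv_ne_top.2 (mul_ne_zero (ENNReal.ofReal_pos.2 (by positivity)).ne'
    (Metric.measure_ball_pos _ _ one_pos).ne')
  have hB : B ≠ ∞ := ENNReal.inv_ne_top.2 (measure_shell_ne_zero hn)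
  obtain ⟨ε, hε, hsmall⟩ := exists_pos_mul_ofReal_le
    (C := ENNReal.ofReal ((6 ^ (n : ℝ)) ^ 2) * A * B) (b := (1 / 4) ^ p)
    (ENNReal.mul_ne_top (ENNReal.mul_ne_top ENNReal.ofReal_ne_top hA) hB) (by positivity)
  refine ⟨ε, hε, fun f hf hf1 hE x hx => ?_⟩
  have hxs : x ∈ shell n := ⟨by linarith [hx.1], by linarith [hx.2]⟩
  have hr : 1 / 4 ≤ 1 * shellRadius x := by
    have : |‖x‖ - 2| ≤ 1 / 2 := abs_le.2 ⟨by linarith [hx.1], by linarith [hx.2]⟩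
    rw [shellRadius_of_mem hxs]
    linarith
  have := isProbabilityMeasure_cond_ball (μH[n] : Measure (Euc n)) x
    (lt_of_lt_of_le (by norm_num) hr)
  have := isProbabilityMeasure_cond_shell hn
  have hint {P : Measure (Euc n)} [IsProbabilityMeasure P] : Integrable f P :=
    integrable_of_continuous_of_norm_le hf fun x => (hf1 x).le
  have hclose := norm_le_rpow_inv_of_enorm_rpow_le (by linarith) (by positivity)
    ((enorm_integral_sub_integral_rpow_le
      ((μH[n] : Measure (Euc n))[|Metric.ball x (1 * shellRadius x)])
      ((μH[n] : Measure (Euc n))[|shell n]) hp hint hint).trans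
    ((lintegral_enorm_sub_rpow_le_energyOn (d := n) n.cast_nonneg (by linarith) f hB
      measurableSet_ball measurableSet_shell (cond_ball_le_smul_restrict (by norm_num) hr x) le_rfl
      fun y hy z hz => dist_le_six_of_mem_shell (ball_subset_shell hxs le_rfl hy) hz).trans
    (le_trans (by
      gcongr
      exact (energyOn_mono n p f (ball_subset_shell hxs le_rfl) (subset_univ _)).trans hE)
      hsmall)))
  rwa [Real.rpow_rpow_inv (by norm_num) (by linarith),
    ← shellAverage_eq_integral_cond_ball hf one_pos hxs] at hclose

theorem exists_nearlyConstantOnShell_of_energyOn_le (n : ℕ) (hn : 1 ≤ n) (G : Type*)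
    [NormedAddCommGroup G] [NormedSpace ℝ G] [CompleteSpace G] {p : ℝ} (hp : 1 ≤ p) :
    ∃ ε : ℝ, 0 < ε ∧ ∀ f : Euc n → G, Continuous f → (∀ x, ‖f x‖ = 1) →
      energyOn n p f (shell n) univ ≤ ENNReal.ofReal ε → NearlyConstantOnShell f := by
  obtain ⟨ε₁, hε₁, h₁⟩ := exists_le_norm_shellAverage_of_energyOn_le n G hp
  obtain ⟨ε₂, hε₂, h₂⟩ := exists_norm_shellAverage_sub_shellMean_le n hn G hp
  refine ⟨min ε₁ ε₂, lt_min hε₁ hε₂, fun f hf hf1 hE => ⟨h₁ f hf hf1 (hE.trans ?_),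
    h₂ f hf hf1 (hE.trans ?_)⟩⟩
  · gcongr
    exact min_le_left _ _
  · gcongr
    exact min_le_right _ _

end ShellRegularity

section CutoffKernel

/-- The radial kernel `min(1, t) ^ p / t ^ (2d)`, which dominates `|θ(x) - θ(y)| ^ p / t ^ (2d)`,
`t = |x - y|`, for a Lipschitz cutoff `θ` with values in `[0, 1]`. -/
def cutoffKernel (d p t : ℝ) : ℝ := min 1 t ^ p / t ^ (2 * d)

lemma measurable_cutoffKernel (d p : ℝ) : Measurable (cutoffKernel d p) := by
  unfold cutoffKernel
  fun_prop

lemma integrable_cutoffKernel_norm {n : ℕ} (hn : 1 ≤ n) {p : ℝ} (hp : n < p) :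
    Integrable (fun x : Euc n => cutoffKernel n p ‖x‖) μH[n] := by
  have : Nonempty (Fin n) := ⟨⟨0, hn⟩⟩
  have hcast : ((n - 1 : ℕ) : ℝ) = (n : ℝ) - 1 := by rw [Nat.cast_sub hn, Nat.cast_one]
  have : (1 : ℝ) ≤ n := mod_cast hn
  rw [integrable_fun_norm_addHaar (μ := (μH[n] : Measure (Euc n))) (f := cutoffKernel n p),
    finrank_euclideanSpace_fin, ← Ioc_union_Ioi_eq_Ioi zero_le_one]
  refine IntegrableOn.union ?_ ?_
  · have hint : IntegrableOn (fun y : ℝ => y ^ (p - n - 1)) (Ioc 0 1) :=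
      (intervalIntegrable_iff_integrableOn_Ioc_of_le zero_le_one).1
        (intervalIntegral.intervalIntegrable_rpow' (by linarith))
    refine hint.congr_fun (fun y hy => ?_) measurableSet_Ioc
    simp only [cutoffKernel, smul_eq_mul]
    rw [min_eq_right hy.2, ← Real.rpow_natCast, hcast, ← Real.rpow_sub hy.1,
      ← Real.rpow_add hy.1]
    congr 1
    ring
  · refine (integrableOn_Ioi_rpow_of_lt (a := -n - 1) (by linarith) one_pos).congr_fun
      (fun y hy => ?_) measurableSet_Ioi
    have hy0 : 0 < y := one_pos.trans hy
    simp only [cutoffKernel, smul_eq_mul]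
    rw [min_eq_left (le_of_lt hy), ← Real.rpow_natCast, hcast, Real.one_rpow, one_div,
      ← Real.rpow_neg hy0.le, ← Real.rpow_add hy0]
    congr 1
    ring

/-- The total mass of the cutoff kernel on `ℝⁿ`. -/
def kernelMass (n : ℕ) (p : ℝ) : ℝ≥0∞ :=
  ∫⁻ y : Euc n, ENNReal.ofReal (cutoffKernel n p ‖y‖) ∂μH[n]

lemma kernelMass_ne_top {n : ℕ} (hn : 1 ≤ n) {p : ℝ} (hp : n < p) : kernelMass n p ≠ ∞ :=
  (integrable_cutoffKernel_norm hn hp).lintegral_lt_top.ne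

lemma lintegral_cutoffKernel_dist (n : ℕ) (p : ℝ) (x : Euc n) :
    ∫⁻ y, ENNReal.ofReal (cutoffKernel n p (dist x y)) ∂μH[n] = kernelMass n p := by
  simp only [dist_comm x, dist_eq_norm]
  exact lintegral_sub_right_eq_self (fun y => ENNReal.ofReal (cutoffKernel n p ‖y‖)) x

end CutoffKernel

section Interpolation

variable {X G : Type*} [MetricSpace X] [NormedAddCommGroup G] [NormedSpace ℝ G] {g : X → G}
  {θ : X → ℝ} {p : ℝ}

lemma energyDensity_lineMap_le (d : ℝ) (hp : 1 ≤ p) (c : G) (hθ : ∀ x, θ x ∈ Icc (0 : ℝ) 1)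
    (hθ' : ∀ x y, |θ x - θ y| ≤ 2 * min 1 (dist x y)) (x y : X) :
    energyDensity d p (fun x => AffineMap.lineMap (g x) c (θ x)) x y ≤
      2 ^ (p - 1) * (energyDensity d p g x y +
        2 ^ p * (ENNReal.ofReal (cutoffKernel d p (dist x y)) * ‖g x - c‖ₑ ^ p)) := by
  have hp0 : 0 ≤ p := by linarith
  have hmin : 0 ≤ min 1 (dist x y) := le_min zero_le_one dist_nonneg
  have hdiff : AffineMap.lineMap (g x) c (θ x) - AffineMap.lineMap (g y) c (θ y) =
      (1 - θ y) • (g x - g y) + (θ y - θ x) • (g x - c) := by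
    simp only [AffineMap.lineMap_apply_module]
    module
  have hfst : ‖(1 - θ y) • (g x - g y)‖ₑ ≤ ‖g x - g y‖ₑ := by
    rw [enorm_smul]
    refine mul_le_of_le_one_left' ?_
    rw [Real.enorm_of_nonneg (by linarith [(hθ y).2]), ENNReal.ofReal_le_one]
    linarith [(hθ y).1]
  have hincr : ‖θ y - θ x‖ₑ ≤ 2 * ENNReal.ofReal (min 1 (dist x y)) := by
    rw [Real.enorm_eq_ofReal_abs, abs_sub_comm, ← ENNReal.ofReal_ofNat,
      ← ENNReal.ofReal_mul (by norm_num)]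
    exact ENNReal.ofReal_le_ofReal (hθ' x y)
  have hsnd : ‖(θ y - θ x) • (g x - c)‖ₑ ^ p ≤
      2 ^ p * (ENNReal.ofReal (min 1 (dist x y) ^ p) * ‖g x - c‖ₑ ^ p) := by
    rw [enorm_smul, ← ENNReal.ofReal_rpow_of_nonneg hmin hp0, ← ENNReal.mul_rpow_of_nonneg _ _ hp0,
      ← ENNReal.mul_rpow_of_nonneg _ _ hp0, ← mul_assoc]
    gcongr
  have hkernel : ENNReal.ofReal (cutoffKernel d p (dist x y)) =
      ENNReal.ofReal (1 / dist x y ^ (2 * d)) * ENNReal.ofReal (min 1 (dist x y) ^ p) := by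
    rw [← ENNReal.ofReal_mul (by positivity), cutoffKernel, one_div_mul_eq_div]
  rw [energyDensity_eq_mul_enorm_rpow d hp0, energyDensity_eq_mul_enorm_rpow d hp0, hdiff, hkernel]
  calc _ ≤ ENNReal.ofReal (1 / dist x y ^ (2 * d)) * (2 ^ (p - 1) * (‖g x - g y‖ₑ ^ p +
        2 ^ p * (ENNReal.ofReal (min 1 (dist x y) ^ p) * ‖g x - c‖ₑ ^ p))) := by
        gcongr
        refine (ENNReal.rpow_le_rpow (enorm_add_le _ _) hp0).trans
          ((ENNReal.rpow_add_le_mul_rpow_add_rpow _ _ hp).trans ?_)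
        gcongr
    _ = _ := by ring

variable [MeasurableSpace X] [BorelSpace X] [SecondCountableTopology X]

lemma energyOn_lineMap_le {d : ℝ} [SFinite (μH[d] : Measure X)] (hp : 1 ≤ p) (hg : Continuous g)
    (c : G) (hθ : ∀ x, θ x ∈ Icc (0 : ℝ) 1) (hθ' : ∀ x y, |θ x - θ y| ≤ 2 * min 1 (dist x y))
    {M : ℝ≥0∞} (hM : ∀ x, ∫⁻ y : X, ENNReal.ofReal (cutoffKernel d p (dist x y)) ∂μH[d] ≤ M)
    (A : Set X) :
    energyOn d p (fun x => AffineMap.lineMap (g x) c (θ x)) A univ ≤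
      2 ^ (p - 1) * (energyOn d p g A univ +
        2 ^ p * (M * ∫⁻ x in A, ‖g x - c‖ₑ ^ p ∂μH[d])) := by
  have htwo : ∀ q : ℝ, 0 ≤ q → (2 : ℝ≥0∞) ^ q ≠ ∞ := fun q hq =>
    ENNReal.rpow_ne_top_of_nonneg hq ENNReal.ofNat_ne_top
  have hinner : ∀ x, ∫⁻ y : X, energyDensity d p (fun x => AffineMap.lineMap (g x) c (θ x)) x y
      ∂μH[d] ≤ 2 ^ (p - 1) * ((∫⁻ y : X, energyDensity d p g x y ∂μH[d]) +
        2 ^ p * (M * ‖g x - c‖ₑ ^ p)) := by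
    intro x
    have hmeas : Measurable (energyDensity d p g x) :=
      measurable_energyDensity_comp d p hg measurable_const measurable_id
    refine (lintegral_mono fun y => energyDensity_lineMap_le d hp c hθ hθ' x y).trans ?_
    rw [lintegral_const_mul' _ _ (htwo _ (by linarith)), lintegral_add_left hmeas,
      lintegral_const_mul' _ _ (htwo _ (by linarith)), lintegral_mul_const]
    · gcongr
      exact hM x
    · exact ((measurable_cutoffKernel d p).comp
        (measurable_const.dist measurable_id)).ennreal_ofReal
  have hmeas : Measurable fun x => ‖g x - c‖ₑ ^ p :=
    (hg.sub continuous_const).enorm.measurable.pow_const p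
  unfold energyOn
  rw [Measure.restrict_univ]
  refine (lintegral_mono hinner).trans_eq ?_
  rw [lintegral_const_mul' _ _ (htwo _ (by linarith)),
    lintegral_add_left (measurable_lintegral_energyDensity d p hg _),
    lintegral_const_mul' _ _ (htwo _ (by linarith)),
    lintegral_const_mul _ hmeas]

end Interpolation

section Flatten

variable {n : ℕ} {G : Type*} [NormedAddCommGroup G] [NormedSpace ℝ G] {f : Euc n → G}
  {θ : Euc n → ℝ} {b p : ℝ}

/-- A cutoff function all of whose transition takes place in the middle of the shell. -/
structure IsShellCutoff (θ : Euc n → ℝ) : Prop where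
  mem_Icc : ∀ x, θ x ∈ Icc (0 : ℝ) 1
  lipschitzWith : LipschitzWith 2 θ
  eq_zero_or_one : ∀ x, ‖x‖ ∉ Icc (3 / 2 : ℝ) (5 / 2) → θ x = 0 ∨ θ x = 1

lemma IsShellCutoff.abs_sub_le (hθ : IsShellCutoff θ) (x y : Euc n) :
    |θ x - θ y| ≤ 2 * min 1 (dist x y) := by
  have hlip : |θ x - θ y| ≤ 2 * dist x y := hθ.lipschitzWith.dist_le_mul x y
  have hone : |θ x - θ y| ≤ 2 * 1 := abs_le.2
    ⟨by linarith [(hθ.mem_Icc x).1, (hθ.mem_Icc y).2],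
      by linarith [(hθ.mem_Icc y).1, (hθ.mem_Icc x).2]⟩
  rw [mul_min_of_nonneg _ _ zero_le_two]
  exact le_min hone hlip

/-- The interpolation, governed by the cutoff `θ`, between the regularisation of `f` on the shell
and its mean over the shell. -/
def flatten (θ : Euc n → ℝ) (f : Euc n → G) (x : Euc n) : G :=
  AffineMap.lineMap (shellAverage 1 f x) (shellMean f) (θ x)

lemma flatten_of_eq_one {x : Euc n} (hx : θ x = 1) : flatten θ f x = shellMean f := by
  rw [flatten, hx, AffineMap.lineMap_apply_one]

lemma flatten_of_notMem_shell [CompleteSpace G] {x : Euc n} (hx : x ∉ shell n) (hθ : θ x = 0) :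
    flatten θ f x = f x := by
  rw [flatten, hθ, AffineMap.lineMap_apply_zero, shellAverage_of_notMem 1 f hx]

lemma continuous_flatten_smul {T : Type*} [TopologicalSpace T] {r : T → ℝ} (hr : Continuous r)
    (hf : Continuous f) (hb : ∀ x, ‖f x‖ ≤ b) (hθ : Continuous θ) :
    Continuous fun q : T × Euc n => flatten (r q.1 • θ) f q.2 := by
  have := continuous_shellAverage_one hf hb
  simp only [flatten, AffineMap.lineMap_apply_module, Pi.smul_apply]
  fun_prop

lemma continuous_flatten (hf : Continuous f) (hb : ∀ x, ‖f x‖ ≤ b) (hθ : Continuous θ) :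
    Continuous (flatten θ f) := by
  have := continuous_shellAverage_one hf hb
  unfold flatten
  simp only [AffineMap.lineMap_apply_module]
  fun_prop

lemma NearlyConstantOnShell.half_le_norm_flatten (hf : NearlyConstantOnShell f) (hn : 1 ≤ n)
    {x : Euc n} (hθ : θ x ∈ Icc (0 : ℝ) 1)
    (hθ' : ‖x‖ ∉ Icc (3 / 2 : ℝ) (5 / 2) → θ x = 0 ∨ θ x = 1) :
    1 / 2 ≤ ‖flatten θ f x‖ := by
  have havg := hf.le_norm_shellAverage 1 (right_mem_Icc.2 zero_le_one) x
  by_cases hx : ‖x‖ ∈ Icc (3 / 2 : ℝ) (5 / 2)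
  · have hdist : dist (flatten θ f x) (shellAverage 1 f x) ≤ 1 / 4 := by
      rw [flatten, dist_lineMap_left, Real.norm_of_nonneg hθ.1, dist_eq_norm]
      exact (mul_le_of_le_one_left (norm_nonneg _) hθ.2).trans
        (hf.norm_shellAverage_sub_shellMean_le x hx)
    rw [dist_comm, dist_eq_norm] at hdist
    linarith [norm_sub_norm_le (shellAverage 1 f x) (flatten θ f x)]
  · obtain h | h := hθ' hx
    · rw [flatten, h, AffineMap.lineMap_apply_zero]
      linarith
    · rw [flatten_of_eq_one h]
      exact hf.half_le_norm_shellMean hn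

theorem exists_energyOn_flatten_le (hn : 1 ≤ n) (hp : n < p) (G : Type*) [NormedAddCommGroup G]
    [NormedSpace ℝ G] [CompleteSpace G] : ∃ C : ℝ≥0∞, C ≠ ∞ ∧ ∀ (θ : Euc n → ℝ) (f : Euc n → G),
      IsShellCutoff θ → Continuous f → (∀ x, ‖f x‖ ≤ b) →
        energyOn n p (flatten θ f) (shell n) univ ≤ C * energyOn n p f (shell n) univ := by
  have hp1 : 1 ≤ p := le_trans (mod_cast hn) hp.le
  have htwo : ∀ q : ℝ, 0 ≤ q → (2 : ℝ≥0∞) ^ q ≠ ∞ := fun q hq =>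
    ENNReal.rpow_ne_top_of_nonneg hq ENNReal.ofNat_ne_top
  refine ⟨2 ^ (p - 1) * (9 ^ n + 2 ^ p * (kernelMass n p * (2 ^ n * ((μH[n] (shell n))⁻¹ *
    ENNReal.ofReal ((6 ^ n) ^ 2))))), ?_, fun θ f hθ hf hb => ?_⟩
  · have hM := kernelMass_ne_top hn hp
    have hshell := ENNReal.inv_ne_top.2 (measure_shell_ne_zero hn)
    have := htwo (p - 1) (by linarith)
    have := htwo p (by linarith)
    finiteness
  · calc energyOn n p (flatten θ f) (shell n) univ
        ≤ 2 ^ (p - 1) * (energyOn n p (shellAverage 1 f) (shell n) univ + 2 ^ p *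
          (kernelMass n p * ∫⁻ x in shell n, ‖shellAverage 1 f x - shellMean f‖ₑ ^ p ∂μH[n])) :=
          energyOn_lineMap_le hp1 (continuous_shellAverage_one hf hb) _ hθ.mem_Icc hθ.abs_sub_le
            (fun x => (lintegral_cutoffKernel_dist n p x).le) _
      _ ≤ 2 ^ (p - 1) * (9 ^ n * energyOn n p f (shell n) univ + 2 ^ p * (kernelMass n p *
          (2 ^ n * ((μH[n] (shell n))⁻¹ * (ENNReal.ofReal ((6 ^ n) ^ 2) *
            energyOn n p f (shell n) univ))))) := by
          gcongr
          · exact energyOn_shellAverage_le hp1 hf hb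
          · exact setLIntegral_enorm_shellAverage_sub_shellMean_rpow_le hn hp1 hf hb
      _ = _ := by ring

end Flatten

section EnergyComparison

variable {X M N : Type*} [MetricSpace X] [MeasurableSpace X] [BorelSpace X]
  [PseudoMetricSpace M] [PseudoMetricSpace N] {p : ℝ} {A B C : Set X}

lemma energyOn_le_of_dist_le (d : ℝ) (hp : 0 ≤ p) {L : ℝ} (hL : 0 ≤ L) {v : X → M} {w : X → N}
    (hA : MeasurableSet A) (hB : MeasurableSet B)
    (h : ∀ x ∈ A, ∀ y ∈ B, dist (v x) (v y) ≤ L * dist (w x) (w y)) :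
    energyOn d p v A B ≤ ENNReal.ofReal (L ^ p) * energyOn d p w A B := by
  unfold energyOn
  rw [← lintegral_const_mul' _ _ ENNReal.ofReal_ne_top]
  refine setLIntegral_mono' hA fun x hx => ?_
  rw [← lintegral_const_mul' _ _ ENNReal.ofReal_ne_top]
  exact setLIntegral_mono' hB fun y hy => energyDensity_le_of_dist_le d hp hL (h x hx y hy)

lemma energyOn_eq_zero_of_forall_eq (d : ℝ) (hp : 0 < p) {v : X → M} {c : M}
    (hA : MeasurableSet A) (h : ∀ x ∈ A, v x = c) : energyOn d p v A A = 0 := by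
  refine le_antisymm ((energyOn_le_of_dist_le d hp.le le_rfl (w := v) hA hA
    fun x hx y hy => ?_).trans_eq ?_) bot_le
  · rw [h x hx, h y hy, dist_self, zero_mul]
  · rw [Real.zero_rpow hp.ne', ENNReal.ofReal_zero, zero_mul]

lemma energyOn_union_left_le (d p : ℝ) (v : X → M) (A A' B : Set X) :
    energyOn d p v (A ∪ A') B ≤ energyOn d p v A B + energyOn d p v A' B :=
  lintegral_union_le _ _ _

variable [SecondCountableTopology X]

lemma energyOn_union_right_le (d p : ℝ) [SFinite (μH[d] : Measure X)] {v : X → M}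
    (hv : Continuous v) (A B B' : Set X) :
    energyOn d p v A (B ∪ B') ≤ energyOn d p v A B + energyOn d p v A B' := by
  simp only [energyOn_comm d p hv A]
  exact energyOn_union_left_le d p v B B' A

lemma energyOn_univ_le_of_union_eq_univ (d p : ℝ) [SFinite (μH[d] : Measure X)] {v : X → M}
    (hv : Continuous v) (h : A ∪ (B ∪ C) = univ) :
    energyOn d p v univ univ ≤ energyOn d p v B B + energyOn d p v C C +
      2 * (energyOn d p v A univ + energyOn d p v B C) := by
  have hleft := energyOn_union_left_le d p v A (B ∪ C) univ
  have hright : energyOn d p v (B ∪ C) univ ≤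
      energyOn d p v A univ + energyOn d p v (B ∪ C) (B ∪ C) := by
    calc energyOn d p v (B ∪ C) univ = energyOn d p v (B ∪ C) (A ∪ (B ∪ C)) := by rw [h]
      _ ≤ energyOn d p v (B ∪ C) A + energyOn d p v (B ∪ C) (B ∪ C) :=
        energyOn_union_right_le d p hv _ _ _
      _ ≤ _ := by
        rw [energyOn_comm d p hv (B ∪ C) A]
        gcongr
        exact energyOn_mono d p v subset_rfl (subset_univ _)
  have hcross : energyOn d p v (B ∪ C) (B ∪ C) ≤ energyOn d p v B B + energyOn d p v B C +
      (energyOn d p v B C + energyOn d p v C C) := by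
    refine (energyOn_union_left_le d p v _ _ _).trans (add_le_add
      (energyOn_union_right_le d p hv _ _ _) ?_)
    rw [energyOn_comm d p hv B C]
    exact energyOn_union_right_le d p hv _ _ _
  rw [h] at hleft
  calc energyOn d p v univ univ ≤ energyOn d p v A univ + (energyOn d p v A univ +
        (energyOn d p v B B + energyOn d p v B C +
          (energyOn d p v B C + energyOn d p v C C))) :=
        hleft.trans (add_le_add le_rfl (hright.trans (add_le_add le_rfl hcross)))
    _ = _ := by ring

end EnergyComparison

section Regions

variable {n : ℕ} {G : Type*} [NormedAddCommGroup G] [NormedSpace ℝ G] {f V : Euc n → G}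
  {b p : ℝ}

/-- The bounded component of the complement of the shell. -/
def innerRegion (n : ℕ) : Set (Euc n) := {x | ‖x‖ ≤ 1}

/-- The unbounded component of the complement of the shell. -/
def outerRegion (n : ℕ) : Set (Euc n) := {x | 3 ≤ ‖x‖}

lemma innerRegion_eq_closedBall : innerRegion n = Metric.closedBall 0 1 := by
  ext
  simp [innerRegion]

lemma measurableSet_innerRegion : MeasurableSet (innerRegion n) :=
  (isClosed_le continuous_norm continuous_const).measurableSet

lemma measurableSet_outerRegion : MeasurableSet (outerRegion n) :=
  (isClosed_le continuous_const continuous_norm).measurableSet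

lemma measure_innerRegion_ne_top : (μH[n] : Measure (Euc n)) (innerRegion n) ≠ ∞ := by
  rw [innerRegion_eq_closedBall]
  exact measure_closedBall_lt_top.ne

lemma notMem_shell_of_mem_innerRegion {x : Euc n} (hx : x ∈ innerRegion n) : x ∉ shell n :=
  fun h => not_lt_of_ge hx h.1

lemma notMem_shell_of_mem_outerRegion {x : Euc n} (hx : x ∈ outerRegion n) : x ∉ shell n :=
  fun h => not_lt_of_ge hx h.2

lemma shell_union_inner_union_outer :
    shell n ∪ (innerRegion n ∪ outerRegion n) = univ := by
  refine eq_univ_of_forall fun x => ?_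
  simp only [shell, innerRegion, outerRegion, mem_union, mem_ofPred_eq]
  grind

lemma dist_le_three_mul_of_regions {x y z : Euc n} (hx : x ∈ innerRegion n)
    (hy : y ∈ outerRegion n) (hz : z ∈ shell n) : dist y z ≤ 3 * dist y x ∧ 0 < dist y z := by
  rw [dist_eq_norm, dist_eq_norm]
  have hx' : ‖x‖ ≤ 1 := hx
  have hy' : 3 ≤ ‖y‖ := hy
  constructor <;> linarith [norm_sub_norm_le y x, norm_sub_norm_le y z, norm_sub_le y z, hz.2]

variable [CompleteSpace G]

lemma energyDensity_le_setLIntegral_shell (hn : 1 ≤ n) (hp : 1 ≤ p) (hf : Continuous f)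
    (hb : ∀ x, ‖f x‖ ≤ b) {x y : Euc n} (hx : x ∈ innerRegion n) (hy : y ∈ outerRegion n)
    (hVx : V x = shellMean f) (hVy : V y = f y) :
    energyDensity n p V y x ≤
      (μH[n] (shell n))⁻¹ * (9 ^ n * ∫⁻ z in shell n, energyDensity n p f y z ∂μH[n]) := by
  have hp0 : 0 ≤ p := by linarith
  rw [energyDensity_eq_mul_enorm_rpow _ hp0, hVx, hVy,
    ← lintegral_const_mul' _ _ (by finiteness)]
  refine (mul_le_mul_right (enorm_sub_shellMean_rpow_le hn hp hf hb y) _).trans ?_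
  rw [mul_left_comm, ← lintegral_const_mul' _ _ ENNReal.ofReal_ne_top]
  refine mul_le_mul' le_rfl (setLIntegral_mono' measurableSet_shell fun z hz => ?_)
  rw [energyDensity_eq_mul_enorm_rpow _ hp0, ← mul_assoc]
  refine mul_le_mul' ?_ le_rfl
  obtain ⟨hle, hpos⟩ := dist_le_three_mul_of_regions hx hy hz
  have hnine : (9 : ℝ≥0∞) ^ n = ENNReal.ofReal (3 ^ (2 * n : ℝ)) := by
    rw [Real.rpow_mul zero_le_three, Real.rpow_natCast, ENNReal.ofReal_pow (by positivity)]
    norm_num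
  rw [hnine, ← ENNReal.ofReal_mul (by positivity), ← mul_div_assoc, mul_one]
  refine ENNReal.ofReal_le_ofReal ?_
  rw [div_le_div_iff₀ (Real.rpow_pos_of_pos (by linarith) _) (by positivity), one_mul,
    ← Real.mul_rpow zero_le_three dist_nonneg]
  gcongr

lemma energyOn_outer_inner_le (hn : 1 ≤ n) (hp : 1 ≤ p) (hf : Continuous f)
    (hb : ∀ x, ‖f x‖ ≤ b) (hin : ∀ x ∈ innerRegion n, V x = shellMean f)
    (hout : ∀ x ∈ outerRegion n, V x = f x) :
    energyOn n p V (outerRegion n) (innerRegion n) ≤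
      μH[n] (innerRegion n) * ((μH[n] (shell n))⁻¹ * 9 ^ n) *
        energyOn n p f (shell n) univ := by
  have hinner : ∀ y ∈ outerRegion n, ∫⁻ x in innerRegion n, energyDensity n p V y x ∂μH[n] ≤
      μH[n] (innerRegion n) * ((μH[n] (shell n))⁻¹ * 9 ^ n) *
        ∫⁻ z in shell n, energyDensity n p f y z ∂μH[n] := by
    intro y hy
    refine (setLIntegral_mono' measurableSet_innerRegion fun x hx =>
      energyDensity_le_setLIntegral_shell hn hp hf hb hx hy (hin x hx) (hout y hy)).trans_eq ?_
    rw [setLIntegral_const]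
    ring
  have hC : μH[n] (innerRegion n) * ((μH[n] (shell n))⁻¹ * 9 ^ n) ≠ ∞ := by
    have := measure_innerRegion_ne_top (n := n)
    have := ENNReal.inv_ne_top.2 (measure_shell_ne_zero hn)
    finiteness
  refine (setLIntegral_mono' measurableSet_outerRegion hinner).trans ?_
  rw [lintegral_const_mul' _ _ hC, energyOn_comm n p hf (shell n)]
  gcongr
  exact energyOn_mono n p f (subset_univ _) subset_rfl

lemma energyOn_inner_outer_le (hn : 1 ≤ n) (hp : 1 ≤ p) (hf : Continuous f)
    (hb : ∀ x, ‖f x‖ ≤ b) (hin : ∀ x ∈ innerRegion n, V x = f x)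
    (hout : ∀ x ∈ outerRegion n, V x = shellMean f) :
    energyOn n p V (innerRegion n) (outerRegion n) ≤
      kernelMass n p * ((μH[n] (shell n))⁻¹ * ENNReal.ofReal ((4 ^ n) ^ 2)) *
        energyOn n p f (shell n) univ := by
  have hinner : ∀ x ∈ innerRegion n, ∫⁻ y in outerRegion n, energyDensity n p V x y ∂μH[n] ≤
      kernelMass n p * ‖f x - shellMean f‖ₑ ^ p := by
    intro x hx
    have hmeas : Measurable fun y : Euc n => ENNReal.ofReal (cutoffKernel n p (dist x y)) :=
      ((measurable_cutoffKernel n p).comp (measurable_const.dist measurable_id)).ennreal_ofReal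
    rw [← lintegral_cutoffKernel_dist n p x, ← lintegral_mul_const _ hmeas]
    refine (setLIntegral_mono' measurableSet_outerRegion fun y hy => ?_).trans
      (setLIntegral_le_lintegral _ _)
    have hdist : 1 ≤ dist x y := by
      have hx' : ‖x‖ ≤ 1 := hx
      have hy' : 3 ≤ ‖y‖ := hy
      rw [dist_comm, dist_eq_norm]
      linarith [norm_sub_norm_le y x]
    rw [energyDensity_eq_mul_enorm_rpow _ (by linarith), hin x hx, hout y hy, cutoffKernel,
      min_eq_left hdist, Real.one_rpow]
  have hdist : ∀ x ∈ innerRegion n, ∀ y ∈ shell n, dist x y ≤ 4 := fun x hx y hy => by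
    have hx' : ‖x‖ ≤ 1 := hx
    rw [dist_eq_norm]
    linarith [norm_sub_le x y, hy.2]
  refine (setLIntegral_mono' measurableSet_innerRegion hinner).trans ?_
  rw [lintegral_const_mul]
  · rw [mul_assoc, mul_assoc, energyOn_comm n p hf (shell n)]
    gcongr
    refine (setLIntegral_enorm_sub_shellMean_rpow_le hn hp hf hb measurableSet_innerRegion
      hdist).trans ?_
    gcongr
    exact energyOn_mono n p f (subset_univ _) subset_rfl
  · exact (hf.sub continuous_const).enorm.measurable.pow_const p

end Regions

section Cutoffs

variable {n : ℕ}

/-- The radial cutoff equal to `1` for `‖x‖ ≤ 2` and to `0` for `‖x‖ ≥ 5 / 2`. -/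
def innerCutoff (x : Euc n) : ℝ := projIcc (0 : ℝ) 1 zero_le_one (5 - 2 * ‖x‖)

/-- The radial cutoff equal to `0` for `‖x‖ ≤ 3 / 2` and to `1` for `‖x‖ ≥ 2`. -/
def outerCutoff (x : Euc n) : ℝ := projIcc (0 : ℝ) 1 zero_le_one (2 * ‖x‖ - 3)

/-- The cutoff concentrated on a neighbourhood of the sphere `‖x‖ = 2`, where it equals `1`. -/
def neckCutoff (x : Euc n) : ℝ := min (innerCutoff x) (outerCutoff x)

lemma innerCutoff_of_le {x : Euc n} (hx : ‖x‖ ≤ 2) : innerCutoff x = 1 := by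
  rw [innerCutoff, projIcc_of_right_le _ (by linarith)]

lemma innerCutoff_of_ge {x : Euc n} (hx : 5 / 2 ≤ ‖x‖) : innerCutoff x = 0 := by
  rw [innerCutoff, projIcc_of_le_left _ (by linarith)]

lemma outerCutoff_of_le {x : Euc n} (hx : ‖x‖ ≤ 3 / 2) : outerCutoff x = 0 := by
  rw [outerCutoff, projIcc_of_le_left _ (by linarith)]

lemma outerCutoff_of_ge {x : Euc n} (hx : 2 ≤ ‖x‖) : outerCutoff x = 1 := by
  rw [outerCutoff, projIcc_of_right_le _ (by linarith)]

lemma isShellCutoff_innerCutoff : IsShellCutoff (innerCutoff (n := n)) where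
  mem_Icc _ := Subtype.coe_prop _
  lipschitzWith := by
    refine LipschitzWith.of_dist_le_mul fun x y => ?_
    refine ((LipschitzWith.projIcc zero_le_one).dist_le_mul _ _).trans ?_
    rw [Real.dist_eq, show 5 - 2 * ‖x‖ - (5 - 2 * ‖y‖) = -(2 * (‖x‖ - ‖y‖)) by ring, abs_neg,
      abs_mul, abs_two, NNReal.coe_one, one_mul, dist_eq_norm]
    exact mul_le_mul_of_nonneg_left (abs_norm_sub_norm_le x y) zero_le_two
  eq_zero_or_one x hx := by
    rw [mem_Icc, not_and_or, not_le, not_le] at hx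
    exact hx.symm.imp (fun h => innerCutoff_of_ge h.le) fun h => innerCutoff_of_le (by linarith)

lemma isShellCutoff_outerCutoff : IsShellCutoff (outerCutoff (n := n)) where
  mem_Icc _ := Subtype.coe_prop _
  lipschitzWith := by
    refine LipschitzWith.of_dist_le_mul fun x y => ?_
    refine ((LipschitzWith.projIcc zero_le_one).dist_le_mul _ _).trans ?_
    rw [Real.dist_eq, show 2 * ‖x‖ - 3 - (2 * ‖y‖ - 3) = 2 * (‖x‖ - ‖y‖) by ring,
      abs_mul, abs_two, NNReal.coe_one, one_mul, dist_eq_norm]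
    exact mul_le_mul_of_nonneg_left (abs_norm_sub_norm_le x y) zero_le_two
  eq_zero_or_one x hx := by
    rw [mem_Icc, not_and_or, not_le, not_le] at hx
    exact hx.imp (fun h => outerCutoff_of_le h.le) fun h => outerCutoff_of_ge (by linarith)

lemma neckCutoff_of_le {x : Euc n} (hx : ‖x‖ ≤ 2) : neckCutoff x = outerCutoff x := by
  rw [neckCutoff, innerCutoff_of_le hx, min_eq_right (isShellCutoff_outerCutoff.mem_Icc x).2]

lemma neckCutoff_of_ge {x : Euc n} (hx : 2 ≤ ‖x‖) : neckCutoff x = innerCutoff x := by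
  rw [neckCutoff, outerCutoff_of_ge hx, min_eq_left (isShellCutoff_innerCutoff.mem_Icc x).2]

lemma neckCutoff_mem_Icc (x : Euc n) : neckCutoff x ∈ Icc (0 : ℝ) 1 :=
  ⟨le_min (isShellCutoff_innerCutoff.mem_Icc x).1 (isShellCutoff_outerCutoff.mem_Icc x).1,
    min_le_of_left_le (isShellCutoff_innerCutoff.mem_Icc x).2⟩

lemma neckCutoff_eq_zero {x : Euc n} (hx : ‖x‖ ∉ Icc (3 / 2 : ℝ) (5 / 2)) :
    neckCutoff x = 0 := by
  rw [mem_Icc, not_and_or, not_le, not_le] at hx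
  obtain h | h := hx
  · rw [neckCutoff_of_le (by linarith), outerCutoff_of_le h.le]
  · rw [neckCutoff_of_ge (by linarith), innerCutoff_of_ge h.le]

lemma continuous_neckCutoff : Continuous (neckCutoff (n := n)) :=
  isShellCutoff_innerCutoff.lipschitzWith.continuous.min
    isShellCutoff_outerCutoff.lipschitzWith.continuous

end Cutoffs

section FlattenedMaps

variable {n m : ℕ} {p : ℝ} {f : Euc n → Euc (m + 1)} {θ : Euc n → ℝ}

lemma NearlyConstantOnShell.continuous_sphereProj_flatten (hfs : NearlyConstantOnShell f)
    (hn : 1 ≤ n) (hθ : IsShellCutoff θ) (hf : Continuous f) (hf1 : ∀ x, ‖f x‖ = 1) :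
    Continuous fun x => sphereProj m (flatten θ f x) :=
  continuous_sphereProj_comp
    (continuous_flatten hf (fun x => (hf1 x).le) hθ.lipschitzWith.continuous)
    fun x => norm_pos_iff.1 (one_half_pos.trans_le
      (hfs.half_le_norm_flatten hn (hθ.mem_Icc x) (hθ.eq_zero_or_one x)))

lemma coe_sphereProj_of_norm_eq_one {y : Euc (m + 1)} (hy : ‖y‖ = 1) :
    (sphereProj m y : Euc (m + 1)) = y :=
  congrArg Subtype.val (sphereProj_coe ⟨y, mem_sphere_zero_iff_norm.2 hy⟩)

lemma NearlyConstantOnShell.half_le_norm_flatten_smul_neckCutoff (hfs : NearlyConstantOnShell f)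
    (hn : 1 ≤ n) (t : unitInterval) (x : Euc n) :
    1 / 2 ≤ ‖flatten ((t : ℝ) • neckCutoff) f x‖ := by
  refine hfs.half_le_norm_flatten hn ?_ fun hx => Or.inl ?_
  · rw [Pi.smul_apply, smul_eq_mul]
    exact unitInterval.mul_mem t.2 (neckCutoff_mem_Icc x)
  · rw [Pi.smul_apply, neckCutoff_eq_zero hx, smul_zero]

lemma NearlyConstantOnShell.continuous_sphereProj_flatten_smul_neckCutoff
    (hfs : NearlyConstantOnShell f) (hn : 1 ≤ n) (hf : Continuous f) (hf1 : ∀ x, ‖f x‖ = 1) :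
    Continuous fun q : unitInterval × Euc n =>
      sphereProj m (flatten ((q.1 : ℝ) • neckCutoff) f q.2) := by
  have hflat : Continuous fun q : unitInterval × Euc n =>
      flatten ((q.1 : ℝ) • neckCutoff) f q.2 :=
    continuous_flatten_smul continuous_subtype_val hf (fun x => (hf1 x).le) continuous_neckCutoff
  exact continuous_sphereProj_comp hflat fun q => norm_pos_iff.1
    (one_half_pos.trans_le (hfs.half_le_norm_flatten_smul_neckCutoff hn q.1 q.2))

variable (hn : 1 ≤ n) (hf : Continuous f) (hf1 : ∀ x, ‖f x‖ = 1)
  (hfs : NearlyConstantOnShell f)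
include hn hf hf1 hfs

lemma energyOn_sphereProj_flatten_le (hp : 0 < p) (hθ : IsShellCutoff θ)
    {K R : Set (Euc n)} (hK : MeasurableSet K) (hR : MeasurableSet R)
    (hcover : shell n ∪ (K ∪ R) = univ) (hKshell : ∀ x ∈ K, x ∉ shell n)
    (hθK : ∀ x ∈ K, θ x = 0) (hθR : ∀ x ∈ R, θ x = 1) :
    energyOn n p (fun x => sphereProj m (flatten θ f x)) univ univ ≤
      energyOn n p f K K + 2 * ENNReal.ofReal (4 ^ p) *
        (energyOn n p (flatten θ f) (shell n) univ + energyOn n p (flatten θ f) K R) := by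
  have hhalf : ∀ x, 1 / 2 ≤ ‖flatten θ f x‖ := fun x =>
    hfs.half_le_norm_flatten hn (hθ.mem_Icc x) (hθ.eq_zero_or_one x)
  have hlip : ∀ x y, dist (sphereProj m (flatten θ f x)) (sphereProj m (flatten θ f y)) ≤
      4 * dist (flatten θ f x) (flatten θ f y) := fun x y => by
    rw [Subtype.dist_eq, dist_eq_norm, dist_eq_norm]
    exact norm_sphereProj_sub_sphereProj_le (hhalf x) (hhalf y)
  have hfour : ∀ A B : Set (Euc n), MeasurableSet A → MeasurableSet B →
      energyOn n p (fun x => sphereProj m (flatten θ f x)) A B ≤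
        ENNReal.ofReal (4 ^ p) * energyOn n p (flatten θ f) A B := fun A B hA hB =>
    energyOn_le_of_dist_le n hp.le zero_le_four hA hB fun x _ y _ => hlip x y
  have hkept : energyOn n p (fun x => sphereProj m (flatten θ f x)) K K ≤ energyOn n p f K K := by
    have hval : ∀ x ∈ K, (sphereProj m (flatten θ f x) : Euc (m + 1)) = f x := fun x hx => by
      rw [flatten_of_notMem_shell (hKshell x hx) (hθK x hx), coe_sphereProj_of_norm_eq_one (hf1 x)]
    have hle := energyOn_le_of_dist_le n hp.le zero_le_one hK hK
      (v := fun x => sphereProj m (flatten θ f x)) (w := f) fun x hx y hy => by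
        rw [Subtype.dist_eq, hval x hx, hval y hy, one_mul]
    rwa [Real.one_rpow, ENNReal.ofReal_one, one_mul] at hle
  have hreplaced : energyOn n p (fun x => sphereProj m (flatten θ f x)) R R = 0 :=
    energyOn_eq_zero_of_forall_eq n hp hR fun x hx => by rw [flatten_of_eq_one (hθR x hx)]
  refine (energyOn_univ_le_of_union_eq_univ n p
    (hfs.continuous_sphereProj_flatten hn hθ hf hf1) hcover).trans ?_
  rw [hreplaced, add_zero, mul_assoc, mul_add (ENNReal.ofReal _)]
  gcongr
  · exact hfour _ _ measurableSet_shell .univ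
  · exact hfour _ _ hK hR

end FlattenedMaps

section FlattenedEnergy

variable {n : ℕ} {p : ℝ}

theorem exists_energyOn_flatten_innerCutoff_le (hn : 1 ≤ n) (hp : n < p) (m : ℕ) :
    ∃ C : ℝ≥0∞, C ≠ ∞ ∧ ∀ f : Euc n → Euc (m + 1), Continuous f → (∀ x, ‖f x‖ = 1) →
      NearlyConstantOnShell f →
      energyOn n p (fun x => sphereProj m (flatten innerCutoff f x)) univ univ ≤
        energyOn n p f (outerRegion n) (outerRegion n) + C * energyOn n p f (shell n) univ := by
  have hp1 : 1 ≤ p := le_trans (mod_cast hn) hp.le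
  obtain ⟨C, hC, hflat⟩ := exists_energyOn_flatten_le (b := 1) hn hp (Euc (m + 1))
  refine ⟨2 * ENNReal.ofReal (4 ^ p) *
    (C + μH[n] (innerRegion n) * ((μH[n] (shell n))⁻¹ * 9 ^ n)), ?_, fun f hf hf1 hfs => ?_⟩
  · have := measure_innerRegion_ne_top (n := n)
    have := ENNReal.inv_ne_top.2 (measure_shell_ne_zero hn)
    finiteness
  have hzero : ∀ x ∈ outerRegion n, innerCutoff x = 0 := fun x (hx : 3 ≤ ‖x‖) =>
    innerCutoff_of_ge (by linarith)
  have hone : ∀ x ∈ innerRegion n, innerCutoff x = 1 := fun x (hx : ‖x‖ ≤ 1) =>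
    innerCutoff_of_le (by linarith)
  refine (energyOn_sphereProj_flatten_le hn hf hf1 hfs (by linarith) isShellCutoff_innerCutoff
    measurableSet_outerRegion measurableSet_innerRegion
    (by rw [union_comm (outerRegion n), shell_union_inner_union_outer])
    (fun _ => notMem_shell_of_mem_outerRegion) hzero hone).trans ?_
  rw [mul_assoc (2 * _), add_mul]
  gcongr
  · exact hflat _ f isShellCutoff_innerCutoff hf fun x => (hf1 x).le
  · exact energyOn_outer_inner_le hn hp1 hf (fun x => (hf1 x).le)
      (fun x hx => flatten_of_eq_one (hone x hx)) fun x hx =>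
      flatten_of_notMem_shell (notMem_shell_of_mem_outerRegion hx) (hzero x hx)

theorem exists_energyOn_flatten_outerCutoff_le (hn : 1 ≤ n) (hp : n < p) (m : ℕ) :
    ∃ C : ℝ≥0∞, C ≠ ∞ ∧ ∀ f : Euc n → Euc (m + 1), Continuous f → (∀ x, ‖f x‖ = 1) →
      NearlyConstantOnShell f →
      energyOn n p (fun x => sphereProj m (flatten outerCutoff f x)) univ univ ≤
        energyOn n p f (innerRegion n) (innerRegion n) + C * energyOn n p f (shell n) univ := by
  have hp1 : 1 ≤ p := le_trans (mod_cast hn) hp.le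
  obtain ⟨C, hC, hflat⟩ := exists_energyOn_flatten_le (b := 1) hn hp (Euc (m + 1))
  refine ⟨2 * ENNReal.ofReal (4 ^ p) *
    (C + kernelMass n p * ((μH[n] (shell n))⁻¹ * ENNReal.ofReal ((4 ^ n) ^ 2))), ?_,
    fun f hf hf1 hfs => ?_⟩
  · have := kernelMass_ne_top hn hp
    have := ENNReal.inv_ne_top.2 (measure_shell_ne_zero hn)
    finiteness
  have hzero : ∀ x ∈ innerRegion n, outerCutoff x = 0 := fun x (hx : ‖x‖ ≤ 1) =>
    outerCutoff_of_le (by linarith)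
  have hone : ∀ x ∈ outerRegion n, outerCutoff x = 1 := fun x (hx : 3 ≤ ‖x‖) =>
    outerCutoff_of_ge (by linarith)
  refine (energyOn_sphereProj_flatten_le hn hf hf1 hfs (by linarith) isShellCutoff_outerCutoff
    measurableSet_innerRegion measurableSet_outerRegion shell_union_inner_union_outer
    (fun _ => notMem_shell_of_mem_innerRegion) hzero hone).trans ?_
  rw [mul_assoc (2 * _), add_mul]
  gcongr
  · exact hflat _ f isShellCutoff_outerCutoff hf fun x => (hf1 x).le
  · exact energyOn_inner_outer_le hn hp1 hf (fun x => (hf1 x).le)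
      (fun x hx => flatten_of_notMem_shell (notMem_shell_of_mem_innerRegion hx) (hzero x hx))
      fun x hx => flatten_of_eq_one (hone x hx)

end FlattenedEnergy

section Surgery

variable {n m : ℕ}

/-- The surgery on `U` in the chart `c`: in the chart, `U` is flattened along `θ` and projected back
to the sphere, and the pole of the chart is sent to its image under `V`. -/
def flattenIn (c : ConformalChart n) (θ : Euc n → ℝ) (U V : Sph n → Sph m) : Sph n → Sph m :=
  Function.extend c
    (fun x => sphereProj m (flatten θ (fun y => (U (c y) : Euc (m + 1))) x)) V

/-- The outer map of the surgery, which is constant in the inner part of the chart. -/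
def outerMap (c : ConformalChart n) (U : Sph n → Sph m) : Sph n → Sph m :=
  flattenIn c innerCutoff U U

/-- The bubble cut out by the surgery, which is constant away from the inner part of the chart. -/
def innerBubble (c : ConformalChart n) (U : Sph n → Sph m) : Sph n → Sph m :=
  flattenIn c outerCutoff U fun _ =>
    sphereProj m (shellMean fun y => (U (c y) : Euc (m + 1)))

variable (c : ConformalChart n) {U V : Sph n → Sph m} {θ : Euc n → ℝ}

lemma flattenIn_apply (θ : Euc n → ℝ) (U V : Sph n → Sph m) (x : Euc n) : flattenIn c θ U V (c x) =
    sphereProj m (flatten θ (fun y => (U (c y) : Euc (m + 1))) x) :=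
  c.isOpenEmbedding.injective.extend_apply _ _ x

lemma flattenIn_of_notMem_range {y : Sph n} (hy : y ∉ range c) : flattenIn c θ U V y = V y :=
  Function.extend_apply' _ _ _ hy

lemma sphereProj_flatten_of_eq_zero {x : Euc n} (hx : 3 ≤ ‖x‖) (hθ : θ x = 0) :
    sphereProj m (flatten θ (fun y => (U (c y) : Euc (m + 1))) x) = U (c x) := by
  rw [flatten_of_notMem_shell (notMem_shell_of_mem_outerRegion hx) hθ, sphereProj_coe]

lemma homotopic_flattenIn_zero (hU : Continuous U)
    (hUs : NearlyConstantOnShell fun x => (U (c x) : Euc (m + 1))) :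
    Homotopic U (flattenIn c 0 U U) := by
  have hc := c.isOpenEmbedding.continuous
  have havg : Continuous fun q : unitInterval × Euc n =>
      shellAverage (q.1 : ℝ) (fun y => (U (c y) : Euc (m + 1))) q.2 :=
    (continuous_shellAverage (f := fun y => (U (c y) : Euc (m + 1))) (by fun_prop)
      fun x => (norm_eq_of_mem_sphere _).le).comp
      (by fun_prop : Continuous fun q : unitInterval × Euc n => ((q.1 : ℝ), q.2))
  have hF : Continuous fun q : unitInterval × Euc n =>
      sphereProj m (shellAverage (q.1 : ℝ) (fun y => (U (c y) : Euc (m + 1))) q.2) :=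
    continuous_sphereProj_comp havg fun q =>
      norm_pos_iff.1 (by linarith [hUs.le_norm_shellAverage q.1 q.1.2 q.2])
  have hom := homotopic_extend_of_eq_off_compact c.isOpenEmbedding hU (isCompact_closedBall 0 3) hF
    fun t x hx => by
      have hx3 : 3 ≤ ‖x‖ := (not_le.1 (mt mem_closedBall_zero_iff.2 hx)).le
      rw [shellAverage_of_notMem _ _ (notMem_shell_of_mem_outerRegion hx3), sphereProj_coe]
  have hstart : Function.extend c (fun x => U (c x)) U = U := by
    funext y
    by_cases hy : y ∈ range c
    · obtain ⟨x, rfl⟩ := hy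
      exact c.isOpenEmbedding.injective.extend_apply _ _ x
    · exact Function.extend_apply' _ _ _ hy
  simpa only [Icc.coe_zero, Icc.coe_one, shellAverage_zero, sphereProj_coe, hstart, flattenIn,
    flatten, Pi.zero_apply, AffineMap.lineMap_apply_zero] using hom

variable (hn : 1 ≤ n) (hU : Continuous U)
  (hUs : NearlyConstantOnShell fun x => (U (c x) : Euc (m + 1)))
include hn hU hUs

lemma continuous_flattenIn (hθ : IsShellCutoff θ) (hV : Continuous V)
    (hfar : ∀ x, 3 ≤ ‖x‖ →
      sphereProj m (flatten θ (fun y => (U (c y) : Euc (m + 1))) x) = V (c x)) :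
    Continuous (flattenIn c θ U V) := by
  have hc := c.isOpenEmbedding.continuous
  have hcont := hUs.continuous_sphereProj_flatten hn hθ (by fun_prop)
    fun x => norm_eq_of_mem_sphere _
  refine (continuous_extend_of_eq_off_compact (T := Unit) c.isOpenEmbedding hV
    (isCompact_closedBall 0 3) (hcont.comp continuous_snd) fun _ x hx => hfar x ?_).comp
    (Continuous.prodMk_right ())
  exact (not_le.1 (mt mem_closedBall_zero_iff.2 hx)).le

lemma continuous_outerMap : Continuous (outerMap c U) :=
  continuous_flattenIn c hn hU hUs isShellCutoff_innerCutoff hU fun x hx =>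
    sphereProj_flatten_of_eq_zero c hx (innerCutoff_of_ge (by linarith))

lemma continuous_innerBubble : Continuous (innerBubble c U) :=
  continuous_flattenIn c hn hU hUs isShellCutoff_outerCutoff continuous_const fun x hx => by
    rw [flatten_of_eq_one (outerCutoff_of_ge (by linarith))]

lemma homotopic_flattenIn_neckCutoff : Homotopic U (flattenIn c neckCutoff U U) := by
  refine (homotopic_flattenIn_zero c hU hUs).trans ?_
  have hc := c.isOpenEmbedding.continuous
  have hfc : Continuous fun y => (U (c y) : Euc (m + 1)) := by fun_prop
  have hfar : ∀ (t : unitInterval), ∀ x ∉ Metric.closedBall (0 : Euc n) 3,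
      sphereProj m (flatten ((t : ℝ) • neckCutoff) (fun y => (U (c y) : Euc (m + 1))) x) =
        U (c x) := fun t x hx => by
    have hx3 : 3 < ‖x‖ := not_le.1 (mt mem_closedBall_zero_iff.2 hx)
    exact sphereProj_flatten_of_eq_zero c hx3.le <| by
      rw [Pi.smul_apply, neckCutoff_eq_zero fun h => by linarith [h.2], smul_zero]
  have hom := homotopic_extend_of_eq_off_compact c.isOpenEmbedding hU (isCompact_closedBall 0 3)
    (hUs.continuous_sphereProj_flatten_smul_neckCutoff hn hfc fun x => norm_eq_of_mem_sphere _)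
    hfar
  simpa only [Icc.coe_zero, Icc.coe_one, zero_smul, one_smul, flattenIn] using hom

end Surgery

section SurgeryAtRadius

variable {n m : ℕ} (c : ConformalChart n) (U : Sph n → Sph m) {a : Sph n} {ρ : ℝ}
  (hρ : ∀ x, ρ ≤ dist (c x) a ↔ 2 ≤ ‖x‖) (hpole : ∀ y ∉ range c, ρ ≤ dist y a)
include hρ hpole

lemma outerMap_eq_ite : outerMap c U = fun y => if ρ ≤ dist y a then flattenIn c neckCutoff U U y
    else sphereProj m (shellMean fun z => (U (c z) : Euc (m + 1))) := by
  funext y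
  by_cases hy : y ∈ range c
  · obtain ⟨x, rfl⟩ := hy
    simp only [hρ, outerMap, flattenIn_apply]
    split_ifs with hx
    · rw [flatten, flatten, neckCutoff_of_ge hx]
    · rw [flatten_of_eq_one (innerCutoff_of_le (not_le.1 hx).le)]
  · rw [if_pos (hpole y hy), outerMap, flattenIn_of_notMem_range c hy,
      flattenIn_of_notMem_range c hy]

lemma innerBubble_eq_ite : innerBubble c U = fun y => if ρ ≤ dist y a then
    sphereProj m (shellMean fun z => (U (c z) : Euc (m + 1))) else
      flattenIn c neckCutoff U U y := by
  funext y
  by_cases hy : y ∈ range c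
  · obtain ⟨x, rfl⟩ := hy
    simp only [hρ, innerBubble, flattenIn_apply]
    split_ifs with hx
    · rw [flatten_of_eq_one (outerCutoff_of_ge hx)]
    · rw [flatten, flatten, neckCutoff_of_le (not_le.1 hx).le]
  · rw [if_pos (hpole y hy), innerBubble, flattenIn_of_notMem_range c hy]

end SurgeryAtRadius

section SurgeryInStereoChart

variable {n m : ℕ} (a : Sph n) {r : ℝ} (hr : 0 < r)

lemma dist_scale_stereoChart_sq (x : Euc n) : dist ((stereoChart a).scale r hr x) a ^ 2 =
    4 * (r * ‖x‖) ^ 2 / ((r * ‖x‖) ^ 2 + 4) := by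
  have h := dist_stereoChart_sq a (r • x)
  rwa [norm_smul, Real.norm_of_nonneg hr.le] at h

lemma dist_scale_stereoChart_lt_two (x : Euc n) : dist ((stereoChart a).scale r hr x) a < 2 := by
  refine lt_of_pow_lt_pow_left₀ 2 zero_le_two ?_
  rw [dist_scale_stereoChart_sq, div_lt_iff₀ (by positivity)]
  linarith

lemma dist_scale_stereoChart_le_iff {x y : Euc n} :
    dist ((stereoChart a).scale r hr x) a ≤ dist ((stereoChart a).scale r hr y) a ↔
      ‖x‖ ≤ ‖y‖ := by
  have hsq : ‖x‖ ≤ ‖y‖ ↔ (r * ‖x‖) ^ 2 ≤ (r * ‖y‖) ^ 2 := by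
    rw [pow_le_pow_iff_left₀ (by positivity) (by positivity) two_ne_zero,
      mul_le_mul_iff_right₀ hr]
  rw [← pow_le_pow_iff_left₀ dist_nonneg dist_nonneg two_ne_zero, dist_scale_stereoChart_sq,
    dist_scale_stereoChart_sq, div_le_div_iff₀ (by positivity) (by positivity), hsq]
  constructor <;> intro h <;> linarith

lemma dist_eq_two_of_notMem_range_scale_stereoChart {y : Sph n}
    (hy : y ∉ range ((stereoChart a).scale r hr)) : dist y a = 2 := by
  have hpole : y ∈ ({-a} : Set (Sph n)) := by
    by_contra h
    exact hy (((stereoChart a).scale r hr).range_eq.symm ▸ h)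
  rw [mem_singleton_iff.1 hpole, dist_neg_self]

variable {U : Sph n → Sph m}

theorem homotopic_outerMap_of_nullHomotopic_innerBubble (hn : 1 ≤ n) (hU : Continuous U)
    (hUs : NearlyConstantOnShell fun x => (U ((stereoChart a).scale r hr x) : Euc (m + 1)))
    (hnull : NullHomotopic (innerBubble ((stereoChart a).scale r hr) U)) :
    Homotopic U (outerMap ((stereoChart a).scale r hr) U) := by
  set c := (stereoChart a).scale r hr
  obtain ⟨z, hz⟩ := exists_norm_eq_two hn
  have hlt : dist (c z) a < 2 := dist_scale_stereoChart_lt_two a hr z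
  have hiff : ∀ x, dist (c z) a ≤ dist (c x) a ↔ 2 ≤ ‖x‖ := fun x => by
    rw [dist_scale_stereoChart_le_iff, hz]
  have hpole : ∀ y ∉ range c, dist (c z) a ≤ dist y a := fun y hy =>
    (dist_eq_two_of_notMem_range_scale_stereoChart a hr hy).symm ▸ hlt.le
  have hpos : 0 < dist (c z) a := by
    refine dist_nonneg.lt_of_ne fun h => ?_
    have := (dist_scale_stereoChart_le_iff a hr (x := z) (y := 0)).1 (h ▸ dist_nonneg)
    rw [hz, norm_zero] at this
    linarith
  have hneck := homotopic_flattenIn_neckCutoff c hn hU hUs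
  rw [innerBubble_eq_ite c U hiff hpole] at hnull
  rw [outerMap_eq_ite c U hiff hpole]
  refine hneck.trans (homotopic_const_inside_of_nullHomotopic a hpos hlt.le hneck.continuous_right
    (fun y hy => ?_) hnull)
  obtain ⟨x, rfl⟩ : y ∈ range c := by
    by_contra h
    exact hlt.ne (hy.symm.trans (dist_eq_two_of_notMem_range_scale_stereoChart a hr h))
  have hx : ‖x‖ = 2 := le_antisymm
    (hz ▸ (dist_scale_stereoChart_le_iff a hr).1 hy.le) ((hiff x).1 hy.ge)
  rw [flattenIn_apply, flatten_of_eq_one]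
  rw [neckCutoff_of_le hx.le, outerCutoff_of_ge hx.ge]

end SurgeryInStereoChart

section ChartEnergy

variable {n : ℕ} (c : ConformalChart n) (hn : 1 ≤ n) {p : ℝ} {M : Type*} [PseudoMetricSpace M]
  {v : Sph n → M}
include hn

lemma ConformalChart.range_ae_eq_univ : range c =ᵐ[μH[n]] (univ : Set (Sph n)) := by
  have := Measure.nullSingletonClass_hausdorff (Sph n) (d := (n : ℝ)) (by exact_mod_cast hn)
  rw [c.range_eq, ae_eq_univ, compl_compl, measure_singleton]

lemma ConformalChart.energyOn_image_univ (hv : Continuous v) {A : Set (Euc n)}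
    (hA : MeasurableSet A) :
    energyOn n p v (c '' A) univ = energyOn n p (fun x => v (c x)) A univ := by
  refine Eq.trans ?_ (c.energyOn_image n.cast_nonneg p hv hA .univ)
  rw [image_univ, energyOn, energyOn, Measure.restrict_congr_set (c.range_ae_eq_univ hn)]

lemma ConformalChart.energyOn_univ (hv : Continuous v) :
    energyOn n p v univ univ = energyOn n p (fun x => v (c x)) univ univ := by
  rw [← c.energyOn_image_univ hn hv .univ, image_univ, energyOn, energyOn,
    Measure.restrict_congr_set (c.range_ae_eq_univ hn)]

end ChartEnergy

section AlmostMinimizers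

variable {n m : ℕ} {p : ℝ} {η : ℝ≥0∞} {U w : Sph n → Sph m}

/-- A continuous map of finite energy which minimises the energy in its homotopy class up to the
error `η`. -/
structure IsAlmostMinimizer (p : ℝ) (η : ℝ≥0∞) (U : Sph n → Sph m) : Prop where
  continuous : Continuous U
  energyOn_ne_top : energyOn n p U univ univ ≠ ∞
  le_add : ∀ w : Sph n → Sph m, Continuous w → Homotopic w U →
    energyOn n p U univ univ ≤ energyOn n p w univ univ + η

lemma energyOn_innerRegion_add_shell {M : Type*} [PseudoMetricSpace M] (p : ℝ) (f : Euc n → M) :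
    energyOn n p f (innerRegion n) univ + energyOn n p f (shell n) univ =
      energyOn n p f (innerRegion n ∪ shell n) univ :=
  (lintegral_union measurableSet_shell
    (disjoint_left.2 fun _ => notMem_shell_of_mem_innerRegion)).symm

lemma energyOn_innerRegion_add_outerRegion_le {M : Type*} [PseudoMetricSpace M] (p : ℝ)
    (f : Euc n → M) : energyOn n p f (innerRegion n) univ +
      energyOn n p f (outerRegion n) (outerRegion n) ≤ energyOn n p f univ univ := by
  have hdisj : Disjoint (innerRegion n) (outerRegion n) :=
    disjoint_left.2 fun x (hx : ‖x‖ ≤ 1) (hx' : 3 ≤ ‖x‖) => by linarith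
  calc _ ≤ energyOn n p f (innerRegion n) univ + energyOn n p f (outerRegion n) univ := by
        gcongr
        exact energyOn_mono n p f subset_rfl (subset_univ _)
    _ = energyOn n p f (innerRegion n ∪ outerRegion n) univ :=
        (lintegral_union measurableSet_outerRegion hdisj).symm
    _ ≤ _ := energyOn_mono n p f (subset_univ _) subset_rfl

lemma IsAlmostMinimizer.energyOn_innerRegion_le (hU : IsAlmostMinimizer p η U) (hn : 1 ≤ n)
    (c : ConformalChart n) (hw : Continuous w) (hwU : Homotopic w U) {S : ℝ≥0∞}
    (hS : energyOn n p w univ univ ≤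
      energyOn n p (fun x => U (c x)) (outerRegion n) (outerRegion n) + S) :
    energyOn n p (fun x => U (c x)) (innerRegion n) univ ≤ S + η := by
  have hchart := c.energyOn_univ (p := p) hn hU.continuous
  have hfin : energyOn n p (fun x => U (c x)) (outerRegion n) (outerRegion n) ≠ ∞ :=
    ne_top_of_le_ne_top (hchart ▸ hU.energyOn_ne_top)
      (energyOn_mono n p _ (subset_univ _) (subset_univ _))
  rw [← ENNReal.add_le_add_iff_right hfin]
  calc _ ≤ energyOn n p (fun x => U (c x)) univ univ :=
        energyOn_innerRegion_add_outerRegion_le p _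
    _ ≤ energyOn n p w univ univ + η := hchart ▸ hU.le_add w hw hwU
    _ ≤ energyOn n p (fun x => U (c x)) (outerRegion n) (outerRegion n) + S + η := by gcongr
    _ = _ := by ring

end AlmostMinimizers

section SurgeryEnergy

variable {n : ℕ} {p : ℝ}

theorem exists_energyOn_surgery_le (hn : 1 ≤ n) (hp : n < p) (m : ℕ) :
    ∃ C : ℝ, 0 < C ∧ ∀ (c : ConformalChart n) (U : Sph n → Sph m), Continuous U →
      NearlyConstantOnShell (fun x => (U (c x) : Euc (m + 1))) →
      energyOn n p (outerMap c U) univ univ ≤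
          energyOn n p (fun x => U (c x)) (outerRegion n) (outerRegion n) +
            ENNReal.ofReal C * energyOn n p (fun x => U (c x)) (shell n) univ ∧
        energyOn n p (innerBubble c U) univ univ ≤
          energyOn n p (fun x => U (c x)) (innerRegion n) (innerRegion n) +
            ENNReal.ofReal C * energyOn n p (fun x => U (c x)) (shell n) univ := by
  obtain ⟨C₁, hC₁, houter⟩ := exists_energyOn_flatten_innerCutoff_le hn hp m
  obtain ⟨C₂, hC₂, hinner⟩ := exists_energyOn_flatten_outerCutoff_le hn hp m
  have hle : max C₁ C₂ ≤ ENNReal.ofReal ((max C₁ C₂).toReal + 1) := by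
    rw [← ENNReal.ofReal_toReal (max_ne_top hC₁ hC₂)]
    exact ENNReal.ofReal_le_ofReal (by simp)
  refine ⟨(max C₁ C₂).toReal + 1, by positivity, fun c U hU hUs => ?_⟩
  have hc := c.isOpenEmbedding.continuous
  have hf : Continuous fun x => (U (c x) : Euc (m + 1)) := by fun_prop
  have hf1 : ∀ x, ‖(U (c x) : Euc (m + 1))‖ = 1 := fun x => norm_eq_of_mem_sphere _
  constructor
  · rw [c.energyOn_univ hn (continuous_outerMap c hn hU hUs)]
    simp only [outerMap, flattenIn_apply]
    refine (houter _ hf hf1 hUs).trans ?_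
    gcongr ?_ + ?_ * ?_
    exacts [le_rfl, (le_max_left _ _).trans hle, le_rfl]
  · rw [c.energyOn_univ hn (continuous_innerBubble c hn hU hUs)]
    simp only [innerBubble, flattenIn_apply]
    refine (hinner _ hf hf1 hUs).trans ?_
    gcongr ?_ + ?_ * ?_
    exacts [le_rfl, (le_max_right _ _).trans hle, le_rfl]

end SurgeryEnergy

section HoleFilling

lemma le_ofReal_mul_add_of_le {A B η : ℝ≥0∞} {C : ℝ} (hC : 0 ≤ C)
    (h : A ≤ ENNReal.ofReal C * B + η) :
    A ≤ ENNReal.ofReal (C / (C + 1)) * (A + B) + η := by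
  set t := ENNReal.ofReal (1 / (C + 1))
  set q := ENNReal.ofReal (C / (C + 1))
  have hsum : q + t = 1 := by
    rw [← ENNReal.ofReal_add (by positivity) (by positivity), ← add_div,
      div_self (by positivity), ENNReal.ofReal_one]
  have hmul : t * ENNReal.ofReal C = q := by
    rw [← ENNReal.ofReal_mul (by positivity), one_div_mul_eq_div]
  calc A = q * A + t * A := by rw [← add_mul, hsum, one_mul]
    _ ≤ q * A + t * (ENNReal.ofReal C * B + η) := by gcongr
    _ = q * (A + B) + t * η := by rw [mul_add t, ← mul_assoc, hmul]; ring
    _ ≤ q * (A + B) + η := by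
        gcongr
        exact mul_le_of_le_one_left' (hsum ▸ le_add_self)

lemma le_ofReal_one_sub_div_mul_of_le {A B : ℝ≥0∞} {ε δ : ℝ} (hε : 0 ≤ ε) (hδ : 0 < δ)
    (hAB : A + B ≤ ENNReal.ofReal δ) (hB : ENNReal.ofReal ε ≤ B) :
    A ≤ ENNReal.ofReal (1 - ε / δ) * (A + B) := by
  have hεδ : ε ≤ δ := (ENNReal.ofReal_le_ofReal_iff hδ.le).1 ((hB.trans le_add_self).trans hAB)
  have hsum : ENNReal.ofReal (1 - ε / δ) + ENNReal.ofReal (ε / δ) = 1 := by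
    rw [← ENNReal.ofReal_add (by rw [sub_nonneg, div_le_one hδ]; exact hεδ) (by positivity),
      sub_add_cancel, ENNReal.ofReal_one]
  have hle : ENNReal.ofReal (ε / δ) * (A + B) ≤ B := by
    calc _ ≤ ENNReal.ofReal (ε / δ) * ENNReal.ofReal δ := by gcongr
      _ = ENNReal.ofReal ε := by
          rw [← ENNReal.ofReal_mul (by positivity), div_mul_cancel₀ _ hδ.ne']
      _ ≤ B := hB
  have hfin : ENNReal.ofReal (ε / δ) * (A + B) ≠ ∞ :=
    ENNReal.mul_ne_top ENNReal.ofReal_ne_top (ne_top_of_le_ne_top ENNReal.ofReal_ne_top hAB)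
  rw [← ENNReal.add_le_add_iff_right hfin, ← add_mul, hsum, one_mul]
  gcongr

variable {n m : ℕ} (a : Sph n) {s : ℝ} (hs : 0 < s)

lemma ball_subset_image_innerRegion (hs1 : s ≤ 1) : Metric.ball a s ⊆
    (stereoChart a).scale (2 * s) (by positivity) '' innerRegion n := fun y hy => by
  obtain ⟨x, hx, rfl⟩ := ball_subset_image_stereoChart a hs1 hy
  have h2s : 0 < 2 * s := by positivity
  refine ⟨(2 * s)⁻¹ • x, ?_, congrArg (stereoChart a) (smul_inv_smul₀ h2s.ne' x)⟩
  rw [mem_ball_zero_iff] at hx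
  change ‖(2 * s)⁻¹ • x‖ ≤ 1
  rw [norm_smul, norm_inv, Real.norm_of_nonneg h2s.le, inv_mul_le_one₀ h2s]
  exact hx.le

lemma image_innerRegion_union_shell_subset_ball :
    (stereoChart a).scale (2 * s) (by positivity) '' (innerRegion n ∪ shell n) ⊆
      Metric.ball a (6 * s) := by
  rintro _ ⟨x, hx, rfl⟩
  refine image_stereoChart_subset_ball a (6 * s) ⟨(2 * s) • x, ?_, rfl⟩
  have hx3 : ‖x‖ < 3 := hx.elim (fun h : ‖x‖ ≤ 1 => by linarith) fun h => h.2
  rw [mem_ball_zero_iff, norm_smul, Real.norm_of_nonneg (by positivity)]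
  nlinarith

variable {p : ℝ} {U : Sph n → Sph m}

lemma energyOn_innerBubble_lt {c : ConformalChart n} {δ ε C : ℝ} (hδ : 0 < δ) (hC : 0 < C)
    (hε : ε ≤ δ / 4 / C)
    (hinner : energyOn n p (innerBubble c U) univ univ ≤
      energyOn n p (fun x => U (c x)) (innerRegion n) (innerRegion n) +
        ENNReal.ofReal C * energyOn n p (fun x => U (c x)) (shell n) univ)
    (hsmall : energyOn n p (fun x => U (c x)) (innerRegion n) univ ≤ ENNReal.ofReal (2 / 3 * δ))
    (hshell : energyOn n p (fun x => U (c x)) (shell n) univ ≤ ENNReal.ofReal ε) :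
    energyOn n p (innerBubble c U) univ univ < ENNReal.ofReal δ := by
  have hCε : C * ε ≤ δ / 4 := by rwa [mul_comm, ← le_div_iff₀ hC]
  calc energyOn n p (innerBubble c U) univ univ
      ≤ ENNReal.ofReal (2 / 3 * δ) + ENNReal.ofReal C * ENNReal.ofReal ε := by
        refine hinner.trans (add_le_add ?_ (mul_le_mul' le_rfl hshell))
        exact (energyOn_mono n p _ subset_rfl (subset_univ _)).trans hsmall
    _ ≤ ENNReal.ofReal (2 / 3 * δ + δ / 4) := by
        rw [← ENNReal.ofReal_mul hC.le, ENNReal.ofReal_add (by positivity) (by positivity)]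
        gcongr
    _ < ENNReal.ofReal δ := (ENNReal.ofReal_lt_ofReal_iff hδ).2 (by linarith)

lemma exists_energyOn_innerRegion_le_of_isAlmostMinimizer (hn : 1 ≤ n) (hp : n < p) {δ : ℝ}
    (hδ : 0 < δ) (hnull : ∀ u : Sph n → Sph m, Continuous u →
      energyOn n p u univ univ < ENNReal.ofReal δ → NullHomotopic u) :
    ∃ θ ∈ Ioo (0 : ℝ) 1, ∀ (U : Sph n → Sph m) (η : ℝ≥0∞), IsAlmostMinimizer p η U →
      ∀ (a : Sph n) (r : ℝ) (hr : 0 < r) (c : ConformalChart n), c = (stereoChart a).scale r hr →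
        energyOn n p (fun x => U (c x)) (innerRegion n) univ +
          energyOn n p (fun x => U (c x)) (shell n) univ ≤ ENNReal.ofReal (2 / 3 * δ) →
        energyOn n p (fun x => U (c x)) (innerRegion n) univ ≤ ENNReal.ofReal θ *
          (energyOn n p (fun x => U (c x)) (innerRegion n) univ +
            energyOn n p (fun x => U (c x)) (shell n) univ) + η := by
  have hp1 : 1 ≤ p := le_trans (mod_cast hn) hp.le
  obtain ⟨ε₀, hε₀, hnear⟩ := exists_nearlyConstantOnShell_of_energyOn_le n hn (Euc (m + 1)) hp1
  obtain ⟨C, hC, hsurgery⟩ := exists_energyOn_surgery_le hn hp m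
  set ε := min ε₀ (δ / 4 / C)
  have hε : 0 < ε := by positivity
  refine ⟨max (C / (C + 1)) (1 - ε / δ), ⟨lt_max_of_lt_left (by positivity), max_lt ?_ ?_⟩,
    fun U η hU a r hr c hc hsmall => ?_⟩
  · rw [div_lt_one (by positivity)]
    linarith
  · have : 0 < ε / δ := by positivity
    linarith
  obtain hshell | hshell :=
    le_total (energyOn n p (fun x => U (c x)) (shell n) univ) (ENNReal.ofReal ε)
  · have hcont : Continuous fun x => (U (c x) : Euc (m + 1)) :=
      continuous_subtype_val.comp (hU.continuous.comp c.isOpenEmbedding.continuous)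
    have hUs : NearlyConstantOnShell fun x => (U (c x) : Euc (m + 1)) :=
      hnear _ hcont (fun _ => norm_eq_of_mem_sphere _)
        (hshell.trans (ENNReal.ofReal_le_ofReal (min_le_left _ _)))
    obtain ⟨houter, hinner⟩ := hsurgery c U hU.continuous hUs
    have hbubble : NullHomotopic (innerBubble c U) :=
      hnull _ (continuous_innerBubble c hn hU.continuous hUs) (energyOn_innerBubble_lt hδ hC
        (min_le_right _ _) hinner (le_self_add.trans hsmall) hshell)
    have hhom : Homotopic U (outerMap c U) := by
      subst hc
      exact homotopic_outerMap_of_nullHomotopic_innerBubble a hr hn hU.continuous hUs hbubble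
    refine (le_ofReal_mul_add_of_le hC.le (hU.energyOn_innerRegion_le hn c
      (continuous_outerMap c hn hU.continuous hUs) hhom.symm houter)).trans ?_
    gcongr
    exact le_max_left _ _
  · have hδ' : ENNReal.ofReal (2 / 3 * δ) ≤ ENNReal.ofReal δ :=
      ENNReal.ofReal_le_ofReal (by linarith)
    refine (le_ofReal_one_sub_div_mul_of_le hε.le hδ (hsmall.trans hδ') hshell).trans
      (le_add_right ?_)
    gcongr
    exact le_max_right _ _

theorem exists_energyOn_ball_le_of_isAlmostMinimizer (hn : 1 ≤ n) (hp : n < p) {δ : ℝ}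
    (hδ : 0 < δ) (hnull : ∀ u : Sph n → Sph m, Continuous u →
      energyOn n p u univ univ < ENNReal.ofReal δ → NullHomotopic u) :
    ∃ θ ∈ Ioo (0 : ℝ) 1, ∀ (U : Sph n → Sph m) (η : ℝ≥0∞), IsAlmostMinimizer p η U →
      ∀ (a : Sph n), ∀ s ∈ Ioc (0 : ℝ) 1,
        energyOn n p U (Metric.ball a (6 * s)) univ ≤ ENNReal.ofReal (2 / 3 * δ) →
        energyOn n p U (Metric.ball a s) univ ≤
          ENNReal.ofReal θ * energyOn n p U (Metric.ball a (6 * s)) univ + η := by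
  obtain ⟨θ, hθ, h⟩ := exists_energyOn_innerRegion_le_of_isAlmostMinimizer hn hp hδ hnull
  refine ⟨θ, hθ, fun U η hU a s hs hsmall => ?_⟩
  set c := (stereoChart a).scale (2 * s) (mul_pos two_pos hs.1)
  have hin : energyOn n p U (Metric.ball a s) univ ≤
      energyOn n p (fun x => U (c x)) (innerRegion n) univ := by
    rw [← c.energyOn_image_univ hn hU.continuous measurableSet_innerRegion]
    exact energyOn_mono n p U (ball_subset_image_innerRegion a hs.1 hs.2) subset_rfl
  have hout : energyOn n p (fun x => U (c x)) (innerRegion n) univ +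
      energyOn n p (fun x => U (c x)) (shell n) univ ≤
        energyOn n p U (Metric.ball a (6 * s)) univ := by
    rw [energyOn_innerRegion_add_shell, ← c.energyOn_image_univ hn hU.continuous
      (measurableSet_innerRegion.union measurableSet_shell)]
    exact energyOn_mono n p U (image_innerRegion_union_shell_subset_ball a hs.1) subset_rfl
  exact hin.trans ((h U η hU a _ _ _ rfl (hout.trans hsmall)).trans
    (add_le_add_left (mul_le_mul' le_rfl hout) η))

end HoleFilling

section Moebius

variable {n : ℕ} {b : Euc (n + 1)}

/-- The conformal factor `(1 - |b|²) / |x - b|²` of the Möbius transformation `moebius b`. -/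
def moebiusFactor (b x : Euc (n + 1)) : ℝ := (1 - ‖b‖ ^ 2) / ‖x - b‖ ^ 2

/-- For `|b| < 1`, the Möbius transformation `x ↦ (1 - |b|²) / |x - b|² • (x - b) - b` of the unit
sphere, which is conformal and isotopic to the identity. The projection is only there to make the
definition total in `b`. -/
def moebius (b : Euc (n + 1)) (x : Sph n) : Sph n :=
  sphereProj n (moebiusFactor b x • ((x : Euc (n + 1)) - b) - b)

lemma one_sub_norm_sq_pos (hb : ‖b‖ < 1) : 0 < 1 - ‖b‖ ^ 2 := by
  nlinarith [norm_nonneg b]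

lemma coe_sub_ne_zero (hb : ‖b‖ < 1) (x : Sph n) : (x : Euc (n + 1)) - b ≠ 0 := by
  intro h
  rw [← sub_eq_zero.1 h, norm_eq_of_mem_sphere] at hb
  exact lt_irrefl _ hb

lemma moebiusFactor_pos (hb : ‖b‖ < 1) (x : Sph n) : 0 < moebiusFactor b x :=
  div_pos (one_sub_norm_sq_pos hb) (pow_pos (norm_pos_iff.2 (coe_sub_ne_zero hb x)) 2)

lemma norm_moebiusFactor_smul_sub (hb : ‖b‖ < 1) (x : Sph n) :
    ‖moebiusFactor b x • ((x : Euc (n + 1)) - b) - b‖ = 1 := by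
  have hd := norm_pos_iff.2 (coe_sub_ne_zero hb x)
  have hinner : inner ℝ (x : Euc (n + 1)) b =
      (1 + ‖b‖ ^ 2 - ‖(x : Euc (n + 1)) - b‖ ^ 2) / 2 := by
    rw [norm_sub_sq_real, norm_eq_of_mem_sphere]
    ring
  rw [← pow_eq_one_iff_of_nonneg (norm_nonneg _) two_ne_zero, moebiusFactor, norm_sub_sq_real,
    norm_smul, mul_pow, real_inner_smul_left, inner_sub_left, real_inner_self_eq_norm_sq, hinner,
    Real.norm_eq_abs, sq_abs]
  field_simp
  ring

lemma coe_moebius (hb : ‖b‖ < 1) (x : Sph n) :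
    (moebius b x : Euc (n + 1)) = moebiusFactor b x • ((x : Euc (n + 1)) - b) - b := by
  have hnorm := norm_moebiusFactor_smul_sub hb x
  rw [moebius, coe_sphereProj (norm_ne_zero_iff.1 (hnorm.trans_ne one_ne_zero)), hnorm, inv_one,
    one_smul]

lemma moebius_zero (x : Sph n) : moebius 0 x = x :=
  Subtype.ext <| by simp [coe_moebius, moebiusFactor]

lemma moebius_neg_moebius (hb : ‖b‖ < 1) (x : Sph n) : moebius (-b) (moebius b x) = x := by
  have hd := norm_pos_iff.2 (coe_sub_ne_zero hb x)
  have hR := one_sub_norm_sq_pos hb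
  have hsub : (moebius b x : Euc (n + 1)) - -b = moebiusFactor b x • ((x : Euc (n + 1)) - b) := by
    rw [coe_moebius hb]
    abel
  have hfactor : moebiusFactor (-b) (moebius b x) * moebiusFactor b x = 1 := by
    rw [moebiusFactor, hsub, norm_neg, norm_smul, Real.norm_of_nonneg (moebiusFactor_pos hb x).le,
      moebiusFactor]
    field_simp
  refine Subtype.ext ?_
  rw [coe_moebius (by rwa [norm_neg]), hsub, smul_smul, hfactor, one_smul]
  abel

lemma dist_moebius_sq (hb : ‖b‖ < 1) (x y : Sph n) : dist (moebius b x) (moebius b y) ^ 2 =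
    moebiusFactor b x * moebiusFactor b y * dist x y ^ 2 := by
  have hx := norm_pos_iff.2 (coe_sub_ne_zero hb x)
  have hy := norm_pos_iff.2 (coe_sub_ne_zero hb y)
  have hsq : √(1 - ‖b‖ ^ 2) ^ 2 = 1 - ‖b‖ ^ 2 := Real.sq_sqrt (one_sub_norm_sq_pos hb).le
  have hinversion := dist_div_norm_sq_smul (coe_sub_ne_zero hb x) (coe_sub_ne_zero hb y)
    (√(1 - ‖b‖ ^ 2))
  simp only [div_pow, hsq, dist_sub_right] at hinversion
  rw [Subtype.dist_eq, coe_moebius hb, coe_moebius hb, dist_sub_right, moebiusFactor,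
    moebiusFactor, hinversion, ← Subtype.dist_eq]
  field_simp

lemma continuous_moebius_comp {T : Type*} [TopologicalSpace T] {b : T → Euc (n + 1)}
    {g : T → Sph n} (hb : Continuous b) (hb1 : ∀ t, ‖b t‖ < 1) (hg : Continuous g) :
    Continuous fun t => moebius (b t) (g t) := by
  refine continuous_sphereProj_comp ?_ fun t =>
    norm_ne_zero_iff.1 ((norm_moebiusFactor_smul_sub (hb1 t) (g t)).trans_ne one_ne_zero)
  have hfactor : Continuous fun t => moebiusFactor (b t) (g t) :=
    Continuous.div₀ (by fun_prop) (by fun_prop) fun t =>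
      pow_ne_zero 2 (norm_ne_zero_iff.2 (coe_sub_ne_zero (hb1 t) (g t)))
  fun_prop

lemma homotopic_comp_moebius (hb : ‖b‖ < 1) {Y : Type*} [TopologicalSpace Y] {u : Sph n → Y}
    (hu : Continuous u) : Homotopic (u ∘ moebius b) u := by
  refine Homotopic.symm ⟨fun z => u (moebius ((z.1 : ℝ) • b) z.2), ?_, ?_, ?_⟩
  · refine hu.comp (continuous_moebius_comp (by fun_prop) (fun z => ?_) continuous_snd)
    rw [norm_smul, Real.norm_of_nonneg z.1.2.1]
    exact (mul_le_of_le_one_left (norm_nonneg b) z.1.2.2).trans_lt hb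
  · simp [moebius_zero]
  · simp

/-- The Möbius transformation `moebius b` as a homeomorphism of the sphere. -/
def moebiusHomeomorph (b : Euc (n + 1)) (hb : ‖b‖ < 1) : Sph n ≃ₜ Sph n where
  toFun := moebius b
  invFun := moebius (-b)
  left_inv := moebius_neg_moebius hb
  right_inv x := by
    simpa only [neg_neg] using moebius_neg_moebius (b := -b) (by rwa [norm_neg]) x
  continuous_toFun := continuous_moebius_comp continuous_const (fun _ => hb) continuous_id
  continuous_invFun :=
    continuous_moebius_comp continuous_const (fun _ => by rwa [norm_neg]) continuous_id

/-- The Möbius transformation `moebius b` as a conformal embedding. -/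
def moebiusEmbedding (b : Euc (n + 1)) (hb : ‖b‖ < 1) : ConformalEmbedding (Sph n) (Sph n) where
  toFun := moebius b
  factor x := moebiusFactor b x
  isOpenEmbedding := (moebiusHomeomorph b hb).isOpenEmbedding
  continuous_factor := Continuous.div₀ (by fun_prop) (by fun_prop) fun x =>
    pow_ne_zero 2 (norm_ne_zero_iff.2 (coe_sub_ne_zero hb x))
  factor_pos := moebiusFactor_pos hb
  dist_sq := dist_moebius_sq hb

lemma image_moebius_univ (hb : ‖b‖ < 1) : moebius b '' univ = univ :=
  image_univ_of_surjective (moebiusHomeomorph b hb).surjective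

lemma energyOn_comp_moebius (hb : ‖b‖ < 1) (p : ℝ) {M : Type*} [PseudoMetricSpace M]
    {u : Sph n → M} (hu : Continuous u) {A : Set (Sph n)} (hA : MeasurableSet A) :
    energyOn n p (u ∘ moebius b) A univ = energyOn n p u (moebius b '' A) univ := by
  have h := (moebiusEmbedding b hb).energyOn_image n.cast_nonneg p hu hA .univ
  exact h.symm.trans (congrArg (energyOn n p u (moebius b '' A)) (image_moebius_univ hb))

end Moebius

section Concentration

variable {n : ℕ} {a x : Sph n} {σ : ℝ}

/-- The parameter `b = -(1 - σ) a`, for which `moebius b` fixes `a` and maps the complement of a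
neighbourhood of `-a` into a ball of radius comparable to `σ` around `a`. -/
def concentrationCenter (a : Sph n) (σ : ℝ) : Euc (n + 1) := -((1 - σ) • (a : Euc (n + 1)))

lemma norm_concentrationCenter (a : Sph n) (hσ1 : σ ≤ 1) : ‖concentrationCenter a σ‖ = 1 - σ := by
  rw [concentrationCenter, norm_neg, norm_smul, Real.norm_of_nonneg (by linarith),
    norm_eq_of_mem_sphere, mul_one]

lemma norm_concentrationCenter_lt_one (a : Sph n) (hσ : σ ∈ Ioc (0 : ℝ) 1) :
    ‖concentrationCenter a σ‖ < 1 := by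
  rw [norm_concentrationCenter a hσ.2]
  linarith [hσ.1]

lemma moebiusFactor_concentrationCenter (a x : Sph n) (hσ1 : σ ≤ 1) :
    moebiusFactor (concentrationCenter a σ) x =
      σ * (2 - σ) / (σ ^ 2 + (1 - σ) * dist x (-a) ^ 2) := by
  rw [moebiusFactor, norm_concentrationCenter a hσ1, Subtype.dist_eq, dist_eq_norm,
    concentrationCenter, coe_neg_sphere, sub_neg_eq_add, sub_neg_eq_add, norm_add_sq_real,
    norm_add_sq_real, norm_smul, real_inner_smul_right, norm_eq_of_mem_sphere,
    norm_eq_of_mem_sphere, Real.norm_of_nonneg (by linarith)]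
  congr 1 <;> ring

lemma moebiusFactor_concentrationCenter_self (a : Sph n) (hσ1 : σ ≤ 1) :
    moebiusFactor (concentrationCenter a σ) a = σ / (2 - σ) := by
  have hσ2 : 2 - σ ≠ 0 := by linarith
  rw [moebiusFactor_concentrationCenter a a hσ1, dist_comm, dist_neg_self,
    show σ ^ 2 + (1 - σ) * 2 ^ 2 = (2 - σ) * (2 - σ) by ring, mul_div_mul_right _ _ hσ2]

lemma moebius_concentrationCenter_self (a : Sph n) (hσ : σ ∈ Ioc (0 : ℝ) 1) :
    moebius (concentrationCenter a σ) a = a := by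
  have hσ2 : 2 - σ ≠ 0 := by linarith [hσ.2]
  have hcoe : (a : Euc (n + 1)) - concentrationCenter a σ = (2 - σ) • (a : Euc (n + 1)) := by
    rw [concentrationCenter]
    module
  refine Subtype.ext ?_
  rw [coe_moebius (norm_concentrationCenter_lt_one a hσ),
    moebiusFactor_concentrationCenter_self a hσ.2, hcoe, smul_smul, div_mul_cancel₀ _ hσ2,
    concentrationCenter]
  module

lemma moebiusFactor_concentrationCenter_le (hσ : σ ∈ Ioc (0 : ℝ) (1 / 2))
    (hx : 3 / 8 ≤ dist x (-a)) : moebiusFactor (concentrationCenter a σ) x ≤ 32 * σ := by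
  obtain ⟨hσ0, hσ2⟩ := hσ
  have hden : 1 / 16 ≤ σ ^ 2 + (1 - σ) * dist x (-a) ^ 2 := by nlinarith
  rw [moebiusFactor_concentrationCenter a x (by linarith), div_le_iff₀ (by linarith)]
  nlinarith

lemma image_moebius_ball_subset_ball (hσ : σ ∈ Ioc (0 : ℝ) (1 / 2)) {z : Sph n}
    (hz : 1 / 2 ≤ dist z (-a)) :
    moebius (concentrationCenter a σ) '' Metric.ball z (1 / 64) ⊆
      Metric.ball (moebius (concentrationCenter a σ) z) σ := by
  have hσ1 : σ ∈ Ioc (0 : ℝ) 1 := ⟨hσ.1, hσ.2.trans (by norm_num)⟩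
  have hb := norm_concentrationCenter_lt_one a hσ1
  rintro _ ⟨x, hx, rfl⟩
  rw [Metric.mem_ball] at hx ⊢
  have hxa : 3 / 8 ≤ dist x (-a) := by linarith [dist_triangle_left z (-a) x]
  have hsq : dist (moebius (concentrationCenter a σ) x) (moebius (concentrationCenter a σ) z) ^ 2
      ≤ (32 * σ) * (32 * σ) * (1 / 64) ^ 2 := by
    have hfz := (moebiusFactor_pos hb z).le
    have hσ0 := hσ.1.le
    rw [dist_moebius_sq hb]
    gcongr
    · exact moebiusFactor_concentrationCenter_le hσ hxa
    · exact moebiusFactor_concentrationCenter_le hσ (by linarith)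
  exact lt_of_pow_lt_pow_left₀ 2 hσ.1.le (hsq.trans_lt (by nlinarith [pow_pos hσ.1 2]))

lemma dist_moebius_concentrationCenter_sq (a x : Sph n) (hσ : σ ∈ Ioc (0 : ℝ) 1) :
    dist (moebius (concentrationCenter a σ) x) a ^ 2 =
      σ ^ 2 * (4 - dist x (-a) ^ 2) / (σ ^ 2 + (1 - σ) * dist x (-a) ^ 2) := by
  have hσ2 : 2 - σ ≠ 0 := by linarith [hσ.2]
  have hxa : dist x a ^ 2 = 4 - dist x (-a) ^ 2 := by
    rw [dist_sq_eq_two_sub_inner, dist_sq_eq_two_sub_inner, coe_neg_sphere, inner_neg_right]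
    ring
  have h := dist_moebius_sq (norm_concentrationCenter_lt_one a hσ) x a
  rw [moebius_concentrationCenter_self a hσ, moebiusFactor_concentrationCenter_self a hσ.2,
    moebiusFactor_concentrationCenter a x hσ.2, hxa] at h
  rw [h]
  field_simp

lemma disjoint_image_moebius_ball (hσ : σ ∈ Ioc (0 : ℝ) (1 / 2)) {z : Sph n}
    (hz : dist z (-a) < 1 / 2) :
    Disjoint (moebius (concentrationCenter a σ) '' Metric.ball z (1 / 64))
      (Metric.ball a (2 * σ)) := by
  obtain ⟨hσ0, hσ2⟩ := hσ
  rw [Set.disjoint_left]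
  rintro _ ⟨x, hx, rfl⟩ hmem
  rw [Metric.mem_ball] at hx hmem
  have hlt : dist (moebius (concentrationCenter a σ) x) a ^ 2 < (2 * σ) ^ 2 := by gcongr
  rw [dist_moebius_concentrationCenter_sq a x ⟨hσ0, hσ2.trans (by norm_num)⟩] at hlt
  have hxa : dist x (-a) ≤ 5 / 8 := by linarith [dist_triangle x z (-a)]
  have hq : dist x (-a) ^ 2 ≤ 25 / 64 := by nlinarith [dist_nonneg (x := x) (y := -a)]
  have hq0 : 0 ≤ dist x (-a) ^ 2 := sq_nonneg _
  generalize dist x (-a) ^ 2 = q at hlt hq hq0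
  have hden : 0 < σ ^ 2 + (1 - σ) * q :=
    add_pos_of_pos_of_nonneg (pow_pos hσ0 2) (mul_nonneg (by linarith) hq0)
  rw [div_lt_iff₀ hden] at hlt
  have hle : σ ^ 2 + (1 - σ) * q ≤ (4 - q) / 4 := by nlinarith
  nlinarith [mul_le_mul_of_nonneg_left hle (sq_nonneg (2 * σ))]

end Concentration

section Normalisation

variable {n : ℕ} {p : ℝ} {M : Type*} [PseudoMetricSpace M] {u : Sph n → M} {B : ℝ≥0∞}

lemma exists_energyOn_ball_half_pow_le (hn : 1 ≤ n) (hE : energyOn n p u univ univ ≠ ∞)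
    (hB : B ≠ 0) : ∃ k : ℕ, ∀ a, energyOn n p u (Metric.ball a ((1 / 2) ^ k)) univ ≤ B := by
  rw [energyOn, Measure.restrict_univ] at hE
  obtain ⟨ε, hε, hsmall⟩ := exists_pos_setLIntegral_lt_of_measure_lt hE hB
  have hmeasure : Tendsto (fun k : ℕ => ENNReal.ofReal ((2 * (1 / 2) ^ k) ^ n) *
      μH[n] (Metric.ball (0 : Euc n) 1)) atTop (𝓝 0) := by
    have hpow : Tendsto (fun k : ℕ => (2 * (1 / 2 : ℝ) ^ k) ^ n) atTop (𝓝 ((2 * 0) ^ n)) :=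
      ((tendsto_pow_atTop_nhds_zero_of_lt_one (by norm_num) (by norm_num)).const_mul 2).pow n
    have hmul := ENNReal.Tendsto.mul_const (b := μH[n] (Metric.ball (0 : Euc n) 1))
      (ENNReal.tendsto_ofReal hpow) (Or.inr Metric.isBounded_ball.measure_lt_top.ne)
    rwa [mul_zero, zero_pow (by omega), ENNReal.ofReal_zero, zero_mul] at hmul
  obtain ⟨k, hk⟩ := (hmeasure.eventually_lt_const hε).exists
  refine ⟨k, fun a => ?_⟩
  rw [energyOn, Measure.restrict_univ]
  exact (hsmall _ ((hausdorffMeasure_sphere_ball_le a (by positivity)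
    (pow_le_one₀ (by norm_num) (by norm_num))).trans_lt hk)).le

lemma exists_concentration_scale (hn : 1 ≤ n) (hE : energyOn n p u univ univ ≠ ∞) (hB : B ≠ 0) :
    (∀ a, energyOn n p u (Metric.ball a 1) univ ≤ B) ∨
      ∃ σ ∈ Ioc (0 : ℝ) (1 / 2), (∃ a, B < energyOn n p u (Metric.ball a (2 * σ)) univ) ∧
        ∀ a, energyOn n p u (Metric.ball a σ) univ ≤ B := by
  classical
  have hex := exists_energyOn_ball_half_pow_le hn hE hB
  have hspec := Nat.find_spec hex
  cases hk : Nat.find hex with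
  | zero =>
    rw [hk] at hspec
    exact Or.inl (by simpa only [pow_zero] using hspec)
  | succ k =>
    rw [hk] at hspec
    have hmin := Nat.find_min hex (k.lt_succ_self.trans_eq hk.symm)
    push Not at hmin
    have htwo : 2 * (1 / 2 : ℝ) ^ (k + 1) = (1 / 2) ^ k := by ring
    refine Or.inr ⟨(1 / 2) ^ (k + 1), ⟨by positivity, ?_⟩, by rwa [htwo], hspec⟩
    exact pow_le_of_le_one (by norm_num) (by norm_num) k.succ_ne_zero

lemma energyOn_comp_moebius_ball_le {a : Sph n} {σ : ℝ} (hu : Continuous u)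
    (hσ : σ ∈ Ioc (0 : ℝ) (1 / 2)) (hE : energyOn n p u univ univ ≠ ∞)
    (hball : ∀ z, energyOn n p u (Metric.ball z σ) univ ≤ B)
    (htotal : energyOn n p u univ univ ≤ B + energyOn n p u (Metric.ball a (2 * σ)) univ)
    (z : Sph n) :
    energyOn n p (u ∘ moebius (concentrationCenter a σ)) (Metric.ball z (1 / 64)) univ ≤ B := by
  have hb := norm_concentrationCenter_lt_one a ⟨hσ.1, hσ.2.trans (by norm_num)⟩
  rw [energyOn_comp_moebius hb p hu Metric.isOpen_ball.measurableSet]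
  rcases le_or_gt (1 / 2) (dist z (-a)) with hz | hz
  · exact (energyOn_mono n p u (image_moebius_ball_subset_ball hσ hz) subset_rfl).trans (hball _)
  · have hfin : energyOn n p u (Metric.ball a (2 * σ)) univ ≠ ∞ :=
      ne_top_of_le_ne_top hE (energyOn_mono n p u (subset_univ _) subset_rfl)
    refine (ENNReal.add_le_add_iff_right hfin).1 (le_trans ?_ htotal)
    rw [energyOn, energyOn, ← lintegral_union Metric.isOpen_ball.measurableSet
      (disjoint_image_moebius_ball hσ hz)]
    exact energyOn_mono n p u (subset_univ _) subset_rfl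

theorem exists_homotopic_energyOn_ball_le {m : ℕ} (hn : 1 ≤ n) {δ : ℝ} (hδ : 0 < δ)
    {u : Sph n → Sph m} (hu : Continuous u)
    (hE : energyOn n p u univ univ ≤ ENNReal.ofReal (7 / 6 * δ)) :
    ∃ v : Sph n → Sph m, Homotopic v u ∧ energyOn n p v univ univ = energyOn n p u univ univ ∧
      ∀ a, energyOn n p v (Metric.ball a (1 / 64)) univ ≤ ENNReal.ofReal (2 / 3 * δ) := by
  have hhalf : ENNReal.ofReal (δ / 2) ≤ ENNReal.ofReal (2 / 3 * δ) :=
    ENNReal.ofReal_le_ofReal (by linarith)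
  have hE' := ne_top_of_le_ne_top ENNReal.ofReal_ne_top hE
  have hδ2 : ENNReal.ofReal (δ / 2) ≠ 0 := (ENNReal.ofReal_pos.2 (by positivity)).ne'
  rcases exists_concentration_scale hn hE' hδ2 with hsmall | ⟨σ, hσ, ⟨a, ha⟩, hball⟩
  · exact ⟨u, .refl hu, rfl, fun a => (energyOn_mono n p u
      (Metric.ball_subset_ball (by norm_num)) subset_rfl).trans ((hsmall a).trans hhalf)⟩
  · have hb := norm_concentrationCenter_lt_one a ⟨hσ.1, hσ.2.trans (by norm_num)⟩
    refine ⟨u ∘ moebius (concentrationCenter a σ), homotopic_comp_moebius hb hu, ?_,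
      energyOn_comp_moebius_ball_le hu hσ hE' (fun z => (hball z).trans hhalf) ?_⟩
    · rw [energyOn_comp_moebius hb p hu .univ, image_moebius_univ hb]
    · calc energyOn n p u univ univ ≤ ENNReal.ofReal (7 / 6 * δ) := hE
        _ = ENNReal.ofReal (2 / 3 * δ) + ENNReal.ofReal (δ / 2) := by
          rw [← ENNReal.ofReal_add (by positivity) (by positivity)]
          ring_nf
        _ ≤ ENNReal.ofReal (2 / 3 * δ) + energyOn n p u (Metric.ball a (2 * σ)) univ :=
          add_le_add_right ha.le _

end Normalisation

section UniformLimits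

variable {X E : Type*} [PseudoMetricSpace E]

lemma exists_tendstoUniformly_of_dist_le_geometric [CompleteSpace E] {f : ℕ → X → E} {c r : ℝ}
    (hr0 : 0 ≤ r) (hr1 : r < 1) (hf : ∀ j x, dist (f j x) (f (j + 1) x) ≤ c * r ^ j) :
    ∃ w, TendstoUniformly f w atTop := by
  choose w hw using fun x =>
    cauchySeq_tendsto_of_complete (cauchySeq_of_le_geometric r c hr1 fun j => hf j x)
  refine ⟨w, Metric.tendstoUniformly_iff.2 fun ε hε => ?_⟩
  have hrate : Tendsto (fun j : ℕ => c * r ^ j / (1 - r)) atTop (𝓝 (c * 0 / (1 - r))) :=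
    ((tendsto_pow_atTop_nhds_zero_of_lt_one hr0 hr1).const_mul c).div_const _
  rw [mul_zero, zero_div] at hrate
  filter_upwards [hrate.eventually_lt_const hε] with j hj x
  rw [dist_comm]
  exact (dist_le_of_le_geometric_of_tendsto r c hr1 (fun i => hf i x) (hw x) j).trans_lt hj

lemma exists_diagonal_tendstoUniformly {F : ℕ → ℕ → X → E} {f : ℕ → X → E} {w : X → E}
    (hF : ∀ j, TendstoUniformly (F j) (f j) atTop) (hf : TendstoUniformly f w atTop) :
    ∃ κ : ℕ → ℕ, Tendsto κ atTop atTop ∧ TendstoUniformly (fun i => F i (κ i)) w atTop := by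
  have hclose (i : ℕ) : ∃ k, i ≤ k ∧ ∀ x, dist (f i x) (F i k x) < 1 / ((i : ℝ) + 1) :=
    ((eventually_ge_atTop i).and
      (Metric.tendstoUniformly_iff.1 (hF i) _ Nat.one_div_pos_of_nat)).exists
  choose κ hκ hdist using hclose
  refine ⟨κ, tendsto_atTop_mono hκ tendsto_id, Metric.tendstoUniformly_iff.2 fun ε hε => ?_⟩
  filter_upwards [Metric.tendstoUniformly_iff.1 hf _ (half_pos hε),
    tendsto_one_div_add_atTop_nhds_zero_nat.eventually_lt_const (half_pos hε)] with i hi hi' x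
  linarith [dist_triangle (w x) (f i x) (F i (κ i) x), hi x, hdist i x]

variable [TopologicalSpace X]

lemma exists_subseq_tendstoUniformly [CompactSpace X] [T2Space E] {F : ℕ → ℕ → X → E} {K : Set E}
    (hK : IsCompact K) (hF : ∀ j, Equicontinuous (F j)) (hFK : ∀ j k x, F j k x ∈ K) :
    ∃ (ψ : ℕ → ℕ) (f : ℕ → X → E), StrictMono ψ ∧
      ∀ j, TendstoUniformly (fun k => F j (ψ k)) (f j) atTop := by
  let G (j k : ℕ) : BoundedContinuousFunction X E := .mkOfCompact ⟨F j k, (hF j).continuous k⟩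
  have hcompact (j : ℕ) : IsCompact (closure (range (G j))) := by
    refine BoundedContinuousFunction.arzela_ascoli K hK _ ?_ fun x V hV => ?_
    · rintro _ x ⟨k, rfl⟩
      exact hFK j k x
    · filter_upwards [hF j x V hV] with y hy
      rintro ⟨_, k, rfl⟩
      exact hy k
  obtain ⟨f, -, ψ, hψ, hlim⟩ := (isCompact_univ_pi hcompact).tendsto_subseq
    (x := fun k j => G j k) fun k j _ => subset_closure ⟨k, rfl⟩
  exact ⟨ψ, fun j => f j, hψ, fun j =>
    BoundedContinuousFunction.tendsto_iff_tendstoUniformly.1 (tendsto_pi_nhds.1 hlim j)⟩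

lemma exists_diagonal_tendstoUniformly_of_dist_le [CompactSpace X] [T2Space E] [CompleteSpace E]
    {F : ℕ → ℕ → X → E} {K : Set E} (hK : IsCompact K) (hF : ∀ j, Equicontinuous (F j))
    (hFK : ∀ j k x, F j k x ∈ K) {e : ℕ → ℕ → ℝ} {c r : ℝ} (hr0 : 0 ≤ r) (hr1 : r < 1)
    (he : ∀ j, Tendsto (e j) atTop (𝓝 (c * r ^ j)))
    (hdist : ∀ j k x, dist (F j k x) (F (j + 1) k x) ≤ e j k) :
    ∃ (κ : ℕ → ℕ) (w : X → E), Tendsto κ atTop atTop ∧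
      TendstoUniformly (fun i => F i (κ i)) w atTop := by
  obtain ⟨ψ, f, hψ, hlim⟩ := exists_subseq_tendstoUniformly hK hF hFK
  have hf (j : ℕ) (x : X) : dist (f j x) (f (j + 1) x) ≤ c * r ^ j :=
    le_of_tendsto_of_tendsto' (((hlim j).tendsto_at x).dist ((hlim (j + 1)).tendsto_at x))
      ((he j).comp hψ.tendsto_atTop) fun k => hdist j (ψ k) x
  obtain ⟨w, hw⟩ := exists_tendstoUniformly_of_dist_le_geometric hr0 hr1 hf
  obtain ⟨κ, hκ, hdiag⟩ := exists_diagonal_tendstoUniformly hlim hw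
  exact ⟨ψ ∘ κ, w, hψ.tendsto_atTop.comp hκ, hdiag⟩

end UniformLimits

/-- The radii `1/64, 1/(64·6), 1/(64·36), …` at which energies decay and averages are taken. -/
def scaleSeq (j : ℕ) : ℝ := 1 / 64 * (1 / 6) ^ j

lemma scaleSeq_mem_Ioc (j : ℕ) : scaleSeq j ∈ Ioc (0 : ℝ) (1 / 64) :=
  ⟨by unfold scaleSeq; positivity,
    mul_le_of_le_one_right (by norm_num) (pow_le_one₀ (by norm_num) (by norm_num))⟩

lemma scaleSeq_mem_Ioc_one (j : ℕ) : scaleSeq j ∈ Ioc (0 : ℝ) 1 :=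
  Ioc_subset_Ioc_right (by norm_num) (scaleSeq_mem_Ioc j)

lemma scaleSeq_succ (j : ℕ) : scaleSeq (j + 1) = scaleSeq j / 6 := by
  rw [scaleSeq, scaleSeq, pow_succ]
  ring

lemma energyOn_ball_scaleSeq_le {X M : Type*} [MetricSpace X] [MeasurableSpace X] [BorelSpace X]
    [PseudoMetricSpace M] {d p B θ η : ℝ} {v : X → M} {a : X} (hB : 0 ≤ B)
    (hθ : θ ∈ Ioo (0 : ℝ) 1) (hη : 0 ≤ η)
    (hstep : ∀ s ∈ Ioc (0 : ℝ) 1, energyOn d p v (Metric.ball a (6 * s)) univ ≤ ENNReal.ofReal B →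
      energyOn d p v (Metric.ball a s) univ ≤
        ENNReal.ofReal θ * energyOn d p v (Metric.ball a (6 * s)) univ + ENNReal.ofReal η)
    (h0 : energyOn d p v (Metric.ball a (1 / 64)) univ ≤ ENNReal.ofReal B) (j : ℕ) :
    energyOn d p v (Metric.ball a (scaleSeq j)) univ ≤
      ENNReal.ofReal (B * θ ^ j + η / (1 - θ)) := by
  have hθ1 : 0 < 1 - θ := sub_pos.2 hθ.2
  have hθ0 := hθ.1.le
  induction j with
  | zero =>
    rw [scaleSeq, pow_zero, pow_zero, mul_one, mul_one]
    exact h0.trans (ENNReal.ofReal_le_ofReal (le_add_of_nonneg_right (div_nonneg hη hθ1.le)))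
  | succ j ih =>
    have hsix : 6 * scaleSeq (j + 1) = scaleSeq j := by rw [scaleSeq_succ]; ring
    have h := hstep _ (scaleSeq_mem_Ioc_one (j + 1))
    rw [hsix] at h
    calc energyOn d p v (Metric.ball a (scaleSeq (j + 1))) univ
        ≤ ENNReal.ofReal θ * energyOn d p v (Metric.ball a (scaleSeq j)) univ +
          ENNReal.ofReal η :=
          h ((energyOn_mono d p v (Metric.ball_subset_ball (scaleSeq_mem_Ioc j).2)
            subset_rfl).trans h0)
      _ ≤ ENNReal.ofReal θ * ENNReal.ofReal (B * θ ^ j + η / (1 - θ)) + ENNReal.ofReal η :=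
          add_le_add_left (mul_le_mul' le_rfl ih) _
      _ = ENNReal.ofReal (B * θ ^ (j + 1) + η / (1 - θ)) := by
          rw [← ENNReal.ofReal_mul hθ0, ← ENNReal.ofReal_add (by positivity) hη]
          congr 1
          field_simp
          ring

section Compactness

variable {X : Type*} [MetricSpace X] [MeasurableSpace X] [BorelSpace X] {d : ℝ}
  {p B θ : ℝ} {m : ℕ} {U : ℕ → X → Sph m} {η : ℕ → ℝ}

/-- Sequences of continuous maps whose energies in small balls decay geometrically, up to errors
`η k` tending to zero along the sequence. -/
structure HasEnergyDecay (d p B θ : ℝ) (η : ℕ → ℝ) (U : ℕ → X → Sph m) : Prop where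
  continuous : ∀ k, Continuous (U k)
  bound_nonneg : 0 ≤ B
  rate_mem : θ ∈ Ioo (0 : ℝ) 1
  error_nonneg : ∀ k, 0 ≤ η k
  tendsto_error : Tendsto η atTop (𝓝 0)
  energyOn_ball_le : ∀ k j a, energyOn d p (U k) (Metric.ball a (scaleSeq j)) univ ≤
    ENNReal.ofReal (B * θ ^ j + η k)

namespace HasEnergyDecay

lemma add_nonneg (h : HasEnergyDecay d p B θ η U) (k j : ℕ) : 0 ≤ B * θ ^ j + η k :=
  _root_.add_nonneg (mul_nonneg h.bound_nonneg (pow_nonneg h.rate_mem.1.le j)) (h.error_nonneg k)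

lemma continuous_coe (h : HasEnergyDecay d p B θ η U) (k : ℕ) :
    Continuous (Subtype.val ∘ U k) :=
  continuous_subtype_val.comp (h.continuous k)

lemma tendsto_rpow_inv (h : HasEnergyDecay d p B θ η U) (hp : 1 ≤ p) {C : ℝ} (hC : 0 ≤ C) (j : ℕ) :
    Tendsto (fun k => (C * (B * θ ^ j + η k)) ^ p⁻¹) atTop
      (𝓝 ((C * B) ^ p⁻¹ * (θ ^ p⁻¹) ^ j)) := by
  have hθ := h.rate_mem.1.le
  have hlim := ((h.tendsto_error.const_add (B * θ ^ j)).const_mul C).rpow_const (p := p⁻¹)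
    (Or.inr (inv_nonneg.2 (by linarith)))
  rwa [add_zero, ← mul_assoc, Real.mul_rpow (mul_nonneg hC h.bound_nonneg) (by positivity),
    ← Real.rpow_natCast_mul hθ, mul_comm (j : ℝ), Real.rpow_mul_natCast hθ] at hlim

lemma tendsto_rpow_inv_diagonal (h : HasEnergyDecay d p B θ η U) (hp : 1 ≤ p) (C : ℝ)
    {κ : ℕ → ℕ} (hκ : Tendsto κ atTop atTop) :
    Tendsto (fun i => (C * (B * θ ^ i + η (κ i))) ^ p⁻¹) atTop (𝓝 0) := by
  have hpow := (tendsto_pow_atTop_nhds_zero_of_lt_one h.rate_mem.1.le h.rate_mem.2).const_mul B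
  have hlim := ((hpow.add (h.tendsto_error.comp hκ)).const_mul C).rpow_const (p := p⁻¹)
    (Or.inr (inv_nonneg.2 (by linarith)))
  rwa [mul_zero, add_zero, mul_zero, Real.zero_rpow (inv_pos.2 (by linarith)).ne'] at hlim

variable [CompactSpace X] [IsFiniteMeasure (μH[d] : Measure X)] [LowerAhlforsRegular d X]

lemma one_sub_le_norm_tentAverage (h : HasEnergyDecay d p B θ η U) (hd : 0 ≤ d) (hp : 1 ≤ p)
    (k j : ℕ) {t : ℝ} (ht : t ∈ Ioc 0 (scaleSeq j)) (x : X) :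
    1 - (scaleConst X d * (B * θ ^ j + η k)) ^ p⁻¹ ≤ ‖tentAverage d t (Subtype.val ∘ U k) x‖ :=
  _root_.one_sub_le_norm_tentAverage d hd hp (h.continuous_coe k) (fun _ => norm_eq_of_mem_sphere _)
    ⟨ht.1, ht.2.trans (scaleSeq_mem_Ioc_one j).2⟩ (h.add_nonneg k j)
    ((energyOn_mono d p _ (Metric.ball_subset_ball ht.2) subset_rfl).trans
      (h.energyOn_ball_le k j x))

theorem exists_tendstoUniformly_tentAverage (h : HasEnergyDecay d p B θ η U) (hd : 0 ≤ d)
    (hp : 1 ≤ p) : ∃ (κ : ℕ → ℕ) (w : X → Euc (m + 1)), Tendsto κ atTop atTop ∧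
      TendstoUniformly (fun i => tentAverage d (scaleSeq i) (Subtype.val ∘ U (κ i))) w atTop := by
  have hnorm (k : ℕ) (x : X) : ‖(Subtype.val ∘ U k) x‖ ≤ 1 := (norm_eq_of_mem_sphere _).le
  have hp0 : 0 < p⁻¹ := inv_pos.2 (by linarith)
  refine exists_diagonal_tendstoUniformly_of_dist_le
    (F := fun j k => tentAverage d (scaleSeq j) (Subtype.val ∘ U k))
    (isCompact_closedBall (0 : Euc (m + 1)) 1)
    (fun j => (uniformEquicontinuous_tentAverage d h.continuous_coe hnorm
      (scaleSeq_mem_Ioc_one j)).equicontinuous) (fun j k x => mem_closedBall_zero_iff.2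
      (norm_tentAverage_le d (h.continuous_coe k) (scaleSeq_mem_Ioc_one j) (hnorm k) x))
    (Real.rpow_nonneg h.rate_mem.1.le p⁻¹)
    (Real.rpow_lt_one h.rate_mem.1.le h.rate_mem.2 hp0)
    (h.tendsto_rpow_inv hp (scaleConst_pos X d).le) fun j k x => ?_
  rw [dist_eq_norm, scaleSeq_succ]
  exact norm_tentAverage_sub_tentAverage_div_le d hd hp (h.continuous_coe k)
    (scaleSeq_mem_Ioc_one j) (h.add_nonneg k j) (h.energyOn_ball_le k j x)

end HasEnergyDecay

end Compactness

section Convergence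

variable {X : Type*} [MetricSpace X] [CompactSpace X] [MeasurableSpace X] [BorelSpace X] {d : ℝ}
  [IsFiniteMeasure (μH[d] : Measure X)] {p : ℝ}

lemma energyOn_le_liminf {M : Type*} [PseudoMetricSpace M] (hp : 0 ≤ p) {V : ℕ → X → M}
    (hV : ∀ i, Continuous (V i)) {u : X → M}
    (h : ∀ᵐ x ∂(μH[d] : Measure X), Tendsto (fun i => V i x) atTop (𝓝 (u x))) :
    energyOn d p u univ univ ≤ liminf (fun i => energyOn d p (V i) univ univ) atTop := by
  simp only [energyOn, Measure.restrict_univ]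
  refine le_trans (lintegral_mono_ae ?_)
    (lintegral_liminf_le fun i => measurable_lintegral_energyDensity d p (hV i) _)
  filter_upwards [h] with x hx
  refine le_trans (lintegral_mono_ae ?_)
    (lintegral_liminf_le fun i => measurable_energyDensity_comp d p (hV i) measurable_const
      measurable_id)
  filter_upwards [h] with y hy
  have hlim : Tendsto (fun i => energyDensity d p (V i) x y) atTop (𝓝 (energyDensity d p u x y)) :=
    ENNReal.tendsto_ofReal (((hx.dist hy).rpow_const (Or.inr hp)).div_const _)
  exact hlim.liminf_eq.ge

lemma ae_tendsto_zero_of_tsum_lintegral_enorm_rpow_ne_top {Y G : Type*} [MeasurableSpace Y]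
    {μ : Measure Y} [NormedAddCommGroup G] {f : ℕ → Y → G} (hp : 0 < p)
    (hf : ∀ i, AEMeasurable (fun x => ‖f i x‖ₑ ^ p) μ) (hsum : ∑' i, ∫⁻ x, ‖f i x‖ₑ ^ p ∂μ ≠ ∞) :
    ∀ᵐ x ∂μ, Tendsto (fun i => f i x) atTop (𝓝 0) := by
  rw [← lintegral_tsum hf] at hsum
  filter_upwards [ae_lt_top' (AEMeasurable.tsum hf) hsum] with x hx
  have hroot := (ENNReal.continuous_rpow_const (y := p⁻¹)).tendsto 0 |>.comp
    (ENNReal.tendsto_atTop_zero_of_tsum_ne_top hx.ne)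
  rw [ENNReal.zero_rpow_of_pos (inv_pos.2 hp)] at hroot
  exact tendsto_zero_iff_enorm_tendsto_zero.2
    (hroot.congr fun i => ENNReal.rpow_rpow_inv hp.ne' _)

variable [LowerAhlforsRegular d X] {m : ℕ}

lemma summable_scaleSeq_rpow (hd : 0 < d) : Summable fun j => scaleSeq j ^ d := by
  have hgeom : Summable fun j : ℕ => (1 / 64 : ℝ) ^ d * ((1 / 6) ^ d) ^ j :=
    (summable_geometric_of_lt_one (by positivity)
      (Real.rpow_lt_one (by norm_num) (by norm_num) hd)).mul_left _
  refine hgeom.congr fun j => ?_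
  rw [scaleSeq, Real.mul_rpow (by norm_num) (by positivity), ← Real.rpow_natCast_mul (by norm_num),
    ← Real.rpow_mul_natCast (by norm_num), mul_comm (j : ℝ)]

lemma ae_tendsto_tentAverage_sub {E : Type*} [NormedAddCommGroup E] [NormedSpace ℝ E]
    [CompleteSpace E] (hd : 0 < d) (hp : 1 ≤ p) {V : ℕ → X → E} (hV : ∀ i, Continuous (V i))
    {C : ℝ≥0∞} (hC : C ≠ ∞) (hE : ∀ i, energyOn d p (V i) univ univ ≤ C) :
    ∀ᵐ x ∂(μH[d] : Measure X),
      Tendsto (fun i => tentAverage d (scaleSeq i) (V i) x - V i x) atTop (𝓝 0) := by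
  have hcont (i : ℕ) : Continuous fun x => tentAverage d (scaleSeq i) (V i) x - V i x :=
    (continuous_tentAverage d (hV i) (scaleSeq_mem_Ioc_one i)).sub (hV i)
  refine ae_tendsto_zero_of_tsum_lintegral_enorm_rpow_ne_top (p := p) (by linarith)
    (fun i => ((hcont i).enorm.measurable.pow_const p).aemeasurable) (ne_top_of_le_ne_top ?_
      (ENNReal.tsum_le_tsum fun i => (lintegral_tentAverage_sub_le d hd.le hp (hV i)
        (scaleSeq_mem_Ioc_one i)).trans (mul_le_mul' le_rfl (hE i))))
  rw [ENNReal.tsum_mul_right]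
  exact ENNReal.mul_ne_top ((summable_scaleSeq_rpow hd).mul_left _).tsum_ofReal_ne_top hC

namespace HasEnergyDecay

variable {B θ : ℝ} {η : ℕ → ℝ} {U : ℕ → X → Sph m}

lemma exists_tendstoUniformly_coe (h : HasEnergyDecay d p B θ η U) (hd : 0 ≤ d) (hp : 1 ≤ p) :
    ∃ (κ : ℕ → ℕ) (u : X → Sph m), Tendsto κ atTop atTop ∧ Continuous u ∧
      TendstoUniformly (fun i => tentAverage d (scaleSeq i) (Subtype.val ∘ U (κ i)))
        (Subtype.val ∘ u) atTop := by
  obtain ⟨κ, w, hκ, hw⟩ := h.exists_tendstoUniformly_tentAverage hd hp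
  have hwc : Continuous w := hw.continuous (Frequently.of_forall fun i =>
    continuous_tentAverage d (h.continuous_coe _) (scaleSeq_mem_Ioc_one i))
  have hw1 (x : X) : ‖w x‖ = 1 := by
    have hlim := (hw.tendsto_at x).norm
    refine le_antisymm (le_of_tendsto' hlim fun i => norm_tentAverage_le d (h.continuous_coe _)
      (scaleSeq_mem_Ioc_one i) (fun _ => (norm_eq_of_mem_sphere _).le) x) ?_
    have hlow := (h.tendsto_rpow_inv_diagonal hp (scaleConst X d) hκ).const_sub 1
    rw [sub_zero] at hlow
    exact le_of_tendsto_of_tendsto' hlow hlim fun i =>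
      h.one_sub_le_norm_tentAverage hd hp (κ i) i (right_mem_Ioc.2 (scaleSeq_mem_Ioc i).1) x
  exact ⟨κ, fun x => ⟨w x, mem_sphere_zero_iff_norm.2 (hw1 x)⟩, hκ, hwc.subtype_mk _, hw⟩

lemma exists_homotopic (h : HasEnergyDecay d p B θ η U) (hd : 0 ≤ d) (hp : 1 ≤ p) {κ : ℕ → ℕ}
    {u : X → Sph m} (hκ : Tendsto κ atTop atTop) (hu : Continuous u)
    (hlim : TendstoUniformly (fun i => tentAverage d (scaleSeq i) (Subtype.val ∘ U (κ i)))
      (Subtype.val ∘ u) atTop) : ∃ k, Homotopic u (U k) := by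
  obtain ⟨i, hsmall, hclose⟩ := (((h.tendsto_rpow_inv_diagonal hp (scaleConst X d) hκ).eventually
    (gt_mem_nhds one_pos)).and (Metric.tendstoUniformly_iff.1 hlim 1 one_pos)).exists
  have havg : Homotopic u fun x =>
      sphereProj m (tentAverage d (scaleSeq i) (Subtype.val ∘ U (κ i)) x) :=
    homotopic_sphereProj_of_norm_sub_lt_one hu
      (continuous_tentAverage d (h.continuous_coe _) (scaleSeq_mem_Ioc_one i))
      fun x => (dist_eq_norm _ _).symm.trans_lt (hclose x)
  have hne (t : ℝ) (ht : t ∈ Ioc 0 (scaleSeq i)) (x : X) :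
      tentAverage d t (Subtype.val ∘ U (κ i)) x ≠ 0 := norm_pos_iff.1 <|
    (sub_pos.2 hsmall).trans_le (h.one_sub_le_norm_tentAverage hd hp (κ i) i ht x)
  exact ⟨κ i, havg.trans (homotopic_sphereProj_tentAverage d (h.continuous (κ i))
    (scaleSeq_mem_Ioc_one i) hne).symm⟩

theorem exists_homotopic_ae_tendsto (h : HasEnergyDecay d p B θ η U) (hd : 0 < d) (hp : 1 ≤ p)
    {C : ℝ≥0∞} (hC : C ≠ ∞) (hE : ∀ k, energyOn d p (U k) univ univ ≤ C) :
    ∃ (u : X → Sph m) (κ : ℕ → ℕ), Continuous u ∧ Tendsto κ atTop atTop ∧ (∃ k, Homotopic u (U k)) ∧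
      ∀ᵐ x ∂(μH[d] : Measure X), Tendsto (fun i => U (κ i) x) atTop (𝓝 (u x)) := by
  obtain ⟨κ, u, hκ, hu, hlim⟩ := h.exists_tendstoUniformly_coe hd.le hp
  refine ⟨u, κ, hu, hκ, h.exists_homotopic hd.le hp hκ hu hlim, ?_⟩
  filter_upwards [ae_tendsto_tentAverage_sub hd hp (fun i => h.continuous_coe (κ i)) hC
    fun i => hE (κ i)] with x hx
  refine tendsto_subtype_rng.2 ?_
  simpa using (hlim.tendsto_at x).sub hx

end HasEnergyDecay

end Convergence

section Minimizers

variable {n m : ℕ} {p δ : ℝ} {g : Sph n → Sph m}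

/-- The infimum of the energy over the homotopy class of `g`. -/
def homotopyEnergy (p : ℝ) (g : Sph n → Sph m) : ℝ≥0∞ :=
  sInf {e : ℝ≥0∞ | ∃ v : Sph n → Sph m, Continuous v ∧ Homotopic v g ∧ e = energyOn n p v univ univ}

lemma homotopyEnergy_le {v : Sph n → Sph m} (hvg : Homotopic v g) :
    homotopyEnergy p g ≤ energyOn n p v univ univ :=
  sInf_le ⟨v, hvg.continuous_left, hvg, rfl⟩

lemma exists_homotopic_energyOn_lt {e : ℝ≥0∞} (he : homotopyEnergy p g < e) :
    ∃ v : Sph n → Sph m, Homotopic v g ∧ energyOn n p v univ univ < e := by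
  obtain ⟨_, ⟨v, -, hvg, rfl⟩, hlt⟩ := sInf_lt_iff.1 he
  exact ⟨v, hvg, hlt⟩

lemma isAlmostMinimizer_of_energyOn_le {v : Sph n → Sph m} {η : ℝ≥0∞} (hvg : Homotopic v g)
    (htop : energyOn n p v univ univ ≠ ∞)
    (hv : energyOn n p v univ univ ≤ homotopyEnergy p g + η) : IsAlmostMinimizer p η v where
  continuous := hvg.continuous_left
  energyOn_ne_top := htop
  le_add _ _ hwv := hv.trans (add_le_add_left (homotopyEnergy_le (hwv.trans hvg)) η)

lemma exists_homotopic_energyOn_le_homotopyEnergy_add (hn : 1 ≤ n) (hδ : 0 < δ)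
    (hg : homotopyEnergy p g ≤ ENNReal.ofReal (13 / 12 * δ)) {η : ℝ} (hη : η ∈ Ioc 0 (δ / 12)) :
    ∃ v : Sph n → Sph m, Homotopic v g ∧
      energyOn n p v univ univ ≤ homotopyEnergy p g + ENNReal.ofReal η ∧
      energyOn n p v univ univ ≤ ENNReal.ofReal (7 / 6 * δ) ∧
      ∀ a, energyOn n p v (Metric.ball a (1 / 64)) univ ≤ ENNReal.ofReal (2 / 3 * δ) := by
  obtain ⟨u, hug, hu⟩ := exists_homotopic_energyOn_lt (ENNReal.lt_add_right
    (ne_top_of_le_ne_top ENNReal.ofReal_ne_top hg) (ENNReal.ofReal_pos.2 hη.1).ne')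
  have hu' : energyOn n p u univ univ ≤ ENNReal.ofReal (7 / 6 * δ) := by
    refine hu.le.trans ((add_le_add_left hg _).trans ?_)
    rw [← ENNReal.ofReal_add (by positivity) hη.1.le]
    exact ENNReal.ofReal_le_ofReal (by linarith [hη.2])
  obtain ⟨v, hvu, hE, hball⟩ := exists_homotopic_energyOn_ball_le hn hδ hug.continuous_left hu'
  exact ⟨v, hvu.trans hug, hE.trans_le hu.le, hE.trans_le hu', hball⟩

lemma exists_hasEnergyDecay_of_isAlmostMinimizer (hn : 1 ≤ n) (hp : n < p) (hδ : 0 < δ)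
    (hnull : ∀ u : Sph n → Sph m, Continuous u →
      energyOn n p u univ univ < ENNReal.ofReal δ → NullHomotopic u)
    {U : ℕ → Sph n → Sph m} {η : ℕ → ℝ} (hη : ∀ k, 0 ≤ η k) (hη0 : Tendsto η atTop (𝓝 0))
    (hU : ∀ k, IsAlmostMinimizer p (ENNReal.ofReal (η k)) (U k))
    (hball : ∀ k a, energyOn n p (U k) (Metric.ball a (1 / 64)) univ ≤
      ENNReal.ofReal (2 / 3 * δ)) :
    ∃ θ : ℝ, HasEnergyDecay n p (2 / 3 * δ) θ (fun k => η k / (1 - θ)) U := by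
  obtain ⟨θ, hθ, hstep⟩ := exists_energyOn_ball_le_of_isAlmostMinimizer hn hp hδ hnull
  have hδ' : 0 ≤ 2 / 3 * δ := by positivity
  exact ⟨θ, fun k => (hU k).continuous, hδ', hθ, fun k => div_nonneg (hη k) (sub_pos.2 hθ.2).le,
    by simpa using hη0.div_const (1 - θ), fun k j a => energyOn_ball_scaleSeq_le hδ' hθ (hη k)
      (hstep (U k) _ (hU k) a) (hball k a) j⟩

theorem exists_homotopic_energyOn_le_homotopyEnergy (hn : 1 ≤ n) (hp : n < p) (hδ : 0 < δ)
    (hnull : ∀ u : Sph n → Sph m, Continuous u →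
      energyOn n p u univ univ < ENNReal.ofReal δ → NullHomotopic u)
    (hg : homotopyEnergy p g ≤ ENNReal.ofReal (13 / 12 * δ)) :
    ∃ u : Sph n → Sph m, Homotopic u g ∧ energyOn n p u univ univ ≤ homotopyEnergy p g := by
  have hn1 : (1 : ℝ) ≤ n := by exact_mod_cast hn
  obtain ⟨η, -, hη, hη0⟩ := exists_seq_strictAnti_tendsto' (show 0 < δ / 12 by positivity)
  choose U hUg hUη hUδ hball using fun k =>
    exists_homotopic_energyOn_le_homotopyEnergy_add hn hδ hg (Ioo_subset_Ioc_self (hη k))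
  obtain ⟨θ, hdecay⟩ := exists_hasEnergyDecay_of_isAlmostMinimizer hn hp hδ hnull
    (fun k => (hη k).1.le) hη0 (fun k => isAlmostMinimizer_of_energyOn_le (hUg k)
      (ne_top_of_le_ne_top ENNReal.ofReal_ne_top (hUδ k)) (hUη k)) hball
  obtain ⟨u, κ, -, hκ, ⟨k, hk⟩, hae⟩ :=
    hdecay.exists_homotopic_ae_tendsto (by linarith) (by linarith) ENNReal.ofReal_ne_top hUδ
  have hlim : Tendsto (fun i => homotopyEnergy p g + ENNReal.ofReal (η (κ i))) atTop
      (𝓝 (homotopyEnergy p g)) := by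
    simpa using (ENNReal.tendsto_ofReal (hη0.comp hκ)).const_add (homotopyEnergy p g)
  refine ⟨u, hk.trans (hUg k), ?_⟩
  calc energyOn n p u univ univ
      ≤ liminf (fun i => energyOn n p (U (κ i)) univ univ) atTop :=
        energyOn_le_liminf (by linarith) (fun i => hdecay.continuous (κ i)) hae
    _ ≤ liminf (fun i => homotopyEnergy p g + ENNReal.ofReal (η (κ i))) atTop :=
        liminf_le_liminf (Eventually.of_forall fun i => hUη (κ i))
    _ = homotopyEnergy p g := hlim.liminf_eq

lemma sphEnergy_eq_energyOn (s : ℝ) (u : Sph n → Sph m) :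
    sphEnergy n m s u = energyOn n (n / s) u univ univ := by
  simp only [energyOn, Measure.restrict_univ]
  rfl

variable {s : ℝ}

lemma minNontrivialEnergy_le {u : Sph n → Sph m} (hu : Continuous u) (hnull : ¬ NullHomotopic u) :
    minNontrivialEnergy n m s ≤ energyOn n (n / s) u univ univ :=
  sInf_le ⟨u, hu, hnull, (sphEnergy_eq_energyOn s u).symm⟩

lemma lt_div_self_of_mem_Ioo (hn : 1 ≤ n) (hs : s ∈ Ioo (0 : ℝ) 1) : (n : ℝ) < n / s :=
  (lt_div_iff₀ hs.1).2 (mul_lt_of_lt_one_right (by exact_mod_cast hn) hs.2)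

lemma exists_ofReal_le_minNontrivialEnergy (m : ℕ) (hn : 1 ≤ n) (hs : s ∈ Ioo (0 : ℝ) 1) :
    ∃ ε : ℝ, 0 < ε ∧ ENNReal.ofReal ε ≤ minNontrivialEnergy n m s := by
  have hn1 : (1 : ℝ) ≤ n := by exact_mod_cast hn
  obtain ⟨ε, hε, hnull⟩ := exists_nullHomotopic_of_energyOn_le (X := Sph n) n m n.cast_nonneg
    (hn1.trans (lt_div_self_of_mem_Ioo hn hs).le)
  refine ⟨ε, hε, le_sInf ?_⟩
  rintro _ ⟨u, hu, hne, rfl⟩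
  rw [sphEnergy_eq_energyOn]
  exact (lt_of_not_ge fun hle => hne (hnull u hu hle)).le

lemma exists_homotopic_energyOn_le_of_minNontrivialEnergy_ne_top (hn : 1 ≤ n)
    (hs : s ∈ Ioo (0 : ℝ) 1) (hpos : 0 < (minNontrivialEnergy n m s).toReal)
    (hg : homotopyEnergy (n / s) g ≤ minNontrivialEnergy n m s +
      ENNReal.ofReal ((minNontrivialEnergy n m s).toReal / 12)) :
    ∃ u : Sph n → Sph m, Homotopic u g ∧
      energyOn n (n / s) u univ univ ≤ homotopyEnergy (n / s) g := by
  have hδ := ENNReal.ofReal_toReal (ENNReal.toReal_pos_iff.1 hpos).2.ne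
  refine exists_homotopic_energyOn_le_homotopyEnergy hn (lt_div_self_of_mem_Ioo hn hs) hpos
    (fun u hu hlt => by_contra fun hne =>
      (minNontrivialEnergy_le hu hne).not_gt (hlt.trans_eq hδ)) (hg.trans_eq ?_)
  nth_rewrite 1 [← hδ]
  rw [← ENNReal.ofReal_add hpos.le (by positivity)]
  congr 1
  ring

end Minimizers

theorem stmt15_general (n m : ℕ) (hn : 1 ≤ n) (s : ℝ) (hs : 0 < s) (hs1 : s < 1) :
    ∃ ε : ℝ, 0 < ε ∧
      ENNReal.ofReal ε ≤ minNontrivialEnergy n m s ∧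
      ∀ g : Sph n → Sph m, Continuous g → ¬ NullHomotopic g →
        sInf {e : ℝ≥0∞ | ∃ v : Sph n → Sph m, Continuous v ∧ Homotopic v g ∧ e = sphEnergy n m s v}
            ≤ minNontrivialEnergy n m s + ENNReal.ofReal ε →
        ∃ u : Sph n → Sph m, Continuous u ∧ Homotopic u g ∧
          ∀ v : Sph n → Sph m, Continuous v → Homotopic v g →
            sphEnergy n m s u ≤ sphEnergy n m s v := by
  obtain ⟨ε, hε, hle⟩ := exists_ofReal_le_minNontrivialEnergy m hn ⟨hs, hs1⟩
  by_cases htop : minNontrivialEnergy n m s = ∞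
  · refine ⟨ε, hε, hle, fun g hg hne _ => ⟨g, hg, .refl hg, fun v hv hvg => ?_⟩⟩
    have hv_ne : ¬ NullHomotopic v := fun ⟨c, hc⟩ => hne ⟨c, hvg.symm.trans hc⟩
    rw [sphEnergy_eq_energyOn s v, top_le_iff.1 (htop.ge.trans (minNontrivialEnergy_le hv hv_ne))]
    exact le_top
  have hpos := ENNReal.toReal_pos ((ENNReal.ofReal_pos.2 hε).trans_le hle).ne' htop
  refine ⟨min ε ((minNontrivialEnergy n m s).toReal / 12), by positivity,
    (ENNReal.ofReal_le_ofReal (min_le_left _ _)).trans hle, fun g _ _ hg => ?_⟩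
  simp only [sphEnergy_eq_energyOn] at hg ⊢
  obtain ⟨u, hug, hu⟩ := exists_homotopic_energyOn_le_of_minNontrivialEnergy_ne_top hn ⟨hs, hs1⟩
    hpos (hg.trans (add_le_add_right (ENNReal.ofReal_le_ofReal (min_le_right _ _)) _))
  exact ⟨u, hug.continuous_left, hug, fun v _ hvg => hu.trans (homotopyEnergy_le hvg)⟩

/-- the least energy of nontrivial maps is bounded below by some `ε > 0`, and
every nontrivial homotopy class with near-minimal infimum energy contains a minimizer. -/
theorem stmt15 (n m : ℕ) (hn : 1 ≤ n) (hm : 1 ≤ m) (s : ℝ) (hs : 0 < s) (hs1 : s < 1)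
    (hn1 : n = 1 → s ≤ 1 / 2) :
    ∃ ε : ℝ, 0 < ε ∧
      ENNReal.ofReal ε ≤ minNontrivialEnergy n m s ∧
      ∀ g : Sph n → Sph m, Continuous g → ¬ NullHomotopic g →
        sInf {e : ℝ≥0∞ | ∃ v : Sph n → Sph m, Continuous v ∧ Homotopic v g ∧ e = sphEnergy n m s v}
            ≤ minNontrivialEnergy n m s + ENNReal.ofReal ε →
        ∃ u : Sph n → Sph m, Continuous u ∧ Homotopic u g ∧
          ∀ v : Sph n → Sph m, Continuous v → Homotopic v g →
            sphEnergy n m s u ≤ sphEnergy n m s v :=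
  stmt15_general n m hn s hs hs1
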